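/- Let (u, π, v, θ) be a smooth solution of the stationary 3D tropical climate model. Suppose p ∈ (3/2, 3), q ∈ [1, 2), r ∈ [1, 2), α ∈ [0, 2/p − 1/3], β ∈ [0, 3/q − 1/2], γ ∈ [0, 3/r − 1/2], and the inequalities α + ((4p−6)q/((6−q)p))·β ≤ 1, α + ((4p−6)r/((6−r)p))·γ ≤ 1, and (2q/(6−q))·β + (2r/(6−r))·γ ≤ 1 hold. Assume that liminf_{R→+∞} ( X_{α,p,R} + Y_{β,q,R} + Z_{γ,r,R} ) < +∞. Then u = 0, v = 0 and θ = 0 identically on ℝ³. -/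

import Mathlib

open MeasureTheory Filter Metric

noncomputable section

abbrev R3 : Type := EuclideanSpace ℝ (Fin 3)

/-- Partial derivative of `f` in the `j`-th coordinate direction. -/
def pd (f : R3 → ℝ) (j : Fin 3) (x : R3) : ℝ :=
  fderiv ℝ f x (EuclideanSpace.single j 1)

/-- Laplacian of `f`. -/
def lap (f : R3 → ℝ) (x : R3) : ℝ := ∑ j, pd (pd f j) j x

/-- The stationary 3D tropical climate model:
`-Δu + (u·∇)u + ∇π + div(v⊗v) = 0`, `-Δv + (u·∇)v + ∇θ + (v·∇)u = 0`,
`-Δθ + u·∇θ + div v = 0`, `div u = 0`. -/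
def TCM (u v : R3 → R3) (pr θ : R3 → ℝ) : Prop :=
  (∀ i x, -lap (fun y => u y i) x + (∑ j, u x j * pd (fun y => u y i) j x)
      + pd pr i x + (∑ j, pd (fun y => v y j * v y i) j x) = 0) ∧
  (∀ i x, -lap (fun y => v y i) x + (∑ j, u x j * pd (fun y => v y i) j x)
      + pd θ i x + (∑ j, v x j * pd (fun y => u y i) j x) = 0) ∧
  (∀ x, -lap θ x + (∑ j, u x j * pd θ j x) + (∑ j, pd (fun y => v y j) j x) = 0) ∧
  (∀ x, (∑ j, pd (fun y => u y j) j x) = 0)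

/-- The annulus `B_{2R} \ B_R`. -/
def annulus (R : ℝ) : Set R3 := ball (0 : R3) (2 * R) \ ball 0 R

/-- `L^p` norm of a scalar function on a set `E`. -/
def lpS (g : R3 → ℝ) (p : ℝ) (E : Set R3) : ℝ := (∫ x in E, |g x| ^ p) ^ (1 / p)

/-- `X_{α,p,R} = R^{-α} ‖f‖_{L^p(B_{2R} \ B_R)}` for a vector field `f`. -/
def XnV (f : R3 → R3) (a p R : ℝ) : ℝ := R ^ (-a) * lpS (fun x => ‖f x‖) p (annulus R)

/-- `X_{α,p,R} = R^{-α} ‖f‖_{L^p(B_{2R} \ B_R)}` for a scalar function `f`. -/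
def XnS (f : R3 → ℝ) (a p R : ℝ) : ℝ := R ^ (-a) * lpS f p (annulus R)


/-! ### Part A: calculus of partial derivatives -/

/-- Smooth scalar functions. -/
abbrev Sm (f : R3 → ℝ) : Prop := ContDiff ℝ (⊤ : ℕ∞) f

lemma Sm.diff {f : R3 → ℝ} (hf : Sm f) : Differentiable ℝ f :=
  ContDiff.differentiable hf (by simp)

lemma Sm.pd {f : R3 → ℝ} (hf : Sm f) (j : Fin 3) : Sm (pd f j) := by
  unfold _root_.pd
  have : ContDiff ℝ (⊤ : ℕ∞) (fderiv ℝ f) := ContDiff.fderiv_right hf (m := (⊤ : ℕ∞)) (by simp)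
  exact this.clm_apply contDiff_const

lemma Sm.lap {f : R3 → ℝ} (hf : Sm f) : Sm (lap f) := by
  unfold _root_.lap
  exact ContDiff.sum fun j _ => (hf.pd j).pd j

lemma pd_mul {f g : R3 → ℝ} (hf : Sm f) (hg : Sm g) (j : Fin 3) (x : R3) :
    pd (fun y => f y * g y) j x = f x * pd g j x + pd f j x * g x := by
  unfold pd
  rw [fderiv_fun_mul (hf.diff x) (hg.diff x)]
  simp; ring

lemma pd_add {f g : R3 → ℝ} (hf : Sm f) (hg : Sm g) (j : Fin 3) (x : R3) :
    pd (fun y => f y + g y) j x = pd f j x + pd g j x := by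
  unfold pd
  rw [fderiv_fun_add (hf.diff x) (hg.diff x)]
  simp

lemma pd_sub {f g : R3 → ℝ} (hf : Sm f) (hg : Sm g) (j : Fin 3) (x : R3) :
    pd (fun y => f y - g y) j x = pd f j x - pd g j x := by
  unfold pd
  rw [fderiv_fun_sub (hf.diff x) (hg.diff x)]
  simp

lemma pd_const_mul {f : R3 → ℝ} (hf : Sm f) (c : ℝ) (j : Fin 3) (x : R3) :
    pd (fun y => c * f y) j x = c * pd f j x := by
  unfold pd
  rw [fderiv_const_mul (hf.diff x)]
  simp

lemma pd_sum {ι : Type*} (s : Finset ι) {f : ι → R3 → ℝ} (hf : ∀ i, Sm (f i)) (j : Fin 3) (x : R3) :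
    pd (fun y => ∑ i ∈ s, f i y) j x = ∑ i ∈ s, pd (f i) j x := by
  unfold pd
  rw [fderiv_fun_sum (fun i _ => (hf i).diff x)]
  simp

lemma pd_comm {f : R3 → ℝ} (hf : Sm f) (i j : Fin 3) (x : R3) :
    pd (pd f i) j x = pd (pd f j) i x := by
  have h : IsSymmSndFDerivAt ℝ f x := (hf.contDiffAt).isSymmSndFDerivAt (by simp; exact WithTop.coe_le_coe.2 le_top)
  have h1 : Differentiable ℝ (fderiv ℝ f) :=
    ContDiff.differentiable (ContDiff.fderiv_right hf (m := (⊤ : ℕ∞)) (by simp)) (by simp)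
  have key : ∀ i j : Fin 3, pd (pd f i) j x =
      fderiv ℝ (fderiv ℝ f) x (EuclideanSpace.single j 1) (EuclideanSpace.single i 1) := by
    intro i j
    unfold pd
    rw [fderiv_clm_apply (h1 x) (differentiableAt_const _)]
    simp
  rw [key, key]
  exact h.eq _ _

lemma Sm.shift {f : R3 → ℝ} (hf : Sm f) (x : R3) (s : ℝ) : Sm (fun z => f (x - s • z)) := by
  have : ContDiff ℝ (⊤ : ℕ∞) (fun z : R3 => x - s • z) := by fun_prop
  exact ContDiff.comp hf this

lemma pd_shift {f : R3 → ℝ} (hf : Sm f) (x : R3) (s : ℝ) (j : Fin 3) (z : R3) :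
    pd (fun z => f (x - s • z)) j z = -s * pd f j (x - s • z) := by
  unfold pd
  have h1 : HasFDerivAt (fun z : R3 => x - s • z) (-(s • ContinuousLinearMap.id ℝ R3)) z := by
    have := ((hasFDerivAt_id (𝕜 := ℝ) z).const_smul s).const_sub x
    simpa using this
  have := ((hf.diff (x - s • z)).hasFDerivAt.comp z h1).fderiv
  rw [Function.comp_def] at this
  rw [this]
  simp

lemma pd_compact {f : R3 → ℝ} (hf : HasCompactSupport f) (j : Fin 3) : HasCompactSupport (pd f j) := by
  have := hf.fderiv (𝕜 := ℝ)
  refine this.mono' ?_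
  intro x hx
  apply subset_closure
  intro h0
  apply hx
  simp only [pd, h0]; simp

lemma ibp {f g : R3 → ℝ} (hf : Sm f) (hg : Sm g) (hc : HasCompactSupport f) (j : Fin 3) :
    ∫ x, f x * pd g j x = - ∫ x, pd f j x * g x := by
  have hfc : Continuous f := ContDiff.continuous hf
  have hgc : Continuous g := ContDiff.continuous hg
  have hf'c : Continuous (pd f j) := ContDiff.continuous (hf.pd j)
  have hg'c : Continuous (pd g j) := ContDiff.continuous (hg.pd j)
  refine integral_mul_fderiv_eq_neg_fderiv_mul_of_integrable (f := f) (g := g) ?_ ?_ ?_ ?_ ?_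
  · exact (hf'c.mul hgc).integrable_of_hasCompactSupport ((pd_compact hc j).mul_right)
  · exact (hfc.mul hg'c).integrable_of_hasCompactSupport (hc.mul_right)
  · exact (hfc.mul hgc).integrable_of_hasCompactSupport (hc.mul_right)
  · exact fun x _ => hf.diff x
  · exact fun x _ => hg.diff x

/-- integration by parts moving one derivative to a compactly supported factor, shifted. -/
lemma ibp_shift {w g : R3 → ℝ} (hw : Sm w) (hg : Sm g) (hc : HasCompactSupport w) (j : Fin 3)
    (x : R3) (s : ℝ) :
    s * ∫ z, w z * pd g j (x - s • z) = ∫ z, pd w j z * g (x - s • z) := by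
  have h := ibp hw (hg.shift x s) hc j
  rw [← neg_eq_iff_eq_neg] at h
  rw [← h, ← integral_const_mul, ← integral_neg]
  congr 1
  ext z
  rw [pd_shift hg]; ring

/-- differentiation under the integral with a compactly supported weight. -/
lemma hasDerivAt_weight {Y : Type*} [TopologicalSpace Y] [MeasurableSpace Y] [OpensMeasurableSpace Y]
    [SecondCountableTopologyEither Y ℝ] [T2Space Y] (μ : Measure Y) [IsFiniteMeasureOnCompacts μ] {w : Y → ℝ} (hw : Continuous w)
    (hc : HasCompactSupport w) {Q Q' : ℝ → Y → ℝ} (hQ : Continuous (Function.uncurry Q))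
    (hQ' : Continuous (Function.uncurry Q'))
    (hd : ∀ s y, HasDerivAt (fun t => Q t y) (Q' s y) s) (s : ℝ) :
    HasDerivAt (fun t => ∫ y, w y * Q t y ∂μ) (∫ y, w y * Q' s y ∂μ) s := by
  have hQc : ∀ t, Continuous (Q t) := fun t => hQ.comp (Continuous.prodMk_right t)
  have hQ'c : ∀ t, Continuous (Q' t) := fun t => hQ'.comp (Continuous.prodMk_right t)
  have hi : ∀ g : Y → ℝ, Continuous g → Integrable (fun y => w y * g y) μ := fun g hg =>
    (hw.mul hg).integrable_of_hasCompactSupport hc.mul_right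
  obtain ⟨B, hB⟩ := ((isCompact_closedBall s 1).prod hc).exists_bound_of_continuousOn
    hQ'.continuousOn
  refine (hasDerivAt_integral_of_dominated_loc_of_deriv_le (μ := μ) (s := closedBall s 1)
    (F := fun t y => w y * Q t y) (F' := fun t y => w y * Q' t y)
    (bound := fun y => ‖w y‖ * B) (closedBall_mem_nhds s one_pos) ?_ ?_ ?_ ?_ ?_ ?_).2
  · exact Eventually.of_forall fun t => (hi _ (hQc t)).aestronglyMeasurable
  · exact hi _ (hQc s)
  · exact (hi _ (hQ'c s)).aestronglyMeasurable
  · refine Eventually.of_forall fun y t ht => ?_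
    by_cases hy : y ∈ tsupport w
    · rw [norm_mul]
      exact mul_le_mul_of_nonneg_left (hB (t, y) ⟨ht, hy⟩) (norm_nonneg _)
    · simp [image_eq_zero_of_notMem_tsupport hy]
  · exact (hw.norm.mul continuous_const).integrable_of_hasCompactSupport hc.norm.mul_right
  · exact Eventually.of_forall fun y t _ => (hd t y).const_mul (w y)


section

/-! ### Part B: energy identity -/

/-- Scalar form of the system. -/
structure Sys (U V : Fin 3 → R3 → ℝ) (P T : R3 → ℝ) : Prop where
  sU : ∀ i, Sm (U i)
  sV : ∀ i, Sm (V i)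
  sP : Sm P
  sT : Sm T
  eU : ∀ i x, -lap (U i) x + (∑ j, U j x * pd (U i) j x)
      + pd P i x + (∑ j, pd (fun y => V j y * V i y) j x) = 0
  eV : ∀ i x, -lap (V i) x + (∑ j, U j x * pd (V i) j x)
      + pd T i x + (∑ j, V j x * pd (U i) j x) = 0
  eT : ∀ x, -lap T x + (∑ j, U j x * pd T j x) + (∑ j, pd (V j) j x) = 0
  dU : ∀ x, (∑ j, pd (U j) j x) = 0

def e2 (U V : Fin 3 → R3 → ℝ) (T : R3 → ℝ) (x : R3) : ℝ :=
  (∑ i, U i x * U i x) + (∑ i, V i x * V i x) + T x * T x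

def D2 (U V : Fin 3 → R3 → ℝ) (T : R3 → ℝ) (x : R3) : ℝ :=
  (∑ i, ∑ j, pd (U i) j x ^ 2) + (∑ i, ∑ j, pd (V i) j x ^ 2) + ∑ j, pd T j x ^ 2

lemma Sm.mul {f g : R3 → ℝ} (hf : Sm f) (hg : Sm g) : Sm (fun x => f x * g x) := ContDiff.mul hf hg
lemma Sm.add {f g : R3 → ℝ} (hf : Sm f) (hg : Sm g) : Sm (fun x => f x + g x) := ContDiff.add hf hg
lemma Sm.sub {f g : R3 → ℝ} (hf : Sm f) (hg : Sm g) : Sm (fun x => f x - g x) := ContDiff.sub hf hg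
lemma Sm.neg {f : R3 → ℝ} (hf : Sm f) : Sm (fun x => -f x) := ContDiff.neg hf
lemma Sm.sum {f : Fin 3 → R3 → ℝ} (hf : ∀ i, Sm (f i)) : Sm (fun x => ∑ i, f i x) :=
  ContDiff.sum fun i _ => hf i
lemma Sm.const (c : ℝ) : Sm (fun _ => c) := contDiff_const

variable {U V : Fin 3 → R3 → ℝ} {P T : R3 → ℝ}

lemma Sys.sE (h : Sys U V P T) : Sm (e2 U V T) :=
  ((Sm.sum fun i => (h.sU i).mul (h.sU i)).add (Sm.sum fun i => (h.sV i).mul (h.sV i))).add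
    (h.sT.mul h.sT)

lemma Sys.cD (h : Sys U V P T) : Continuous (D2 U V T) := by
  have h1 : ∀ i j, Continuous (pd (U i) j) := fun i j => ContDiff.continuous ((h.sU i).pd j)
  have h2 : ∀ i j, Continuous (pd (V i) j) := fun i j => ContDiff.continuous ((h.sV i).pd j)
  have h3 : ∀ j, Continuous (pd T j) := fun j => ContDiff.continuous (h.sT.pd j)
  unfold D2
  fun_prop

lemma Sys.pd_e (h : Sys U V P T) (j : Fin 3) (x : R3) :
    pd (e2 U V T) j x = 2 * ((∑ i, U i x * pd (U i) j x) + (∑ i, V i x * pd (V i) j x)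
      + T x * pd T j x) := by
  unfold e2
  rw [pd_add ((Sm.sum fun i => (h.sU i).mul (h.sU i)).add (Sm.sum fun i => (h.sV i).mul (h.sV i)))
    (h.sT.mul h.sT), pd_add (Sm.sum fun i => (h.sU i).mul (h.sU i))
    (Sm.sum fun i => (h.sV i).mul (h.sV i)), pd_sum _ (fun i => (h.sU i).mul (h.sU i)),
    pd_sum _ (fun i => (h.sV i).mul (h.sV i)), pd_mul h.sT h.sT]
  simp_rw [pd_mul (h.sU _) (h.sU _), pd_mul (h.sV _) (h.sV _)]
  simp only [Fin.sum_univ_three]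
  ring

lemma Sys.pd_pd_e (h : Sys U V P T) (j : Fin 3) (x : R3) :
    pd (pd (e2 U V T) j) j x = 2 * ((∑ i, (U i x * pd (pd (U i) j) j x + pd (U i) j x ^ 2))
      + (∑ i, (V i x * pd (pd (V i) j) j x + pd (V i) j x ^ 2))
      + (T x * pd (pd T j) j x + pd T j x ^ 2)) := by
  have h1 : ∀ i, Sm (fun x => U i x * pd (U i) j x) := fun i => (h.sU i).mul ((h.sU i).pd j)
  have h2 : ∀ i, Sm (fun x => V i x * pd (V i) j x) := fun i => (h.sV i).mul ((h.sV i).pd j)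
  have h3 : Sm (fun x => T x * pd T j x) := h.sT.mul (h.sT.pd j)
  have : pd (e2 U V T) j = fun x => 2 * ((∑ i, U i x * pd (U i) j x) + (∑ i, V i x * pd (V i) j x)
      + T x * pd T j x) := funext fun x => h.pd_e j x
  rw [this, pd_const_mul (((Sm.sum h1).add (Sm.sum h2)).add h3),
    pd_add ((Sm.sum h1).add (Sm.sum h2)) h3, pd_add (Sm.sum h1) (Sm.sum h2), pd_sum _ h1, pd_sum _ h2,
    pd_mul h.sT (h.sT.pd j)]
  simp_rw [pd_mul (h.sU _) ((h.sU _).pd j), pd_mul (h.sV _) ((h.sV _).pd j)]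
  simp only [Fin.sum_univ_three]
  ring

/-- The energy flux. -/
def Qf (U V : Fin 3 → R3 → ℝ) (P T : R3 → ℝ) (j : Fin 3) (x : R3) : ℝ :=
  (1 / 2) * pd (e2 U V T) j x - ((1 / 2) * e2 U V T x * U j x + P x * U j x
    + (∑ i, U i x * V i x) * V j x + T x * V j x)

lemma Sys.sUV (h : Sys U V P T) : Sm (fun x => ∑ i, U i x * V i x) :=
  Sm.sum fun i => (h.sU i).mul (h.sV i)

lemma Sys.sQ (h : Sys U V P T) (j : Fin 3) : Sm (Qf U V P T j) :=
  Sm.sub ((Sm.const _).mul (h.sE.pd j)) (((((Sm.const _).mul h.sE).mul (h.sU j)).add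
    (h.sP.mul (h.sU j))).add (h.sUV.mul (h.sV j)) |>.add (h.sT.mul (h.sV j)))

lemma Sys.div_Q (h : Sys U V P T) (x : R3) : D2 U V T x = ∑ j, pd (Qf U V P T j) j x := by
  have key : ∀ j, pd (Qf U V P T j) j x = (1 / 2) * pd (pd (e2 U V T) j) j x
      - ((1 / 2) * e2 U V T x * pd (U j) j x + (1 / 2) * pd (e2 U V T) j x * U j x
        + (P x * pd (U j) j x + pd P j x * U j x)
        + ((∑ i, U i x * V i x) * pd (V j) j x
          + (∑ i, (U i x * pd (V i) j x + pd (U i) j x * V i x)) * V j x)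
        + (T x * pd (V j) j x + pd T j x * V j x)) := by
    intro j
    have sh : Sm (fun x => (1 / 2) * e2 U V T x) := (Sm.const _).mul h.sE
    have a1 := sh.mul (h.sU j)
    have a2 := h.sP.mul (h.sU j)
    have a3 := h.sUV.mul (h.sV j)
    have a4 := h.sT.mul (h.sV j)
    unfold Qf
    rw [pd_sub ((Sm.const _).mul (h.sE.pd j)) (((a1.add a2).add a3).add a4),
      pd_add ((a1.add a2).add a3) a4, pd_add (a1.add a2) a3, pd_add a1 a2,
      pd_const_mul (h.sE.pd j), pd_mul sh (h.sU j), pd_mul h.sP (h.sU j), pd_mul h.sUV (h.sV j),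
      pd_mul h.sT (h.sV j), pd_const_mul h.sE, pd_sum _ (fun i => (h.sU i).mul (h.sV i))]
    simp_rw [pd_mul (h.sU _) (h.sV _)]
  simp_rw [key, h.pd_pd_e, h.pd_e]
  have hU := fun i => h.eU i x
  have hV := fun i => h.eV i x
  have hT := h.eT x
  have hd := h.dU x
  simp_rw [pd_mul (h.sV _) (h.sV _)] at hU
  have hU0 := hU 0
  have hU1 := hU 1
  have hU2 := hU 2
  have hV0 := hV 0
  have hV1 := hV 1
  have hV2 := hV 2
  clear hU hV key
  unfold lap at *
  unfold D2
  simp only [Fin.sum_univ_three] at *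
  linear_combination U 0 x * hU0 + U 1 x * hU1 + U 2 x * hU2 + V 0 x * hV0 + V 1 x * hV1 + V 2 x * hV2
    + T x * hT + (1 / 2 * e2 U V T x + P x) * hd

end


section

/-! ### Part C: localized energy inequality -/

def Gf (χ : R3 → ℝ) (W : Fin 3 → R3 → ℝ) (x : R3) : ℝ := ∑ j, pd χ j x * W j x

def na (U : Fin 3 → R3 → ℝ) (x : R3) : ℝ := Real.sqrt (∑ i, U i x * U i x)

lemma na_nonneg (U : Fin 3 → R3 → ℝ) (x : R3) : 0 ≤ na U x := Real.sqrt_nonneg _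

lemma na_sq (U : Fin 3 → R3 → ℝ) (x : R3) : na U x ^ 2 = ∑ i, U i x * U i x :=
  Real.sq_sqrt (Finset.sum_nonneg fun i _ => mul_self_nonneg _)

lemma na_cont {U : Fin 3 → R3 → ℝ} (h : ∀ i, Sm (U i)) : Continuous (na U) := by
  have : ∀ i, Continuous (U i) := fun i => ContDiff.continuous (h i)
  unfold na
  fun_prop

lemma abs_le_na (U : Fin 3 → R3 → ℝ) (i : Fin 3) (x : R3) : |U i x| ≤ na U x := by
  apply Real.abs_le_sqrt
  rw [pow_two]
  exact Finset.single_le_sum (f := fun i => U i x * U i x) (fun i _ => mul_self_nonneg _)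
    (Finset.mem_univ i)

lemma dot_le (U V : Fin 3 → R3 → ℝ) (x : R3) : |∑ i, U i x * V i x| ≤ 3 * (na U x * na V x) := by
  refine (Finset.abs_sum_le_sum_abs _ _).trans ?_
  have : ∀ i ∈ Finset.univ, |U i x * V i x| ≤ na U x * na V x := fun i _ => by
    rw [abs_mul]
    exact mul_le_mul (abs_le_na U i x) (abs_le_na V i x) (abs_nonneg _) (na_nonneg _ _)
  refine (Finset.sum_le_sum this).trans ?_
  simp

lemma e2_eq (U V : Fin 3 → R3 → ℝ) (T : R3 → ℝ) (x : R3) :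
    e2 U V T x = na U x ^ 2 + na V x ^ 2 + |T x| ^ 2 := by
  rw [na_sq, na_sq, sq_abs, pow_two (T x), e2]

lemma e2_nonneg (U V : Fin 3 → R3 → ℝ) (T : R3 → ℝ) (x : R3) : 0 ≤ e2 U V T x := by
  rw [e2_eq]; positivity

lemma D2_nonneg (U V : Fin 3 → R3 → ℝ) (T : R3 → ℝ) (x : R3) : 0 ≤ D2 U V T x := by
  unfold D2; positivity

/-- Cutoff functions. -/
structure Cut (χ : R3 → ℝ) (S : Set R3) (c d : ℝ) : Prop where
  sm : Sm χ
  cpt : HasCompactSupport χ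
  nonneg : ∀ x, 0 ≤ χ x
  le_one : ∀ x, χ x ≤ 1
  b1 : ∀ j x, |pd χ j x| ≤ c / d
  b2 : ∀ x, |lap χ x| ≤ c / d ^ 2
  z1 : ∀ j x, x ∉ S → pd χ j x = 0
  z2 : ∀ x, x ∉ S → lap χ x = 0

variable {U V : Fin 3 → R3 → ℝ} {P T : R3 → ℝ}

lemma Gf_sm {χ : R3 → ℝ} (hχ : Sm χ) (hU : ∀ i, Sm (U i)) : Sm (Gf χ U) :=
  Sm.sum fun j => (hχ.pd j).mul (hU j)

lemma Gf_cpt {χ : R3 → ℝ} (hc : HasCompactSupport χ) (U : Fin 3 → R3 → ℝ) :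
    HasCompactSupport (Gf χ U) := by
  have : ∀ j, HasCompactSupport (fun x => pd χ j x * U j x) := fun j => (pd_compact hc j).mul_right
  have h3 := ((this 0).add (this 1)).add (this 2)
  have e : Gf χ U = (fun x => pd χ 0 x * U 0 x) + (fun x => pd χ 1 x * U 1 x) + (fun x => pd χ 2 x * U 2 x) := by
    ext x
    simp [Gf, Fin.sum_univ_three]
  rw [e]
  exact h3

lemma lap_cpt {χ : R3 → ℝ} (hc : HasCompactSupport χ) : HasCompactSupport (lap χ) := by
  have : ∀ j, HasCompactSupport (pd (pd χ j) j) := fun j => pd_compact (pd_compact hc j) j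
  have h3 := ((this 0).add (this 1)).add (this 2)
  have e : lap χ = pd (pd χ 0) 0 + pd (pd χ 1) 1 + pd (pd χ 2) 2 := by
    ext x
    simp [lap, Fin.sum_univ_three]
  rw [e]
  exact h3

lemma energy (h : Sys U V P T) {χ : R3 → ℝ} (hχ : Sm χ) (hc : HasCompactSupport χ) :
    ∫ x, χ x * D2 U V T x = (1 / 2) * (∫ x, lap χ x * e2 U V T x)
      + (1 / 2) * (∫ x, Gf χ U x * e2 U V T x) + (∫ x, Gf χ U x * P x)
      + (∫ x, Gf χ V x * ∑ i, U i x * V i x) + ∫ x, Gf χ V x * T x := by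
  have int : ∀ {f g : R3 → ℝ}, Sm f → HasCompactSupport f → Sm g →
      Integrable (fun x => f x * g x) := fun hf hfc hg =>
    (ContDiff.continuous (hf.mul hg)).integrable_of_hasCompactSupport hfc.mul_right
  have e0 : ∫ x, χ x * D2 U V T x = ∑ j, ∫ x, χ x * pd (Qf U V P T j) j x := by
    rw [← integral_finsetSum _ fun j _ => int hχ hc ((h.sQ j).pd j)]
    simp_rw [← Finset.mul_sum, ← h.div_Q]
  have e1 : ∀ j, ∫ x, χ x * pd (Qf U V P T j) j x = -∫ x, pd χ j x * Qf U V P T j x := fun j =>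
    ibp hχ (h.sQ j) hc j
  have e2' : ∀ j, ∫ x, pd χ j x * pd (e2 U V T) j x = -∫ x, pd (pd χ j) j x * e2 U V T x := fun j =>
    ibp (hχ.pd j) h.sE (pd_compact hc j) j
  have l1 : ∫ x, lap χ x * e2 U V T x = ∑ j, ∫ x, pd (pd χ j) j x * e2 U V T x := by
    rw [← integral_finsetSum _ fun j _ => int ((hχ.pd j).pd j) (pd_compact (pd_compact hc j) j) h.sE]
    simp_rw [← Finset.sum_mul]; rfl
  have gc := fun W => Gf_cpt hc W
  have sGU := Gf_sm hχ h.sU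
  have sGV := Gf_sm hχ h.sV
  have q : ∑ j, ∫ x, pd χ j x * Qf U V P T j x = (1 / 2) * (∑ j, ∫ x, pd χ j x * pd (e2 U V T) j x)
      - ((1 / 2) * (∫ x, Gf χ U x * e2 U V T x) + (∫ x, Gf χ U x * P x)
      + (∫ x, Gf χ V x * ∑ i, U i x * V i x) + ∫ x, Gf χ V x * T x) := by
    rw [← integral_finsetSum _ fun j _ => int (hχ.pd j) (pd_compact hc j) (h.sQ j),
      ← integral_finsetSum _ fun j _ => int (hχ.pd j) (pd_compact hc j) (h.sE.pd j)]
    have i1 := int sGU (gc U) h.sE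
    have i2 := int sGU (gc U) h.sP
    have i3 := int sGV (gc V) h.sUV
    have i4 := int sGV (gc V) h.sT
    have i0 : Integrable (fun x => ∑ j, pd χ j x * pd (e2 U V T) j x) :=
      integrable_finsetSum _ fun j _ => int (hχ.pd j) (pd_compact hc j) (h.sE.pd j)
    have i12 : Integrable (fun x => 1 / 2 * (Gf χ U x * e2 U V T x) + Gf χ U x * P x) :=
      (i1.const_mul _).add i2
    have i123 : Integrable (fun x => 1 / 2 * (Gf χ U x * e2 U V T x) + Gf χ U x * P x
      + Gf χ V x * ∑ i, U i x * V i x) := i12.add i3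
    have i1234 : Integrable (fun x => 1 / 2 * (Gf χ U x * e2 U V T x) + Gf χ U x * P x
      + Gf χ V x * (∑ i, U i x * V i x) + Gf χ V x * T x) := i123.add i4
    rw [← integral_const_mul, ← integral_const_mul,
      ← integral_add (i1.const_mul _) i2, ← integral_add i12 i3,
      ← integral_add i123 i4, ← integral_sub (i0.const_mul _) i1234]
    congr 1
    ext x
    simp only [Qf, Gf, Fin.sum_univ_three, Pi.add_apply]
    ring
  rw [e0, Finset.sum_congr rfl fun j _ => e1 j, Finset.sum_neg_distrib, q,
    Finset.sum_congr rfl fun j _ => e2' j, Finset.sum_neg_distrib, ← l1]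
  ring

lemma Gf_zero {χ : R3 → ℝ} {S : Set R3} {c d : ℝ} (hC : Cut χ S c d) (W : Fin 3 → R3 → ℝ) {x : R3}
    (hx : x ∉ S) : Gf χ W x = 0 := by
  simp [Gf, hC.z1 _ x hx]

lemma Gf_bound {χ : R3 → ℝ} {S : Set R3} {c d : ℝ} (hC : Cut χ S c d) (W : Fin 3 → R3 → ℝ) (x : R3) :
    |Gf χ W x| ≤ 3 * (c / d) * na W x := by
  refine (Finset.abs_sum_le_sum_abs _ _).trans ?_
  have : ∀ j ∈ Finset.univ, |pd χ j x * W j x| ≤ (c / d) * na W x := fun j _ => by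
    rw [abs_mul]
    exact mul_le_mul (hC.b1 j x) (abs_le_na W j x) (abs_nonneg _)
      ((abs_nonneg _).trans (hC.b1 j x))
  refine (Finset.sum_le_sum this).trans ?_
  simp; linarith

/-- integral bound by a continuous function on a bounded set. -/
lemma int_bound {S : Set R3} (hS : MeasurableSet S) (hb : Bornology.IsBounded S) {f g : R3 → ℝ}
    (hg : Continuous g) (hz : ∀ x, x ∉ S → f x = 0) (hfg : ∀ x, |f x| ≤ g x) :
    |∫ x, f x| ≤ ∫ x in S, g x := by
  have : ∫ x, f x = ∫ x in S, f x := (setIntegral_eq_integral_of_forall_compl_eq_zero hz).symm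
  rw [this]
  refine norm_integral_le_of_norm_le (f := f) ?_ (Eventually.of_forall hfg)
  exact (hg.continuousOn.integrableOn_compact (hb.isCompact_closure)).mono_set subset_closure

lemma intS {S : Set R3} (hb : Bornology.IsBounded S) {g : R3 → ℝ}
    (hg : Continuous g) : IntegrableOn g S :=
  (hg.continuousOn.integrableOn_compact (hb.isCompact_closure)).mono_set subset_closure

lemma energy_le (h : Sys U V P T) {χ : R3 → ℝ} {S : Set R3} {c d : ℝ} (hC : Cut χ S c d)
    (hS : MeasurableSet S) (hb : Bornology.IsBounded S) :
    ∫ x, χ x * D2 U V T x ≤ (c / d ^ 2) * (∫ x in S, e2 U V T x)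
      + 11 * (c / d) * (∫ x in S, na U x * e2 U V T x)
      + 3 * (c / d) * (∫ x in S, na V x * |T x|) + |∫ x, Gf χ U x * P x| := by
  rw [energy h hC.sm hC.cpt]
  have ce : Continuous (e2 U V T) := ContDiff.continuous h.sE
  have ca := na_cont h.sU
  have cb := na_cont h.sV
  have cT : Continuous T := ContDiff.continuous h.sT
  have hcd : 0 ≤ c / d := (abs_nonneg _).trans (hC.b1 0 0)
  have en := e2_nonneg U V T
  have h1 : |∫ x, lap χ x * e2 U V T x| ≤ ∫ x in S, (c / d ^ 2) * e2 U V T x := by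
    refine int_bound hS hb (by fun_prop) (fun x hx => by rw [hC.z2 x hx, zero_mul]) fun x => ?_
    rw [abs_mul, abs_of_nonneg (en x)]
    exact mul_le_mul_of_nonneg_right (hC.b2 x) (en x)
  have h2 : |∫ x, Gf χ U x * e2 U V T x| ≤ ∫ x in S, (3 * (c / d)) * (na U x * e2 U V T x) := by
    refine int_bound hS hb (by fun_prop) (fun x hx => by rw [Gf_zero hC U hx, zero_mul]) fun x => ?_
    rw [abs_mul, abs_of_nonneg (en x), ← mul_assoc]
    exact mul_le_mul_of_nonneg_right (Gf_bound hC U x) (en x)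
  have h3 : |∫ x, Gf χ V x * ∑ i, U i x * V i x| ≤ ∫ x in S, (9 * (c / d)) * (na U x * e2 U V T x) := by
    refine int_bound hS hb (by fun_prop) (fun x hx => by rw [Gf_zero hC V hx, zero_mul]) fun x => ?_
    rw [abs_mul]
    refine (mul_le_mul (Gf_bound hC V x) (dot_le U V x) (abs_nonneg _)
      (mul_nonneg (by positivity) (na_nonneg _ _))).trans ?_
    have : na V x ^ 2 ≤ e2 U V T x := by rw [e2_eq]; nlinarith [sq_nonneg (na U x), sq_nonneg |T x|]
    have := mul_le_mul_of_nonneg_left this (mul_nonneg hcd (na_nonneg U x))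
    nlinarith
  have h4 : |∫ x, Gf χ V x * T x| ≤ ∫ x in S, (3 * (c / d)) * (na V x * |T x|) := by
    refine int_bound hS hb (by fun_prop) (fun x hx => by rw [Gf_zero hC V hx, zero_mul]) fun x => ?_
    rw [abs_mul, ← mul_assoc]
    exact mul_le_mul_of_nonneg_right (Gf_bound hC V x) (abs_nonneg _)
  rw [integral_const_mul] at h1 h2 h3 h4
  have q0 : 0 ≤ (c / d) * ∫ x in S, na U x * e2 U V T x :=
    mul_nonneg hcd (integral_nonneg fun x => mul_nonneg (na_nonneg U x) (en x))
  have q1 : 0 ≤ (c / d ^ 2) * ∫ x in S, e2 U V T x := (abs_nonneg _).trans h1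
  have a1 := (le_abs_self _).trans h1
  have a2 := (le_abs_self _).trans h2
  have a3 := (le_abs_self _).trans h3
  have a4 := (le_abs_self _).trans h4
  have a5 := le_abs_self (∫ x, Gf χ U x * P x)
  linarith

end


/-! ### Part D: cutoffs and kernels -/

def st1 : ℝ → ℝ := deriv Real.smoothTransition
def st2 : ℝ → ℝ := deriv st1

lemma st_sm : ContDiff ℝ (⊤ : ℕ∞) Real.smoothTransition := Real.smoothTransition.contDiff

lemma deriv_smooth {f : ℝ → ℝ} (h : ContDiff ℝ (⊤ : ℕ∞) f) : ContDiff ℝ (⊤ : ℕ∞) (deriv f) :=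
  (contDiff_infty_iff_deriv.1 h).2

lemma st1_sm : ContDiff ℝ (⊤ : ℕ∞) st1 := deriv_smooth st_sm

lemma st2_sm : ContDiff ℝ (⊤ : ℕ∞) st2 := deriv_smooth st1_sm

lemma st1_off {t : ℝ} (h : t < 0 ∨ 1 < t) : st1 t = 0 := by
  unfold st1
  rcases h with h | h
  · have : Real.smoothTransition =ᶠ[nhds t] fun _ => 0 := by
      filter_upwards [Iio_mem_nhds h] with y hy
      exact Real.smoothTransition.zero_of_nonpos (le_of_lt hy)
    rw [this.deriv_eq]; simp
  · have : Real.smoothTransition =ᶠ[nhds t] fun _ => 1 := by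
      filter_upwards [Ioi_mem_nhds h] with y hy
      exact Real.smoothTransition.one_of_one_le (le_of_lt hy)
    rw [this.deriv_eq]; simp

lemma st2_off {t : ℝ} (h : t < 0 ∨ 1 < t) : st2 t = 0 := by
  unfold st2
  have : st1 =ᶠ[nhds t] fun _ => 0 := by
    rcases h with h | h
    · filter_upwards [Iio_mem_nhds h] with y hy
      exact st1_off (Or.inl hy)
    · filter_upwards [Ioi_mem_nhds h] with y hy
      exact st1_off (Or.inr hy)
  rw [this.deriv_eq]; simp

lemma st_bound : ∃ c : ℝ, 0 < c ∧ (∀ t, |st1 t| ≤ c) ∧ ∀ t, |st2 t| ≤ c := by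
  obtain ⟨c1, h1⟩ := (isCompact_Icc (a := (0:ℝ)) (b := 1)).exists_bound_of_continuousOn
    st1_sm.continuous.continuousOn
  obtain ⟨c2, h2⟩ := (isCompact_Icc (a := (0:ℝ)) (b := 1)).exists_bound_of_continuousOn
    st2_sm.continuous.continuousOn
  have p : 0 < |c1| + |c2| + 1 := by positivity
  refine ⟨|c1| + |c2| + 1, p, fun t => ?_, fun t => ?_⟩
  · by_cases ht : t ∈ Set.Icc (0:ℝ) 1
    · have := h1 t ht
      rw [Real.norm_eq_abs] at this
      linarith [le_abs_self c1, abs_nonneg c2]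
    · rw [st1_off (by by_contra hh; push Not at hh; exact ht hh)]
      simpa using p.le
  · by_cases ht : t ∈ Set.Icc (0:ℝ) 1
    · have := h2 t ht
      rw [Real.norm_eq_abs] at this
      linarith [le_abs_self c2, abs_nonneg c1]
    · rw [st2_off (by by_contra hh; push Not at hh; exact ht hh)]
      simpa using p.le

/-- radial functions -/
lemma rad_sm {φ : ℝ → ℝ} (h : ContDiff ℝ (⊤ : ℕ∞) φ) : Sm (fun x => φ (‖x‖ ^ 2)) :=
  h.comp (contDiff_norm_sq ℝ)

lemma coord_sm (j : Fin 3) : Sm (fun x => x j) := by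
  unfold Sm
  fun_prop

lemma pd_coord (i j : Fin 3) (x : R3) : pd (fun x => x i) j x = if i = j then 1 else 0 := by
  unfold pd
  have : (fun x : R3 => x i) = (EuclideanSpace.proj i : R3 →L[ℝ] ℝ) := by ext; simp
  rw [this, ContinuousLinearMap.fderiv]
  simp [EuclideanSpace.single_apply]

lemma pd_rad {φ : ℝ → ℝ} (h : ContDiff ℝ (⊤ : ℕ∞) φ) (j : Fin 3) (x : R3) :
    pd (fun x => φ (‖x‖ ^ 2)) j x = 2 * deriv φ (‖x‖ ^ 2) * x j := by
  unfold pd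
  have h1 : HasFDerivAt (fun x : R3 => ‖x‖ ^ 2) (2 • (innerSL ℝ x)) x :=
    (hasStrictFDerivAt_norm_sq x).hasFDerivAt
  have h2 : HasDerivAt φ (deriv φ (‖x‖ ^ 2)) (‖x‖ ^ 2) :=
    ((h.differentiable (by simp)) _).hasDerivAt
  have := (h2.comp_hasFDerivAt x h1).fderiv
  rw [Function.comp_def] at this
  rw [this]
  simp [EuclideanSpace.inner_single_right]
  ring

lemma pd_pd_rad {φ : ℝ → ℝ} (h : ContDiff ℝ (⊤ : ℕ∞) φ) (j : Fin 3) (x : R3) :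
    pd (pd (fun x => φ (‖x‖ ^ 2)) j) j x
      = 4 * deriv (deriv φ) (‖x‖ ^ 2) * (x j) ^ 2 + 2 * deriv φ (‖x‖ ^ 2) := by
  have e : pd (fun x => φ (‖x‖ ^ 2)) j = fun x => 2 * (deriv φ (‖x‖ ^ 2) * x j) := by
    ext x; rw [pd_rad h]; ring
  have hs := rad_sm (deriv_smooth h)
  rw [e, pd_const_mul (hs.mul (coord_sm j)), pd_mul hs (coord_sm j), pd_rad (deriv_smooth h),
    pd_coord]
  simp; ring

lemma lap_rad {φ : ℝ → ℝ} (h : ContDiff ℝ (⊤ : ℕ∞) φ) (x : R3) :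
    lap (fun x => φ (‖x‖ ^ 2)) x
      = 4 * deriv (deriv φ) (‖x‖ ^ 2) * ‖x‖ ^ 2 + 6 * deriv φ (‖x‖ ^ 2) := by
  unfold lap
  simp_rw [pd_pd_rad h]
  rw [EuclideanSpace.norm_sq_eq]
  simp only [Fin.sum_univ_three, Real.norm_eq_abs, sq_abs]
  ring

lemma abs_coord_le (x : R3) (j : Fin 3) : |x j| ≤ ‖x‖ := by
  simpa using PiLp.norm_apply_le x j

lemma exists_cut : ∃ c : ℝ, 0 < c ∧ ∀ a b : ℝ, 0 < a → a < b → ∃ ψ : R3 → ℝ,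
    Cut ψ {x | a ≤ ‖x‖ ∧ ‖x‖ ≤ b} c (b - a) ∧ (∀ x, ‖x‖ ≤ a → ψ x = 1) ∧ (∀ x, b ≤ ‖x‖ → ψ x = 0) := by
  obtain ⟨c, c0, hc1, hc2⟩ := st_bound
  refine ⟨10 * c, by positivity, fun a b ha hab => ?_⟩
  set k := b ^ 2 - a ^ 2 with hk
  have hk0 : k = (b - a) * (b + a) := by rw [hk]; ring
  have hd : 0 < b - a := by linarith
  have hs : 0 < b + a := by linarith
  have kpos : 0 < k := by rw [hk0]; positivity
  set φ : ℝ → ℝ := fun t => Real.smoothTransition ((b ^ 2 - t) / k) with hφ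
  have hin : ∀ t, HasDerivAt (fun t => (b ^ 2 - t) / k) (-1 / k) t := fun t => by
    simpa using ((hasDerivAt_id t).const_sub (b ^ 2)).div_const k
  have φs : ContDiff ℝ (⊤ : ℕ∞) φ := st_sm.comp (by fun_prop)
  have d1 : ∀ t, deriv φ t = st1 ((b ^ 2 - t) / k) * (-1 / k) := fun t => by
    have h1 : HasDerivAt Real.smoothTransition (st1 ((b ^ 2 - t) / k)) ((b ^ 2 - t) / k) :=
      ((st_sm.differentiable (by simp)) _).hasDerivAt
    exact (h1.comp t (hin t)).deriv
  have d2 : ∀ t, deriv (deriv φ) t = st2 ((b ^ 2 - t) / k) * (-1 / k) * (-1 / k) := fun t => by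
    have h1 : HasDerivAt st1 (st2 ((b ^ 2 - t) / k)) ((b ^ 2 - t) / k) :=
      ((st1_sm.differentiable (by simp)) _).hasDerivAt
    rw [show deriv φ = fun t => st1 ((b ^ 2 - t) / k) * (-1 / k) from funext d1]
    exact ((h1.comp t (hin t)).mul_const _).deriv
  have off : ∀ x : R3, x ∉ {x : R3 | a ≤ ‖x‖ ∧ ‖x‖ ≤ b} →
      (b ^ 2 - ‖x‖ ^ 2) / k < 0 ∨ 1 < (b ^ 2 - ‖x‖ ^ 2) / k := by
    intro x hx
    by_cases h : a ≤ ‖x‖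
    · left
      have : b < ‖x‖ := by by_contra h'; exact hx ⟨h, not_lt.1 h'⟩
      apply div_neg_of_neg_of_pos _ kpos
      nlinarith
    · right
      push Not at h
      rw [lt_div_iff₀ kpos, hk]
      nlinarith [norm_nonneg x]
  have z1 : ∀ j x, x ∉ {x : R3 | a ≤ ‖x‖ ∧ ‖x‖ ≤ b} → pd (fun x => φ (‖x‖ ^ 2)) j x = 0 := by
    intro j x hx
    rw [pd_rad φs, d1, st1_off (off x hx)]; ring
  have z2 : ∀ x, x ∉ {x : R3 | a ≤ ‖x‖ ∧ ‖x‖ ≤ b} → lap (fun x => φ (‖x‖ ^ 2)) x = 0 := by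
    intro x hx
    rw [lap_rad φs, d1, d2, st1_off (off x hx), st2_off (off x hx)]; ring
  refine ⟨fun x => φ (‖x‖ ^ 2), ⟨rad_sm φs, ?_, fun x => Real.smoothTransition.nonneg _,
    fun x => Real.smoothTransition.le_one _, ?_, ?_, z1, z2⟩, ?_, ?_⟩
  · apply HasCompactSupport.intro (isCompact_closedBall (0 : R3) b)
    intro x hx
    apply Real.smoothTransition.zero_of_nonpos
    apply div_nonpos_of_nonpos_of_nonneg _ kpos.le
    simp only [mem_closedBall, dist_zero_right, not_le] at hx
    nlinarith
  · intro j x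
    by_cases hx : x ∈ {x : R3 | a ≤ ‖x‖ ∧ ‖x‖ ≤ b}
    · rw [pd_rad φs, d1, show 2 * (st1 ((b ^ 2 - ‖x‖ ^ 2) / k) * (-1 / k)) * x j
        = -(2 * st1 ((b ^ 2 - ‖x‖ ^ 2) / k) * x j) / k by ring, abs_div, abs_neg, abs_mul, abs_mul,
        abs_of_pos kpos, div_le_div_iff₀ kpos hd, abs_two]
      have hk0c : 10 * c * k = 10 * c * ((b - a) * (b + a)) := by rw [hk0]
      have h1 := hc1 ((b ^ 2 - ‖x‖ ^ 2) / k)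
      have h2 := (abs_coord_le x j).trans hx.2
      have : |st1 ((b ^ 2 - ‖x‖ ^ 2) / k)| * |x j| ≤ c * (b + a) :=
        mul_le_mul h1 (by linarith) (abs_nonneg _) c0.le
      rw [hk0c]
      have := mul_le_mul_of_nonneg_right this hd.le
      have : 0 ≤ c * (b + a) * (b - a) := by positivity
      nlinarith
    · rw [z1 j x hx, abs_zero]; positivity
  · intro x
    by_cases hx : x ∈ {x : R3 | a ≤ ‖x‖ ∧ ‖x‖ ≤ b}
    · rw [lap_rad φs, d1, d2]
      set y := (b ^ 2 - ‖x‖ ^ 2) / k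
      rw [show 4 * (st2 y * (-1 / k) * (-1 / k)) * ‖x‖ ^ 2 + 6 * (st1 y * (-1 / k))
        = st2 y * (4 * (‖x‖ ^ 2 / k ^ 2)) + st1 y * (-(6 / k)) by field_simp]
      have b1 : ‖x‖ ^ 2 / k ^ 2 ≤ 1 / (b - a) ^ 2 := by
        rw [div_le_div_iff₀ (by positivity) (by positivity), hk0, mul_pow]
        have : ‖x‖ ^ 2 ≤ (b + a) ^ 2 := by
          apply pow_le_pow_left₀ (norm_nonneg x); linarith [hx.2]
        nlinarith [mul_le_mul_of_nonneg_right this (sq_nonneg (b - a))]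
      have b2 : 1 / k ≤ 1 / (b - a) ^ 2 := by
        apply one_div_le_one_div_of_le (by positivity)
        rw [hk0]; nlinarith
      have b0 : 0 ≤ ‖x‖ ^ 2 / k ^ 2 := by positivity
      have b0' : 0 ≤ 1 / k := by positivity
      refine (abs_add_le _ _).trans ?_
      rw [abs_mul (st2 y), abs_mul (st1 y), abs_neg, abs_of_nonneg (a := 4 * (‖x‖ ^ 2 / k ^ 2)) (by positivity),
        abs_of_nonneg (a := 6 / k) (by positivity)]
      have m1 := mul_le_mul (hc2 y) (mul_le_mul_of_nonneg_left b1 (by norm_num : (0:ℝ) ≤ 4))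
        (by positivity) c0.le
      have m2 := mul_le_mul (hc1 y) (mul_le_mul_of_nonneg_left b2 (by norm_num : (0:ℝ) ≤ 6))
        (by positivity) c0.le
      calc _ ≤ c * (4 * (1 / (b - a) ^ 2)) + c * (6 * (1 / (b - a) ^ 2)) := by
            refine add_le_add m1 (le_trans (le_of_eq ?_) m2); ring
        _ = _ := by ring
    · rw [z2 x hx, abs_zero]; positivity
  · intro x hx
    apply Real.smoothTransition.one_of_one_le
    rw [le_div_iff₀ kpos, hk]
    nlinarith [norm_nonneg x]
  · intro x hx
    apply Real.smoothTransition.zero_of_nonpos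
    apply div_nonpos_of_nonpos_of_nonneg _ kpos.le
    nlinarith

lemma Cut.sq {ψ : R3 → ℝ} {S : Set R3} {c d : ℝ} (h : Cut ψ S c d) :
    Cut (fun x => ψ x * ψ x) S (2 * c + 6 * c ^ 2) d := by
  have e1 : ∀ j x, pd (fun x => ψ x * ψ x) j x = 2 * (ψ x * pd ψ j x) := fun j x => by
    rw [pd_mul h.sm h.sm]; ring
  have e2 : ∀ x, lap (fun x => ψ x * ψ x) x = 2 * (ψ x * lap ψ x) + 2 * ∑ j, pd ψ j x ^ 2 := by
    intro x
    unfold lap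
    have : ∀ j, pd (fun x => ψ x * ψ x) j = fun x => 2 * (ψ x * pd ψ j x) := fun j => funext (e1 j)
    simp_rw [this, pd_const_mul (h.sm.mul (h.sm.pd _)), pd_mul h.sm (h.sm.pd _)]
    simp only [Fin.sum_univ_three]; ring
  have habs : ∀ x, |ψ x| ≤ 1 := fun x => by rw [abs_of_nonneg (h.nonneg x)]; exact h.le_one x
  refine ⟨h.sm.mul h.sm, h.cpt.mul_right, fun x => mul_self_nonneg _,
    fun x => mul_le_one₀ (h.le_one x) (h.nonneg x) (h.le_one x), ?_, ?_, ?_, ?_⟩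
  · intro j x
    rw [e1, abs_mul, abs_mul, abs_two]
    have hcd : 0 ≤ c / d := (abs_nonneg _).trans (h.b1 j x)
    have := mul_le_mul (habs x) (h.b1 j x) (abs_nonneg _) zero_le_one
    by_cases hd : d = 0
    · subst hd; simp at this ⊢; linarith
    have hdd : 0 ≤ 6 * c ^ 2 / d := by
      by_cases hc : c = 0
      · simp [hc]
      have : 6 * c ^ 2 / d = 6 * (c / d) * (c / d) * d := by field_simp
      rcases lt_or_gt_of_ne hd with hd' | hd'
      · have hc' : c < 0 ∨ 0 < c := lt_or_gt_of_ne hc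
        have hz : ∀ j x, pd ψ j x = 0 ∨ True := fun _ _ => Or.inr trivial
        exact absurd (h.b2 0) (by
          have hcn : c < 0 := by
            by_contra hcc
            push Not at hcc
            have : c / d < 0 := div_neg_of_pos_of_neg (lt_of_le_of_ne hcc (Ne.symm hc)) hd'
            linarith
          have : c / d ^ 2 < 0 := div_neg_of_neg_of_pos hcn (by positivity)
          intro hh
          linarith [abs_nonneg (lap ψ 0)])
      · positivity
    rw [add_div, mul_div_assoc]
    linarith
  · intro x
    rw [e2]
    refine (abs_add_le _ _).trans ?_
    rw [abs_mul, abs_mul, abs_mul, abs_two]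
    have := mul_le_mul (habs x) (h.b2 x) (abs_nonneg _) zero_le_one
    have h3 : |∑ j, pd ψ j x ^ 2| ≤ 3 * (c / d) ^ 2 := by
      rw [abs_of_nonneg (by positivity)]
      refine (Finset.sum_le_sum fun j _ => sq_le_sq' (neg_le_of_abs_le (h.b1 j x))
        (le_of_abs_le (h.b1 j x))).trans ?_
      simp
    have : (2 * c + 6 * c ^ 2) / d ^ 2 = 2 * (c / d ^ 2) + 6 * (c / d) ^ 2 := by
      rw [div_pow]; ring
    linarith
  · intro j x hx
    rw [e1, h.z1 j x hx]; ring
  · intro x hx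
    rw [e2, h.z2 x hx]; simp [h.z1 _ x hx]

/-- mollification kernel `η` with potential `H`. -/
structure Ker (H η : R3 → ℝ) : Prop where
  sH : Sm H
  sη : Sm η
  zH : ∀ z, z ∉ closedBall (0 : R3) 1 → H z = 0
  zη : ∀ z, z ∉ closedBall (0 : R3) 1 → η z = 0
  one : ∫ z, η z = 1
  pot : ∀ i z, pd H i z = -(η z * z i)

lemma exists_ker : ∃ H η, Ker H η := by
  set φ : ℝ → ℝ := fun t => Real.smoothTransition (1 - t) with hφ
  have φs : ContDiff ℝ (⊤ : ℕ∞) φ := st_sm.comp (by fun_prop)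
  have d1 : ∀ t, deriv φ t = - st1 (1 - t) := fun t => by
    have h1 : HasDerivAt Real.smoothTransition (st1 (1 - t)) (1 - t) :=
      ((st_sm.differentiable (by simp)) _).hasDerivAt
    have := (h1.comp t ((hasDerivAt_id t).const_sub 1)).deriv
    simpa [Function.comp_def] using this
  set η0 : R3 → ℝ := fun z => 2 * st1 (1 - ‖z‖ ^ 2) with hη
  have sη : Sm η0 := (Sm.const 2).mul (rad_sm (φ := fun t => st1 (1 - t)) (st1_sm.comp (by fun_prop)))
  have off : ∀ z : R3, z ∉ closedBall (0 : R3) 1 → 1 - ‖z‖ ^ 2 < 0 := by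
    intro z hz
    simp only [mem_closedBall, dist_zero_right, not_le] at hz
    nlinarith
  have zη : ∀ z, z ∉ closedBall (0 : R3) 1 → η0 z = 0 := fun z hz => by
    simp only [hη, st1_off (Or.inl (off z hz)), mul_zero]
  have cη : HasCompactSupport η0 := HasCompactSupport.intro (isCompact_closedBall (0 : R3) 1) (fun z hz => zη z hz)
  have nn : ∀ z, 0 ≤ η0 z := fun z => by
    have : 0 ≤ st1 (1 - ‖z‖ ^ 2) := Real.smoothTransition.monotone.deriv_nonneg
    simp only [hη]; positivity
  have pos : 0 < ∫ z, η0 z := by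
    obtain ⟨t, ht, hs⟩ := exists_deriv_eq_slope Real.smoothTransition zero_lt_one
      st_sm.continuous.continuousOn ((st_sm.differentiable (by simp)).differentiableOn)
    simp only [Real.smoothTransition.one, Real.smoothTransition.zero, sub_zero, div_one] at hs
    apply Continuous.integral_pos_of_hasCompactSupport_nonneg_nonzero (x := EuclideanSpace.single 0 (Real.sqrt (1 - t)))
      (ContDiff.continuous sη) cη nn
    have : (1:ℝ) - ‖(EuclideanSpace.single 0 (Real.sqrt (1 - t)) : R3)‖ ^ 2 = t := by
      simp [Real.sq_sqrt (show 0 ≤ 1 - t by linarith [ht.2])]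
    simp only [hη, this, st1, hs]; norm_num
  set m := ∫ z, η0 z with hm
  refine ⟨fun z => m⁻¹ * φ (‖z‖ ^ 2), fun z => m⁻¹ * η0 z, (Sm.const _).mul (rad_sm φs),
    (Sm.const _).mul sη, ?_, ?_, ?_, ?_⟩
  · intro z hz
    simp only [hφ]
    rw [Real.smoothTransition.zero_of_nonpos (off z hz).le, mul_zero]
  · intro z hz; rw [zη z hz, mul_zero]
  · rw [integral_const_mul, ← hm]; field_simp
  · intro i z
    rw [pd_const_mul (rad_sm φs), pd_rad φs, d1]
    simp only [hη]; ring


/-! ### Part E: Sobolev -/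

lemma fderiv_norm_sq_le {f : R3 → ℝ} (x : R3) : ‖fderiv ℝ f x‖ ^ 2 ≤ ∑ j, pd f j x ^ 2 := by
  have h0 : 0 ≤ ∑ j, pd f j x ^ 2 := by positivity
  rw [← Real.le_sqrt (norm_nonneg _) h0]
  refine ContinuousLinearMap.opNorm_le_bound _ (Real.sqrt_nonneg _) fun v => ?_
  have hv : v = ∑ j, v j • (EuclideanSpace.single j (1:ℝ) : R3) := by
    ext i
    simp [Fin.sum_univ_three]
    fin_cases i <;> simp
  have e : fderiv ℝ f x v = ∑ j, pd f j x * v j := by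
    conv_lhs => rw [hv]
    rw [map_sum]
    simp only [map_smul, smul_eq_mul, pd]
    exact Finset.sum_congr rfl fun j _ => mul_comm _ _
  rw [e, Real.norm_eq_abs, EuclideanSpace.norm_eq, ← Real.sqrt_mul h0]
  apply Real.abs_le_sqrt
  simpa using Finset.sum_mul_sq_le_sq_mul_sq Finset.univ (fun j => pd f j x) (fun j => v j)

lemma sobolev : ∃ K : ℝ, 0 ≤ K ∧ ∀ f : R3 → ℝ, Sm f → HasCompactSupport f →
    ∫ x, f x ^ 6 ≤ K * (∫ x, ∑ j, pd f j x ^ 2) ^ 3 := by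
  set c := eLpNormLESNormFDerivOfEqInnerConst (volume : Measure R3) ((2 : NNReal) : ℝ) with hc
  refine ⟨(c : ℝ) ^ 6, by positivity, fun f hf hcs => ?_⟩
  have key := eLpNorm_le_eLpNorm_fderiv_of_eq_inner (μ := (volume : Measure R3)) (p := 2) (p' := 6)
    (hf.of_le (by norm_cast)) hcs (by norm_num) (by simp) (by simp; norm_num)
  have fc : Continuous f := ContDiff.continuous hf
  have dc : Continuous (fderiv ℝ f) := ContDiff.continuous_fderiv hf (by simp)
  have m1 : MemLp f ((6 : NNReal) : ENNReal) volume := fc.memLp_of_hasCompactSupport hcs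
  have m2 : MemLp (fderiv ℝ f) ((2 : NNReal) : ENNReal) volume := dc.memLp_of_hasCompactSupport (hcs.fderiv (𝕜 := ℝ))
  rw [m1.eLpNorm_eq_integral_rpow_norm (by simp) (by simp),
    m2.eLpNorm_eq_integral_rpow_norm (by simp) (by simp), ← hc,
    ← ENNReal.ofReal_coe_nnreal (p := c), ← ENNReal.ofReal_mul (by positivity),
    ENNReal.ofReal_le_ofReal_iff (by positivity)] at key
  have i6 : 0 ≤ ∫ x, ‖f x‖ ^ 6 := by positivity
  have i2 : 0 ≤ ∫ x, ‖fderiv ℝ f x‖ ^ 2 := by positivity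
  have k2 := pow_le_pow_left₀ (by positivity) key 6
  have t6 : (((6 : NNReal) : ENNReal)).toReal = 6 := by simp
  have t2 : (((2 : NNReal) : ENNReal)).toReal = 2 := by simp
  rw [t6, t2, mul_pow] at k2
  have a6 : ∀ x, ‖f x‖ ^ (6:ℝ) = ‖f x‖ ^ 6 := fun x => by norm_cast
  have a2 : ∀ x, ‖fderiv ℝ f x‖ ^ (2:ℝ) = ‖fderiv ℝ f x‖ ^ 2 := fun x => by norm_cast
  simp_rw [a6, a2] at k2
  rw [← Real.rpow_natCast, ← Real.rpow_mul i6, ← Real.rpow_natCast (_ ^ (2:ℝ)⁻¹), ← Real.rpow_mul i2] at k2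
  norm_num at k2
  have e6 : ∀ x, |f x| ^ 6 = f x ^ 6 := fun x => by
    rw [show 6 = 2 * 3 by norm_num, pow_mul, pow_mul, sq_abs]
  simp_rw [e6] at k2
  refine k2.trans ?_
  gcongr
  · exact (dc.norm.pow 2).integrable_of_hasCompactSupport
      (by simpa [pow_two] using (hcs.fderiv (𝕜 := ℝ)).norm.mul_left)
  · have : ∀ j, Integrable (fun x => pd f j x ^ 2) := fun j =>
      ((ContDiff.continuous (hf.pd j)).pow 2).integrable_of_hasCompactSupport
      (by simpa [pow_two] using (pd_compact hcs j).mul_left)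
    exact integrable_finsetSum _ fun j _ => this j
  · intro x; exact fderiv_norm_sq_le x

lemma int_pow6 {g : R3 → ℝ} (hg : Continuous g) (hc : HasCompactSupport g) :
    Integrable (fun x => g x ^ 6) := by
  have e5 : (fun x => g x ^ 6) = fun x => g x * g x ^ 5 := by ext x; ring
  rw [e5]
  exact (hg.mul (hg.pow 5)).integrable_of_hasCompactSupport hc.mul_right

lemma sobolev_loc {K : ℝ} (K0 : 0 ≤ K)
    (hK : ∀ f : R3 → ℝ, Sm f → HasCompactSupport f →
      ∫ x, f x ^ 6 ≤ K * (∫ x, ∑ j, pd f j x ^ 2) ^ 3)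
    {ψ : R3 → ℝ} {S : Set R3} {c d : ℝ} (hC : Cut ψ S c d)
    (hS : MeasurableSet S) (hb : Bornology.IsBounded S) {ρ : ℝ}
    (hρ : ∀ x, ‖x‖ ≤ ρ → ψ x = 1) {f : R3 → ℝ} (hf : Sm f) {D E : R3 → ℝ}
    (hD : Continuous D) (hE : Continuous E) (hfD : ∀ x, ∑ j, pd f j x ^ 2 ≤ D x)
    (hfE : ∀ x, f x ^ 2 ≤ E x) :
    ∫ x in ball 0 ρ, f x ^ 6 ≤ K * (2 * (∫ x, ψ x * ψ x * D x) + 6 * (c / d) ^ 2 * ∫ x in S, E x) ^ 3 := by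
  have hs := hC.sm.mul hf
  have hc : HasCompactSupport (fun x => ψ x * f x) := hC.cpt.mul_right
  have sc := ContDiff.continuous hC.sm
  have h1 : ∫ x in ball 0 ρ, f x ^ 6 ≤ ∫ x, (ψ x * f x) ^ 6 := by
    have e : ∫ x in ball 0 ρ, f x ^ 6 = ∫ x in ball 0 ρ, (ψ x * f x) ^ 6 := by
      refine setIntegral_congr_fun measurableSet_ball fun x hx => ?_
      have hx' : ‖x‖ ≤ ρ := by simpa using (mem_ball_zero_iff.1 hx).le
      rw [hρ x hx', one_mul]
    rw [e]
    refine setIntegral_le_integral ?_ (Eventually.of_forall fun x => by positivity)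
    exact int_pow6 (ContDiff.continuous hs) hc
  refine h1.trans ((hK _ hs hc).trans ?_)
  have D0 : ∀ x, 0 ≤ D x := fun x => le_trans (by positivity) (hfD x)
  have E0 : ∀ x, 0 ≤ E x := fun x => le_trans (by positivity) (hfE x)
  have i1 : Integrable (fun x => ψ x * ψ x * D x) :=
    ((sc.mul sc).mul hD).integrable_of_hasCompactSupport
      ((hC.cpt.mul_right (f' := ψ)).mul_right)
  have i2 : Integrable (S.indicator E) := (integrable_indicator_iff hS).2 (intS hb hE)
  rw [← integral_indicator hS, ← integral_const_mul, ← integral_const_mul,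
    ← integral_add (i1.const_mul _) (i2.const_mul _)]
  gcongr
  · refine integrable_finsetSum _ fun j _ => ?_
    exact ((ContDiff.continuous (hs.pd j)).pow 2).integrable_of_hasCompactSupport
      (by simpa [pow_two] using (pd_compact hc j).mul_left)
  · exact (i1.const_mul _).add (i2.const_mul _)
  · intro x
    simp only
    have e : ∀ j, pd (fun x => ψ x * f x) j x ^ 2 ≤ 2 * (ψ x * ψ x * pd f j x ^ 2)
        + 2 * (pd ψ j x ^ 2 * f x ^ 2) := fun j => by
      rw [pd_mul hC.sm hf]
      nlinarith [sq_nonneg (ψ x * pd f j x - pd ψ j x * f x)]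
    have e3 : ∀ j, pd ψ j x ^ 2 * f x ^ 2 ≤ (c / d) ^ 2 * S.indicator E x := fun j => by
      by_cases hx : x ∈ S
      · rw [Set.indicator_of_mem hx]
        exact mul_le_mul (sq_le_sq' (neg_le_of_abs_le (hC.b1 j x))
          (le_of_abs_le (hC.b1 j x))) (hfE x) (sq_nonneg _) (sq_nonneg _)
      · rw [hC.z1 j x hx, Set.indicator_of_notMem hx]; simp
    have e4 := mul_le_mul_of_nonneg_left (hfD x) (mul_self_nonneg (ψ x))
    have := Finset.sum_le_sum fun j (_ : j ∈ Finset.univ) => e j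
    simp only [Fin.sum_univ_three] at this e4 ⊢
    linarith [e3 0, e3 1, e3 2]

lemma sobolev_sys : ∃ K : ℝ, 0 ≤ K ∧ ∀ {U V : Fin 3 → R3 → ℝ} {P T : R3 → ℝ} (_ : Sys U V P T)
    {ψ : R3 → ℝ} {S : Set R3} {c d : ℝ} (_ : Cut ψ S c d)
    (_ : MeasurableSet S) (_ : Bornology.IsBounded S) {ρ : ℝ}
    (_ : ∀ x, ‖x‖ ≤ ρ → ψ x = 1),
    ∫ x in ball 0 ρ, e2 U V T x ^ 3 ≤
      K * (2 * (∫ x, ψ x * ψ x * D2 U V T x) + 6 * (c / d) ^ 2 * ∫ x in S, e2 U V T x) ^ 3 := by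
  obtain ⟨K, K0, hK⟩ := sobolev
  refine ⟨567 * K, by positivity, ?_⟩
  intro U V P T h ψ S c d hC hS hb ρ hρ
  have ce : Continuous (e2 U V T) := ContDiff.continuous h.sE
  set Z := (2 * (∫ x, ψ x * ψ x * D2 U V T x) + 6 * (c / d) ^ 2 * ∫ x in S, e2 U V T x) with hZ
  have nn : ∀ (W : Fin 3 → R3 → ℝ) x, 0 ≤ ∑ i, ∑ j, pd (W i) j x ^ 2 := fun W x => by positivity
  have n1 : ∀ (W : Fin 3 → R3 → ℝ) x i, ∑ j, pd (W i) j x ^ 2 ≤ ∑ i, ∑ j, pd (W i) j x ^ 2 :=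
    fun W x i => Finset.single_le_sum (f := fun i => ∑ j, pd (W i) j x ^ 2)
      (fun i _ => by positivity) (Finset.mem_univ i)
  have n2 : ∀ (W : Fin 3 → R3 → ℝ) x i, W i x ^ 2 ≤ ∑ i, W i x * W i x := fun W x i => by
    rw [pow_two]
    exact Finset.single_le_sum (f := fun i => W i x * W i x)
      (fun i _ => mul_self_nonneg _) (Finset.mem_univ i)
  have n3 : ∀ (W : Fin 3 → R3 → ℝ) x, 0 ≤ ∑ i, W i x * W i x := fun W x =>
    Finset.sum_nonneg fun i _ => mul_self_nonneg _
  have n4 : ∀ x, 0 ≤ ∑ j, pd T j x ^ 2 := fun x => by positivity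
  have bU : ∀ i, ∫ x in ball 0 ρ, U i x ^ 6 ≤ K * Z ^ 3 := fun i =>
    sobolev_loc K0 hK hC hS hb hρ (h.sU i) h.cD ce
      (fun x => by unfold D2; linarith [n1 U x i, nn V x, n4 x])
      (fun x => by unfold e2; linarith [n2 U x i, n3 V x, mul_self_nonneg (T x)])
  have bV : ∀ i, ∫ x in ball 0 ρ, V i x ^ 6 ≤ K * Z ^ 3 := fun i =>
    sobolev_loc K0 hK hC hS hb hρ (h.sV i) h.cD ce
      (fun x => by unfold D2; linarith [n1 V x i, nn U x, n4 x])
      (fun x => by unfold e2; linarith [n2 V x i, n3 U x, mul_self_nonneg (T x)])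
  have bT : ∫ x in ball 0 ρ, T x ^ 6 ≤ K * Z ^ 3 :=
    sobolev_loc K0 hK hC hS hb hρ h.sT h.cD ce
      (fun x => by unfold D2; linarith [nn V x, nn U x])
      (fun x => by unfold e2; linarith [n3 V x, n3 U x, pow_two (T x)])
  have cU : ∀ i, Continuous fun x => U i x ^ 6 := fun i => (ContDiff.continuous (h.sU i)).pow 6
  have cV : ∀ i, Continuous fun x => V i x ^ 6 := fun i => (ContDiff.continuous (h.sV i)).pow 6
  have cT : Continuous fun x => T x ^ 6 := (ContDiff.continuous h.sT).pow 6
  have pw : ∀ a b c : ℝ, 0 ≤ a → 0 ≤ b → 0 ≤ c → (a + b + c) ^ 3 ≤ 9 * (a ^ 3 + b ^ 3 + c ^ 3) := by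
    intro a b c ha hb hc
    nlinarith [mul_nonneg (add_nonneg ha hb) (sq_nonneg (a - b)),
      mul_nonneg (add_nonneg ha hc) (sq_nonneg (a - c)),
      mul_nonneg (add_nonneg hb hc) (sq_nonneg (b - c)),
      mul_nonneg ha (sq_nonneg (b - c)), mul_nonneg hb (sq_nonneg (a - c)),
      mul_nonneg hc (sq_nonneg (a - b)),mul_nonneg ha (sq_nonneg (a - c)),
      mul_nonneg hb (sq_nonneg (a - b)),mul_nonneg hc (sq_nonneg (c - a))]
  have pt : ∀ x, e2 U V T x ^ 3 ≤ 81 * ((U 0 x ^ 6 + U 1 x ^ 6 + U 2 x ^ 6)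
      + (V 0 x ^ 6 + V 1 x ^ 6 + V 2 x ^ 6) + T x ^ 6) := by
    intro x
    have q : ∀ W : Fin 3 → R3 → ℝ, (∑ i, W i x * W i x) ^ 3 ≤
        9 * (W 0 x ^ 6 + W 1 x ^ 6 + W 2 x ^ 6) := fun W => by
      rw [Fin.sum_univ_three]
      refine (pw _ _ _ (mul_self_nonneg _) (mul_self_nonneg _) (mul_self_nonneg _)).trans ?_
      ring_nf; exact le_refl _
    have := pw _ _ _ (n3 U x) (n3 V x) (mul_self_nonneg (T x))
    have t6 : (T x * T x) ^ 3 = T x ^ 6 := by ring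
    have : 0 ≤ T x ^ 6 := by positivity
    have q1 := q U
    have q2 := q V
    unfold e2
    linarith
  have iI : ∀ {g : R3 → ℝ}, Continuous g → IntegrableOn g (ball 0 ρ) := fun hg => intS isBounded_ball hg
  have cU0 := cU 0
  have cU1 := cU 1
  have cU2 := cU 2
  have cV0 := cV 0
  have cV1 := cV 1
  have cV2 := cV 2
  have sU := (cU0.add cU1).add cU2
  have sV := (cV0.add cV1).add cV2
  have := setIntegral_mono (μ := volume) (s := ball (0:R3) ρ) (iI (ce.pow 3))
    (iI (((sU.add sV).add cT).const_smul (81:ℝ))) pt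
  refine this.trans ?_
  have bU0 := bU 0
  have bU1 := bU 1
  have bU2 := bU 2
  have bV0 := bV 0
  have bV1 := bV 1
  have bV2 := bV 2
  clear bU bV cU cV this pt pw
  have e7 : ∫ x in ball (0:R3) ρ, ((81:ℝ) • ((((fun x => U 0 x ^ 6) + fun x => U 1 x ^ 6) + fun x => U 2 x ^ 6) +
      (((fun x => V 0 x ^ 6) + fun x => V 1 x ^ 6) + fun x => V 2 x ^ 6) + fun x => T x ^ 6)) x
      = 81 * ∫ x in ball (0:R3) ρ, ((((fun x => U 0 x ^ 6) + fun x => U 1 x ^ 6) + fun x => U 2 x ^ 6) +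
      (((fun x => V 0 x ^ 6) + fun x => V 1 x ^ 6) + fun x => V 2 x ^ 6) + fun x => T x ^ 6) x := by
    rw [← integral_const_mul]; rfl
  rw [e7, integral_add' (iI (sU.add sV)) (iI cT), integral_add' (iI sU) (iI sV),
    integral_add' (iI (cU0.add cU1)) (iI cU2), integral_add' (iI cU0) (iI cU1),
    integral_add' (iI (cV0.add cV1)) (iI cV2), integral_add' (iI cV0) (iI cV1)]
  linarith


/-! ### Part F: Hölder and pairing -/

lemma memLpS {S : Set R3} (hS : MeasurableSet S) (hb : Bornology.IsBounded S) {F : R3 → ℝ} (hF : Continuous F)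
    (p : ENNReal) : MemLp F p (volume.restrict S) := by
  haveI : IsFiniteMeasure (volume.restrict S) := ⟨by
    rw [Measure.restrict_apply_univ]; exact hb.measure_lt_top⟩
  obtain ⟨C, hC⟩ := hb.isCompact_closure.exists_bound_of_continuousOn hF.continuousOn
  refine MemLp.of_bound hF.aestronglyMeasurable C ?_
  exact (ae_restrict_iff' hS).2 (Eventually.of_forall fun x hx => hC x (subset_closure hx))

lemma hold {S : Set R3} (hS : MeasurableSet S) (hb : Bornology.IsBounded S) {F G : R3 → ℝ} (hF : Continuous F)
    (hG : Continuous G) (F0 : ∀ x, 0 ≤ F x) (G0 : ∀ x, 0 ≤ G x) {p q : ℝ}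
    (h : p.HolderConjugate q) :
    ∫ x in S, F x * G x ≤ (∫ x in S, F x ^ p) ^ (1 / p) * (∫ x in S, G x ^ q) ^ (1 / q) :=
  integral_mul_le_Lp_mul_Lq_of_nonneg h (Eventually.of_forall F0) (Eventually.of_forall G0)
    (memLpS hS hb hF _) (memLpS hS hb hG _)

/-- interpolation form -/
lemma hold_th {S : Set R3} (hS : MeasurableSet S) (hb : Bornology.IsBounded S) {F G : R3 → ℝ} (hF : Continuous F)
    (hG : Continuous G) (F0 : ∀ x, 0 ≤ F x) (G0 : ∀ x, 0 ≤ G x) {t : ℝ} (t0 : 0 < t) (t1 : t < 1) :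
    ∫ x in S, F x ^ t * G x ^ (1 - t) ≤ (∫ x in S, F x) ^ t * (∫ x in S, G x) ^ (1 - t) := by
  have hc : (1 / t).HolderConjugate (1 / (1 - t)) := by
    rw [Real.holderConjugate_iff]
    constructor
    · rw [lt_div_iff₀ t0]; linarith
    · simp
  have := hold hS hb (hF.rpow_const fun x => Or.inr t0.le)
    (hG.rpow_const (p := 1 - t) fun x => Or.inr (by linarith))
    (fun x => Real.rpow_nonneg (F0 x) _) (fun x => Real.rpow_nonneg (G0 x) _) hc
  have e1 : ∀ x, (F x ^ t) ^ (1 / t) = F x := fun x => by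
    rw [← Real.rpow_mul (F0 x), mul_one_div_cancel t0.ne', Real.rpow_one]
  have e2 : ∀ x, (G x ^ (1 - t)) ^ (1 / (1 - t)) = G x := fun x => by
    rw [← Real.rpow_mul (G0 x), mul_one_div_cancel (by linarith), Real.rpow_one]
  simpa only [e1, e2, one_div_one_div] using this

def B1 : Set R3 := closedBall (0 : R3) 1

lemma B1_meas : MeasurableSet B1 := measurableSet_closedBall
lemma B1_bdd : Bornology.IsBounded B1 := isBounded_closedBall
lemma B1_cpt : IsCompact B1 := isCompact_closedBall _ _

def bar (G : R3 → ℝ) (s : ℝ) (x : R3) : ℝ := ∫ z in B1, G (x - s • z)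

lemma bar_nonneg {G : R3 → ℝ} (G0 : ∀ x, 0 ≤ G x) (s : ℝ) (x : R3) : 0 ≤ bar G s x :=
  integral_nonneg fun z => G0 _

lemma bar_cont {G : R3 → ℝ} (hG : Continuous G) (s : ℝ) : Continuous (bar G s) := by
  unfold bar
  exact continuous_parametric_integral_of_continuous (f := fun x z => G (x - s • z))
    (by unfold Function.uncurry; fun_prop) B1_cpt

/-- change of variables bound -/
lemma bar_le {G : R3 → ℝ} (hG : Continuous G) (G0 : ∀ x, 0 ≤ G x) {Sh : Set R3} (hm : MeasurableSet Sh)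
    (hb : Bornology.IsBounded Sh) {s : ℝ} (s0 : 0 < s) {x : R3} (hx : ∀ z ∈ B1, x - s • z ∈ Sh) :
    bar G s x ≤ (s ^ 3)⁻¹ * ∫ y in Sh, G y := by
  unfold bar
  rw [← integral_indicator B1_meas, ← integral_indicator hm]
  have e : ∫ z, Sh.indicator G (x - s • z) = (s ^ 3)⁻¹ * ∫ y, Sh.indicator G y := by
    rw [Measure.integral_comp_smul volume (fun z => Sh.indicator G (x - z)) s]
    rw [integral_sub_left_eq_self (fun z => Sh.indicator G z) volume x]
    simp [abs_of_pos s0]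
  rw [← e]
  have i : Integrable (Sh.indicator G) := (integrable_indicator_iff hm).2 (intS hb hG)
  have i2 : Integrable (fun z => Sh.indicator G (x - z)) := i.comp_sub_left x
  have i3 : Integrable (fun z => Sh.indicator G (x - s • z)) := by
    have := (integrable_comp_smul_iff volume (fun z => Sh.indicator G (x - z)) s0.ne').2 i2
    exact this
  refine integral_mono ((integrable_indicator_iff B1_meas).2 (intS B1_bdd (by fun_prop))) i3 fun z => ?_
  simp only
  by_cases hz : z ∈ B1
  · rw [Set.indicator_of_mem hz, Set.indicator_of_mem (hx z hz)]
  · rw [Set.indicator_of_notMem hz]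
    exact Set.indicator_nonneg (fun y _ => G0 y) _

/-- Fubini bound -/
lemma int_bar_le {G : R3 → ℝ} (hG : Continuous G) (G0 : ∀ x, 0 ≤ G x) {S Sh : Set R3}
    (hS : MeasurableSet S) (hSb : Bornology.IsBounded S) (hm : MeasurableSet Sh)
    (hb : Bornology.IsBounded Sh) {s : ℝ} (hx : ∀ x ∈ S, ∀ z ∈ B1, x - s • z ∈ Sh) :
    ∫ x in S, bar G s x ≤ volume.real B1 * ∫ y in Sh, G y := by
  unfold bar
  have hi : Integrable (Function.uncurry fun x z => G (x - s • z))
      ((volume.restrict S).prod (volume.restrict B1)) := by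
    rw [Measure.prod_restrict]
    have hc : Continuous (Function.uncurry fun x z : R3 => G (x - s • z)) := by
      unfold Function.uncurry; fun_prop
    exact (hc.continuousOn.integrableOn_compact ((hSb.isCompact_closure).prod B1_cpt)).mono_set
      (Set.prod_mono subset_closure subset_rfl)
  rw [integral_integral_swap hi]
  have e : ∀ z ∈ B1, ∫ x in S, G (x - s • z) ≤ ∫ y in Sh, G y := by
    intro z hz
    rw [← integral_indicator hS, ← integral_indicator hm,
      ← integral_sub_right_eq_self (Sh.indicator G) (s • z)]
    have i : Integrable (Sh.indicator G) := (integrable_indicator_iff hm).2 (intS hb hG)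
    refine integral_mono ((integrable_indicator_iff hS).2 (intS hSb (by fun_prop)))
      (i.comp_sub_right _) fun x => ?_
    simp only
    by_cases h : x ∈ S
    · rw [Set.indicator_of_mem h, Set.indicator_of_mem (hx x h z hz)]
    · rw [Set.indicator_of_notMem h]
      exact Set.indicator_nonneg (fun y _ => G0 y) _
  have := setIntegral_mono_on (μ := volume) (s := B1) (f := fun z => ∫ x in S, G (x - s • z))
    (g := fun _ => ∫ y in Sh, G y) hi.integral_prod_right (intS B1_bdd continuous_const) B1_meas e
  refine this.trans ?_
  rw [setIntegral_const, smul_eq_mul]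

lemma pairing {p : ℝ} (hp1 : 3 / 2 < p) (hp2 : p < 3) : ∃ C : ℝ, 0 ≤ C ∧
    ∀ {a G : R3 → ℝ} (_ : Continuous a) (_ : ∀ x, 0 ≤ a x) (_ : Continuous G) (_ : ∀ x, 0 ≤ G x)
    {S Sh : Set R3} (_ : MeasurableSet S) (_ : Bornology.IsBounded S) (_ : MeasurableSet Sh)
    (_ : Bornology.IsBounded Sh) {s : ℝ} (_ : 0 < s) (_ : ∀ x ∈ S, ∀ z ∈ B1, x - s • z ∈ Sh),
    ∫ x in S, a x * bar G s x ≤ C * s ^ (-(3 / p - 1)) * (∫ x in S, a x ^ p) ^ (1 / p) *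
      (∫ y in Sh, G y ^ (3 / 2 : ℝ)) ^ (2 / 3 : ℝ) := by
  set q := p / (p - 1) with hq
  have p0 : 0 < p := by linarith
  have hq0 : 0 < q := by rw [hq]; apply div_pos <;> linarith
  have hpq : p.HolderConjugate q := by
    rw [Real.holderConjugate_iff]; refine ⟨by linarith, ?_⟩
    rw [hq]; field_simp; ring
  have hqinv : 1 / q = 1 - 1 / p := by rw [hq]; field_simp
  set b := volume.real B1 with hb'
  have b0 : 0 ≤ b := measureReal_nonneg
  refine ⟨b ^ (1 / 3 : ℝ) * b ^ (1 / q), by positivity, ?_⟩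
  intro a G ha a0 hG G0 S Sh hS hSb hm hmb s s0 hx
  set k : R3 → ℝ := fun x => G x ^ (3 / 2 : ℝ) with hk
  have kc : Continuous k := hG.rpow_const fun x => Or.inr (by norm_num)
  have k0 : ∀ x, 0 ≤ k x := fun x => Real.rpow_nonneg (G0 x) _
  set I := ∫ y in Sh, k y with hI
  have I0 : 0 ≤ I := integral_nonneg k0
  -- Hölder in z
  have h1 : ∀ x, bar G s x ≤ b ^ (1 / 3 : ℝ) * (bar k s x) ^ (2 / 3 : ℝ) := by
    intro x
    have := hold_th B1_meas B1_bdd (F := fun _ => (1:ℝ)) (G := fun z => k (x - s • z))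
      continuous_const (by fun_prop) (fun _ => zero_le_one) (fun z => k0 _)
      (t := 1 / 3) (by norm_num) (by norm_num)
    have e : ∀ z, (1:ℝ) ^ (1 / 3 : ℝ) * (k (x - s • z)) ^ (1 - 1 / 3 : ℝ) = G (x - s • z) := by
      intro z
      rw [Real.one_rpow, one_mul, hk]
      simp only
      rw [← Real.rpow_mul (G0 _)]
      norm_num
    simp_rw [e] at this
    rw [setIntegral_const, smul_eq_mul, mul_one] at this
    norm_num at this
    exact this
  have gq : ∀ x ∈ S, bar G s x ^ q ≤ b ^ (q / 3) * ((s ^ 3)⁻¹ * I) ^ (2 * q / 3 - 1) * bar k s x := by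
    intro x hxS
    have m0 := bar_nonneg k0 s x
    have e0 : 0 < 2 * q / 3 - 1 := by
      have : 3 / 2 < q := by rw [hq, lt_div_iff₀ (by linarith)]; linarith
      linarith
    have m1 := bar_le kc k0 hm hmb s0 (hx x hxS)
    calc bar G s x ^ q ≤ (b ^ (1 / 3 : ℝ) * (bar k s x) ^ (2 / 3 : ℝ)) ^ q :=
          Real.rpow_le_rpow (bar_nonneg G0 _ _) (h1 x) hq0.le
      _ = b ^ (q / 3) * (bar k s x) ^ (2 * q / 3) := by
          rw [Real.mul_rpow (by positivity) (by positivity), ← Real.rpow_mul b0, ← Real.rpow_mul m0]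
          congr 2 <;> ring
      _ = b ^ (q / 3) * ((bar k s x) ^ (2 * q / 3 - 1) * bar k s x) := by
          congr 1
          conv_lhs => rw [show 2 * q / 3 = (2 * q / 3 - 1) + 1 by ring]
          rw [Real.rpow_add_one' m0 (by linarith)]
      _ ≤ b ^ (q / 3) * (((s ^ 3)⁻¹ * I) ^ (2 * q / 3 - 1) * bar k s x) := by
          gcongr
      _ = _ := by ring
  have h2 : ∫ x in S, bar G s x ^ q ≤ b ^ (q / 3) * ((s ^ 3)⁻¹ * I) ^ (2 * q / 3 - 1) * (b * I) := by
    have := setIntegral_mono_on (μ := volume) (s := S)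
      (intS hSb ((bar_cont hG s).rpow_const fun x => Or.inr hq0.le))
      ((intS hSb (bar_cont kc s)).const_mul _) hS gq
    refine this.trans ?_
    rw [integral_const_mul]
    exact mul_le_mul_of_nonneg_left (int_bar_le kc k0 hS hSb hm hmb hx) (by positivity)
  refine (hold hS hSb ha (bar_cont hG s) a0 (bar_nonneg G0 s) hpq).trans ?_
  have h3 : (∫ x in S, bar G s x ^ q) ^ (1 / q) ≤
      b ^ (1 / 3 : ℝ) * b ^ (1 / q) * s ^ (-(3 / p - 1)) * I ^ (2 / 3 : ℝ) := by
    refine (Real.rpow_le_rpow (integral_nonneg fun x => Real.rpow_nonneg (bar_nonneg G0 _ _) _) h2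
      (by positivity)).trans (le_of_eq ?_)
    rw [Real.mul_rpow (by positivity) (by positivity), Real.mul_rpow (by positivity) (by positivity),
      Real.mul_rpow b0 I0, ← Real.rpow_mul b0, ← Real.rpow_mul (by positivity),
      Real.mul_rpow (by positivity) I0]
    have e1 : q / 3 * (1 / q) = 1 / 3 := by field_simp
    have e2 : (2 * q / 3 - 1) * (1 / q) = 2 / 3 - 1 / q := by field_simp
    rw [e1, e2]
    have e3 : ((s ^ 3)⁻¹ : ℝ) ^ (2 / 3 - 1 / q) = s ^ (-(3 / p - 1)) := by
      rw [← Real.rpow_natCast, ← Real.rpow_neg s0.le, ← Real.rpow_mul s0.le, hqinv]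
      congr 1
      push_cast
      field_simp
      ring
    rw [e3]
    have e4 : I ^ (2 / 3 - 1 / q) * I ^ (1 / q) = I ^ (2 / 3 : ℝ) := by
      rw [← Real.rpow_add' I0 (by norm_num)]
      congr 1; ring
    rw [← e4]; ring
  calc _ ≤ (∫ x in S, a x ^ p) ^ (1 / p) *
      (b ^ (1 / 3 : ℝ) * b ^ (1 / q) * s ^ (-(3 / p - 1)) * I ^ (2 / 3 : ℝ)) :=
        mul_le_mul_of_nonneg_left h3 (Real.rpow_nonneg (integral_nonneg fun x => Real.rpow_nonneg (a0 x) _) _)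
    _ = _ := by ring


/-! ### Part G: pressure representation -/

section
variable {U V : Fin 3 → R3 → ℝ} {P T : R3 → ℝ}

def Nt (U V : Fin 3 → R3 → ℝ) (i j : Fin 3) (x : R3) : ℝ := U j x * U i x + V j x * V i x

lemma Sys.sN (h : Sys U V P T) (i j : Fin 3) : Sm (Nt U V i j) :=
  ((h.sU j).mul (h.sU i)).add ((h.sV j).mul (h.sV i))

lemma Sys.gradP (h : Sys U V P T) (i : Fin 3) (x : R3) :
    pd P i x = lap (U i) x - ∑ j, pd (Nt U V i j) j x := by
  have e : ∀ j, pd (Nt U V i j) j x = U j x * pd (U i) j x + pd (U j) j x * U i x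
      + pd (fun y => V j y * V i y) j x := fun j => by
    unfold Nt
    rw [pd_add ((h.sU j).mul (h.sU i)) ((h.sV j).mul (h.sV i)), pd_mul (h.sU j) (h.sU i)]
  have h1 := h.eU i x
  have h2 := h.dU x
  simp_rw [e]
  rw [Finset.sum_add_distrib, Finset.sum_add_distrib, ← Finset.sum_mul, h2]
  linarith

lemma Sys.div_lap (h : Sys U V P T) (x : R3) : ∑ i, pd (lap (U i)) i x = 0 := by
  have e : ∀ i, pd (lap (U i)) i x = ∑ j, pd (pd (pd (U i) i) j) j x := fun i => by
    unfold lap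
    rw [pd_sum _ (fun j => ((h.sU i).pd j).pd j)]
    refine Finset.sum_congr rfl fun j _ => ?_
    rw [pd_comm ((h.sU i).pd j) j i]
    have : pd (pd (U i) j) i = pd (pd (U i) i) j := funext fun y => pd_comm (h.sU i) j i y
    rw [this]
  simp_rw [e]
  rw [Finset.sum_comm]
  refine Finset.sum_eq_zero fun j _ => ?_
  have s1 : ∀ i, Sm (pd (U i) i) := fun i => (h.sU i).pd i
  have z : (fun y => ∑ i, pd (U i) i y) = fun _ => 0 := funext h.dU
  have z1 : pd (fun y => ∑ i, pd (U i) i y) j = fun _ => 0 := by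
    rw [z]; ext y; simp [pd]
  have z2 : pd (fun y => ∑ i, pd (U i) i y) j = fun y => ∑ i, pd (pd (U i) i) j y :=
    funext fun y => pd_sum _ s1 j y
  rw [← pd_sum _ (fun i => (s1 i).pd j), ← z2, z1]
  simp [pd]

lemma Ker.cH {H η : R3 → ℝ} (k : Ker H η) : HasCompactSupport H :=
  HasCompactSupport.intro (isCompact_closedBall (0 : R3) 1) (fun z hz => k.zH z hz)

lemma Ker.cη {H η : R3 → ℝ} (k : Ker H η) : HasCompactSupport η :=
  HasCompactSupport.intro (isCompact_closedBall (0 : R3) 1) (fun z hz => k.zη z hz)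

lemma pd_off {f : R3 → ℝ} (hf : ∀ z, z ∉ B1 → f z = 0) (j : Fin 3) : ∀ z, z ∉ B1 → pd f j z = 0 := by
  intro z hz
  have : f =ᶠ[nhds z] fun _ => 0 := by
    filter_upwards [(isClosed_closedBall (x := (0:R3)) (ε := 1)).isOpen_compl.mem_nhds hz] with y hy
    exact hf y hy
  unfold pd
  rw [this.fderiv_eq]; simp

lemma int_wg {w g : R3 → ℝ} (hw : Continuous w) (hc : HasCompactSupport w) (hg : Continuous g) (x : R3) (s : ℝ) :
    Integrable (fun z => w z * g (x - s • z)) :=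
  (hw.mul (by fun_prop)).integrable_of_hasCompactSupport hc.mul_right

/-- bound on weight integral -/
lemma wbound {w g G : R3 → ℝ} {c : ℝ} (hz : ∀ z, z ∉ B1 → w z = 0) (hw : ∀ z, |w z| ≤ c)
    (hG : Continuous G) (hgG : ∀ x, |g x| ≤ G x) (x : R3) (s : ℝ) :
    |∫ z, w z * g (x - s • z)| ≤ c * bar G s x := by
  unfold bar
  rw [← integral_const_mul]
  refine int_bound B1_meas B1_bdd (by fun_prop) (fun z hz' => by rw [hz z hz', zero_mul]) fun z => ?_
  rw [abs_mul]
  exact mul_le_mul (hw z) (hgG _) (abs_nonneg _) ((abs_nonneg _).trans (hw z))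

lemma exists_ker_bound {H η : R3 → ℝ} (k : Ker H η) : ∃ c : ℝ, 0 < c ∧ (∀ z, |η z| ≤ c) ∧
    (∀ j z, |pd η j z| ≤ c) ∧ (∀ i j z, |pd (pd η i) j z| ≤ c) ∧ (∀ j z, |pd H j z| ≤ c) ∧
    (∀ i j z, |pd (pd H i) j z| ≤ c) := by
  have b : ∀ w : R3 → ℝ, Sm w → HasCompactSupport w → ∃ c, ∀ z, |w z| ≤ c := fun w hw hc => by
    obtain ⟨C, hC⟩ := (ContDiff.continuous hw).bounded_above_of_compact_support hc
    exact ⟨C, hC⟩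
  obtain ⟨c1, h1⟩ := b η k.sη k.cη
  choose c2 h2 using fun j => b _ (k.sη.pd j) (pd_compact k.cη j)
  choose c3 h3 using fun i j => b _ ((k.sη.pd i).pd j) (pd_compact (pd_compact k.cη i) j)
  choose c4 h4 using fun j => b _ (k.sH.pd j) (pd_compact k.cH j)
  choose c5 h5 using fun i j => b _ ((k.sH.pd i).pd j) (pd_compact (pd_compact k.cH i) j)
  have le1 : ∀ (f : Fin 3 → ℝ) j, f j ≤ ∑ j, |f j| := fun f j => (le_abs_self _).trans
    (Finset.single_le_sum (f := fun j => |f j|) (fun i _ => abs_nonneg _) (Finset.mem_univ j))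
  have le2 : ∀ (f : Fin 3 → Fin 3 → ℝ) i j, f i j ≤ ∑ i, ∑ j, |f i j| := fun f i j =>
    (le1 (f i) j).trans (Finset.single_le_sum (f := fun i => ∑ j, |f i j|)
      (fun i _ => Finset.sum_nonneg fun j _ => abs_nonneg _) (Finset.mem_univ i))
  have q2 : 0 ≤ ∑ j, |c2 j| := by positivity
  have q3 : 0 ≤ ∑ i, ∑ j, |c3 i j| := by positivity
  have q4 : 0 ≤ ∑ j, |c4 j| := by positivity
  have q5 : 0 ≤ ∑ i, ∑ j, |c5 i j| := by positivity
  have q1 := abs_nonneg c1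
  refine ⟨|c1| + (∑ j, |c2 j|) + (∑ i, ∑ j, |c3 i j|) + (∑ j, |c4 j|) + (∑ i, ∑ j, |c5 i j|) + 1,
    by positivity, ?_, ?_, ?_, ?_, ?_⟩
  · intro z; linarith [h1 z, le_abs_self c1]
  · intro j z; linarith [h2 j z, le1 c2 j]
  · intro i j z; linarith [h3 i j z, le2 c3 i j]
  · intro j z; linarith [h4 j z, le1 c4 j]
  · intro i j z; linarith [h5 i j z, le2 c5 i j]

def he (U V : Fin 3 → R3 → ℝ) (T : R3 → ℝ) (x : R3) : ℝ :=
  Real.sqrt (e2 U V T x) * Real.sqrt (D2 U V T x)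

lemma Sys.che (h : Sys U V P T) : Continuous (he U V T) :=
  (Real.continuous_sqrt.comp (ContDiff.continuous h.sE)).mul (Real.continuous_sqrt.comp h.cD)

lemma he_nonneg (x : R3) : 0 ≤ he U V T x := mul_nonneg (Real.sqrt_nonneg _) (Real.sqrt_nonneg _)

lemma absU_le (i : Fin 3) (x : R3) : |U i x| ≤ Real.sqrt (e2 U V T x) := by
  apply Real.abs_le_sqrt
  rw [e2_eq]
  have := abs_le_na U i x
  have := pow_le_pow_left₀ (abs_nonneg _) this 2
  rw [sq_abs] at this
  nlinarith [sq_nonneg (na V x), sq_nonneg (|T x|)]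

lemma absV_le (i : Fin 3) (x : R3) : |V i x| ≤ Real.sqrt (e2 U V T x) := by
  apply Real.abs_le_sqrt
  rw [e2_eq]
  have := abs_le_na V i x
  have := pow_le_pow_left₀ (abs_nonneg _) this 2
  rw [sq_abs] at this
  nlinarith [sq_nonneg (na U x), sq_nonneg (|T x|)]

lemma sumsum_le (W : Fin 3 → R3 → ℝ) (i j : Fin 3) (x : R3) :
    pd (W i) j x ^ 2 ≤ ∑ i, ∑ j, pd (W i) j x ^ 2 :=
  (Finset.single_le_sum (f := fun j => pd (W i) j x ^ 2) (fun j _ => sq_nonneg _)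
    (Finset.mem_univ j)).trans (Finset.single_le_sum (f := fun i => ∑ j, pd (W i) j x ^ 2)
      (fun i _ => Finset.sum_nonneg fun j _ => sq_nonneg _) (Finset.mem_univ i))

lemma abspdU_le (i j : Fin 3) (x : R3) : |pd (U i) j x| ≤ Real.sqrt (D2 U V T x) := by
  apply Real.abs_le_sqrt
  refine (sumsum_le U i j x).trans ?_
  unfold D2
  have h2 : 0 ≤ ∑ i, ∑ j, pd (V i) j x ^ 2 := by positivity
  have h3 : 0 ≤ ∑ j, pd T j x ^ 2 := by positivity
  linarith

lemma abspdV_le (i j : Fin 3) (x : R3) : |pd (V i) j x| ≤ Real.sqrt (D2 U V T x) := by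
  apply Real.abs_le_sqrt
  refine (sumsum_le V i j x).trans ?_
  unfold D2
  have h2 : 0 ≤ ∑ i, ∑ j, pd (U i) j x ^ 2 := by positivity
  have h3 : 0 ≤ ∑ j, pd T j x ^ 2 := by positivity
  linarith

lemma Nt_le (i j : Fin 3) (x : R3) : |Nt U V i j x| ≤ 2 * e2 U V T x := by
  unfold Nt
  have e := Real.mul_self_sqrt (e2_nonneg U V T x)
  refine (abs_add_le _ _).trans ?_
  rw [abs_mul, abs_mul]
  have h1 := mul_le_mul (absU_le (U := U) (V := V) (T := T) j x) (absU_le (U := U) (V := V) (T := T) i x)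
    (abs_nonneg _) (Real.sqrt_nonneg _)
  have h2 := mul_le_mul (absV_le (U := U) (V := V) (T := T) j x) (absV_le (U := U) (V := V) (T := T) i x)
    (abs_nonneg _) (Real.sqrt_nonneg _)
  linarith

lemma Sys.pdN_le (h : Sys U V P T) (i j : Fin 3) (x : R3) : |pd (Nt U V i j) j x| ≤ 4 * he U V T x := by
  unfold Nt
  rw [pd_add ((h.sU j).mul (h.sU i)) ((h.sV j).mul (h.sV i)), pd_mul (h.sU j) (h.sU i),
    pd_mul (h.sV j) (h.sV i)]
  have m1 := fun i k l => mul_le_mul (absU_le (U := U) (V := V) (T := T) i x)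
    (abspdU_le (U := U) (V := V) (T := T) k l x) (abs_nonneg _) (Real.sqrt_nonneg _)
  have m2 := fun i k l => mul_le_mul (absV_le (U := U) (V := V) (T := T) i x)
    (abspdV_le (U := U) (V := V) (T := T) k l x) (abs_nonneg _) (Real.sqrt_nonneg _)
  refine (abs_add_le _ _).trans ((add_le_add (abs_add_le _ _) (abs_add_le _ _)).trans ?_)
  simp only [abs_mul]
  unfold he
  nlinarith [m1 j i j, m1 i j j, m2 j i j, m2 i j j]

/-- the kernel derivative -/
def Bk (H P : R3 → ℝ) (s : ℝ) (x : R3) : ℝ := ∑ i, ∫ z, pd H i z * pd P i (x - s • z)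

lemma Sys.Bk_eq (h : Sys U V P T) {H η : R3 → ℝ} (k : Ker H η) (s : ℝ) (x : R3) :
    Bk H P s x = -∑ i, ∑ j, ∫ z, pd H i z * pd (Nt U V i j) j (x - s • z) := by
  unfold Bk
  have cH : ∀ i, Continuous (pd H i) := fun i => ContDiff.continuous (k.sH.pd i)
  have cc : ∀ i, HasCompactSupport (pd H i) := fun i => pd_compact k.cH i
  have cN : ∀ i j, Continuous (pd (Nt U V i j) j) := fun i j => ContDiff.continuous ((h.sN i j).pd j)
  have cL : ∀ i, Continuous (lap (U i)) := fun i => ContDiff.continuous (h.sU i).lap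
  have e1 : ∀ i, ∫ z, pd H i z * pd P i (x - s • z) = (∫ z, pd H i z * lap (U i) (x - s • z))
      - ∑ j, ∫ z, pd H i z * pd (Nt U V i j) j (x - s • z) := fun i => by
    rw [← integral_finsetSum _ fun j _ => int_wg (cH i) (cc i) (cN i j) x s,
      ← integral_sub (int_wg (cH i) (cc i) (cL i) x s)
        (integrable_finsetSum _ fun j _ => int_wg (cH i) (cc i) (cN i j) x s)]
    congr 1; ext z
    rw [h.gradP, mul_sub, Finset.mul_sum]
  simp_rw [e1]
  rw [Finset.sum_sub_distrib]
  have e2 : ∑ i, ∫ z, pd H i z * lap (U i) (x - s • z) = 0 := by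
    have : ∀ i, ∫ z, pd H i z * lap (U i) (x - s • z) = s * ∫ z, H z * pd (lap (U i)) i (x - s • z) :=
      fun i => (ibp_shift k.sH (h.sU i).lap k.cH i x s).symm
    simp_rw [this]
    rw [← Finset.mul_sum, ← integral_finsetSum _ fun i _ =>
      int_wg (ContDiff.continuous k.sH) k.cH (ContDiff.continuous ((h.sU i).lap.pd i)) x s]
    simp_rw [← Finset.mul_sum, h.div_lap]
    simp
  rw [e2, zero_sub]

lemma Sys.Bk_le1 (h : Sys U V P T) {H η : R3 → ℝ} (k : Ker H η) {c : ℝ}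
    (hc : ∀ j z, |pd H j z| ≤ c) (s : ℝ) (x : R3) :
    |Bk H P s x| ≤ 36 * c * bar (he U V T) s x := by
  rw [h.Bk_eq k, abs_neg]
  have e : ∀ i j, |∫ z, pd H i z * pd (Nt U V i j) j (x - s • z)| ≤ 4 * c * bar (he U V T) s x := by
    intro i j
    have := wbound (pd_off k.zH i) (hc i) (h.che.const_smul (4:ℝ)) (fun x => h.pdN_le i j x) x s
    refine this.trans (le_of_eq ?_)
    unfold bar
    simp only [Pi.smul_apply, smul_eq_mul]
    rw [integral_const_mul]; ring
  refine (Finset.abs_sum_le_sum_abs _ _).trans ((Finset.sum_le_sum fun i _ =>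
    (Finset.abs_sum_le_sum_abs _ _).trans (Finset.sum_le_sum fun j _ => e i j)).trans ?_)
  simp; linarith

lemma Sys.Bk_le2 (h : Sys U V P T) {H η : R3 → ℝ} (k : Ker H η) {c : ℝ}
    (hc : ∀ i j z, |pd (pd H i) j z| ≤ c) {s : ℝ} (s0 : 0 < s) (x : R3) :
    |Bk H P s x| ≤ 18 * c * s⁻¹ * bar (e2 U V T) s x := by
  have e : ∀ i j, |∫ z, pd H i z * pd (Nt U V i j) j (x - s • z)| ≤
      2 * c * s⁻¹ * bar (e2 U V T) s x := by
    intro i j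
    have h1 := ibp_shift (k.sH.pd i) (h.sN i j) (pd_compact k.cH i) j x s
    have := wbound (pd_off (pd_off k.zH i) j) (hc i j) ((ContDiff.continuous h.sE).const_smul (2:ℝ))
      (fun x => Nt_le i j x) x s
    rw [← h1, abs_mul, abs_of_pos s0] at this
    have e3 : bar ((2:ℝ) • e2 U V T) s x = 2 * bar (e2 U V T) s x := by
      unfold bar
      simp only [Pi.smul_apply, smul_eq_mul]
      rw [integral_const_mul]
    have e4 : c * bar ((2:ℝ) • e2 U V T) s x = 2 * c * bar (e2 U V T) s x := by rw [e3]; ring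
    rw [show 2 * c * s⁻¹ * bar (e2 U V T) s x = (2 * c * bar (e2 U V T) s x) / s by
      field_simp, le_div_iff₀ s0]
    rw [← e4]; linarith
  rw [h.Bk_eq k, abs_neg]
  refine (Finset.abs_sum_le_sum_abs _ _).trans ((Finset.sum_le_sum fun i _ =>
    (Finset.abs_sum_le_sum_abs _ _).trans (Finset.sum_le_sum fun j _ => e i j)).trans ?_)
  simp; linarith

/-- averaged pressure -/
def Av (η P : R3 → ℝ) (s : ℝ) (x : R3) : ℝ := ∫ z, η z * P (x - s • z)

lemma curve_deriv {P : R3 → ℝ} (hP : Sm P) {γ γ' : ℝ → R3} {t : ℝ} (hγ : HasDerivAt γ (γ' t) t) :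
    HasDerivAt (fun t => P (γ t)) (∑ i, γ' t i * pd P i (γ t)) t := by
  have h1 := (hP.diff (γ t)).hasFDerivAt.comp_hasDerivAt t hγ
  suffices e : ∑ i, γ' t i * pd P i (γ t) = fderiv ℝ P (γ t) (γ' t) by rw [e]; exact h1
  set v := γ' t
  have hv : v = ∑ j, v j • (EuclideanSpace.single j (1:ℝ) : R3) := by
    ext i
    simp [Fin.sum_univ_three]
    fin_cases i <;> simp
  conv_rhs => rw [hv]
  rw [map_sum]
  simp only [map_smul, smul_eq_mul, pd]

lemma pressure_deriv (hP : Sm P) {H η : R3 → ℝ} (k : Ker H η) {f : R3 → ℝ} (hf : Continuous f)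
    (hfc : HasCompactSupport f) (s : ℝ) :
    HasDerivAt (fun s => ∫ x, f x * Av η P s x) (∫ x, f x * Bk H P s x) s := by
  have cη := ContDiff.continuous k.sη
  have cP := ContDiff.continuous hP
  have cpd : ∀ i, Continuous (pd P i) := fun i => ContDiff.continuous (hP.pd i)
  have cw : Continuous (fun y : R3 × R3 => f y.1 * η y.2) := by fun_prop
  have sw : HasCompactSupport (fun y : R3 × R3 => f y.1 * η y.2) := by
    apply HasCompactSupport.intro (hfc.isCompact.prod k.cη.isCompact)
    rintro ⟨x, z⟩ hxz
    simp only [Set.mem_prod, not_and_or] at hxz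
    rcases hxz with h | h
    · simp [image_eq_zero_of_notMem_tsupport h]
    · simp [image_eq_zero_of_notMem_tsupport h]
  have key := hasDerivAt_weight ((volume : Measure R3).prod volume) cw sw
    (Q := fun s y => P (y.1 - s • y.2))
    (Q' := fun s y => ∑ i, (-y.2) i * pd P i (y.1 - s • y.2))
    (by unfold Function.uncurry; fun_prop) (by unfold Function.uncurry; fun_prop)
    (fun s y => by
      refine curve_deriv hP (γ := fun s => y.1 - s • y.2) (γ' := fun _ => -y.2) ?_
      simpa using ((hasDerivAt_id s).smul_const y.2).const_sub y.1) s
  have e1 : ∀ s, ∫ y, f y.1 * η y.2 * P (y.1 - s • y.2) ∂((volume : Measure R3).prod volume)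
      = ∫ x, f x * Av η P s x := by
    intro s
    rw [integral_prod]
    · unfold Av
      simp only [mul_assoc]
      simp_rw [integral_const_mul]
    · refine Continuous.integrable_of_hasCompactSupport (by fun_prop) sw.mul_right
  have e2 : ∫ y, f y.1 * η y.2 * (∑ i, (-y.2) i * pd P i (y.1 - s • y.2)) ∂((volume : Measure R3).prod volume)
      = ∫ x, f x * Bk H P s x := by
    rw [integral_prod]
    · unfold Bk
      congr 1; ext x
      simp only [mul_assoc]
      rw [integral_const_mul, ← integral_finsetSum _ fun i _ => int_wg (ContDiff.continuous (k.sH.pd i))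
        (pd_compact k.cH i) (cpd i) x s]
      congr 2; ext z
      rw [Finset.mul_sum]
      refine Finset.sum_congr rfl fun i _ => ?_
      rw [k.pot]; simp; ring
    · refine Continuous.integrable_of_hasCompactSupport (by fun_prop) sw.mul_right
  rw [e2] at key
  simpa only [e1] using key

lemma Av_zero {H η : R3 → ℝ} (k : Ker H η) (x : R3) : Av η P 0 x = P x := by
  unfold Av
  simp only [zero_smul, sub_zero]
  rw [integral_mul_const, k.one, one_mul]

/-- derivative of the averaged pressure along curves -/
lemma Av_curve (hP : Sm P) {H η : R3 → ℝ} (k : Ker H η) {γ γ' : ℝ → R3} (cγ : Continuous γ)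
    (cγ' : Continuous γ') (hγ : ∀ t, HasDerivAt γ (γ' t) t) (s t : ℝ) :
    HasDerivAt (fun t => Av η P s (γ t)) (∑ i, γ' t i * ∫ z, η z * pd P i (γ t - s • z)) t := by
  have cη := ContDiff.continuous k.sη
  have cP := ContDiff.continuous hP
  have cpd : ∀ i, Continuous (pd P i) := fun i => ContDiff.continuous (hP.pd i)
  have key := hasDerivAt_weight (volume : Measure R3) cη k.cη
    (Q := fun t z => P (γ t - s • z))
    (Q' := fun t z => ∑ i, γ' t i * pd P i (γ t - s • z))
    (by unfold Function.uncurry; fun_prop) (by unfold Function.uncurry; fun_prop)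
    (fun t z => by
      exact curve_deriv hP (γ := fun t => γ t - s • z) (γ' := γ') ((hγ t).sub_const _)) t
  unfold Av
  convert key using 1
  have : ∀ z, η z * ∑ i, γ' t i * pd P i (γ t - s • z) = ∑ i, γ' t i * (η z * pd P i (γ t - s • z)) :=
    fun z => by
      rw [Finset.mul_sum]; exact Finset.sum_congr rfl fun i _ => by ring
  simp_rw [this]
  rw [integral_finsetSum _ fun i _ => (int_wg cη k.cη (cpd i) (γ t) s).const_mul _]
  simp_rw [integral_const_mul]

/-- bound of the averaged gradient -/
lemma Sys.Av_grad (h : Sys U V P T) {H η : R3 → ℝ} (k : Ker H η) {c : ℝ}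
    (hc1 : ∀ j z, |pd η j z| ≤ c) (hc2 : ∀ i j z, |pd (pd η i) j z| ≤ c) {s : ℝ} (s0 : 0 < s)
    (i : Fin 3) (x : R3) :
    |∫ z, η z * pd P i (x - s • z)| ≤ 3 * c * (s ^ 2)⁻¹ * bar (na U) s x
      + 6 * c * s⁻¹ * bar (e2 U V T) s x := by
  have cη := ContDiff.continuous k.sη
  have cN : ∀ j, Continuous (pd (Nt U V i j) j) := fun j => ContDiff.continuous ((h.sN i j).pd j)
  have cL : ∀ j, Continuous (pd (pd (U i) j) j) := fun j => ContDiff.continuous (((h.sU i).pd j).pd j)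
  have e1 : ∫ z, η z * pd P i (x - s • z) = (∑ j, ∫ z, η z * pd (pd (U i) j) j (x - s • z))
      - ∑ j, ∫ z, η z * pd (Nt U V i j) j (x - s • z) := by
    rw [← integral_finsetSum _ fun j _ => int_wg cη k.cη (cN j) x s,
      ← integral_finsetSum _ fun j _ => int_wg cη k.cη (cL j) x s,
      ← integral_sub (integrable_finsetSum _ fun j _ => int_wg cη k.cη (cL j) x s)
        (integrable_finsetSum _ fun j _ => int_wg cη k.cη (cN j) x s)]
    congr 1; ext z
    rw [h.gradP, mul_sub, Finset.mul_sum, lap, Finset.mul_sum]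
  have f1 : ∀ j, |∫ z, η z * pd (pd (U i) j) j (x - s • z)| ≤ c * (s ^ 2)⁻¹ * bar (na U) s x := by
    intro j
    have g1 := ibp_shift k.sη ((h.sU i).pd j) k.cη j x s
    have g2 := ibp_shift (k.sη.pd j) (h.sU i) (pd_compact k.cη j) j x s
    rw [← g1] at g2
    have := wbound (pd_off (pd_off k.zη j) j) (hc2 j j) (na_cont h.sU) (fun x => abs_le_na U i x) x s
    rw [← g2, abs_mul, abs_mul, abs_of_pos s0] at this
    rw [show c * (s ^ 2)⁻¹ * bar (na U) s x = (c * bar (na U) s x) / (s ^ 2) by field_simp,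
      le_div_iff₀ (by positivity)]
    linarith
  have f2 : ∀ j, |∫ z, η z * pd (Nt U V i j) j (x - s • z)| ≤ 2 * c * s⁻¹ * bar (e2 U V T) s x := by
    intro j
    have h1 := ibp_shift k.sη (h.sN i j) k.cη j x s
    have := wbound (pd_off k.zη j) (hc1 j) ((ContDiff.continuous h.sE).const_smul (2:ℝ))
      (fun x => Nt_le i j x) x s
    rw [← h1, abs_mul, abs_of_pos s0] at this
    have e3 : bar ((2:ℝ) • e2 U V T) s x = 2 * bar (e2 U V T) s x := by
      unfold bar
      simp only [Pi.smul_apply, smul_eq_mul]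
      rw [integral_const_mul]
    have e4 : c * bar ((2:ℝ) • e2 U V T) s x = 2 * c * bar (e2 U V T) s x := by rw [e3]; ring
    rw [show 2 * c * s⁻¹ * bar (e2 U V T) s x = (2 * c * bar (e2 U V T) s x) / s by
      field_simp, le_div_iff₀ s0]
    rw [← e4]; linarith
  rw [e1]
  refine (abs_sub _ _).trans ?_
  have g1 := (Finset.abs_sum_le_sum_abs (fun j => ∫ z, η z * pd (pd (U i) j) j (x - s • z))
    Finset.univ).trans (Finset.sum_le_sum fun j _ => f1 j)
  have g2 := (Finset.abs_sum_le_sum_abs (fun j => ∫ z, η z * pd (Nt U V i j) j (x - s • z))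
    Finset.univ).trans (Finset.sum_le_sum fun j _ => f2 j)
  simp at g1 g2
  linarith

end


/-! ### Part H: oscillation and pressure estimate -/

lemma exists_orth (x : R3) {a : ℝ} (ha : 0 < a) : ∃ z : R3, ‖z‖ = a ∧ inner ℝ x z = 0 ∧
    inner ℝ z (EuclideanSpace.single 0 a : R3) = 0 := by
  have key : ∃ v : R3, v ≠ 0 ∧ inner ℝ x v = 0 ∧ v 0 = 0 := by
    by_cases h : x 1 = 0
    · refine ⟨EuclideanSpace.single 1 1, ?_, ?_, ?_⟩
      · intro hh
        have := congrArg (fun v : R3 => v 1) hh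
        simp at this
      · simp [EuclideanSpace.inner_single_right, h]
      · simp
    · refine ⟨!₂[0, x 2, - x 1], ?_, ?_, ?_⟩
      · intro hh
        have := congrArg (fun v : R3 => v 2) hh
        simp at this
        exact h this
      · simp [PiLp.inner_apply, Fin.sum_univ_three]; ring
      · simp
  obtain ⟨v, v0, h1, h2⟩ := key
  have nv : 0 < ‖v‖ := norm_pos_iff.2 v0
  refine ⟨(a / ‖v‖) • v, ?_, ?_, ?_⟩
  · rw [norm_smul, Real.norm_eq_abs, abs_of_pos (by positivity)]; field_simp
  · rw [inner_smul_right, h1, mul_zero]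
  · rw [inner_smul_left, EuclideanSpace.inner_single_right]; simp [h2]

lemma arc_norm {x z : R3} {a : ℝ} (ha : 0 ≤ a) (hx : ‖x‖ = a) (hz : ‖z‖ = a) (hi : inner ℝ x z = 0)
    {c s : ℝ} (hcs : c ^ 2 + s ^ 2 = 1) : ‖c • x + s • z‖ = a := by
  have : ‖c • x + s • z‖ ^ 2 = a ^ 2 := by
    rw [norm_add_sq_real, inner_smul_left, inner_smul_right, hi, norm_smul, norm_smul, hx, hz,
      mul_pow, mul_pow, Real.norm_eq_abs, Real.norm_eq_abs, sq_abs, sq_abs]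
    simp; rw [← add_mul, hcs, one_mul]
  exact (pow_left_inj₀ (norm_nonneg _) ha two_ne_zero).1 this

section
variable {P : R3 → ℝ}

lemma Av_path (hP : Sm P) {H η : R3 → ℝ} (k : Ker H η) {γ γ' : ℝ → R3} (cγ : Continuous γ)
    (cγ' : Continuous γ') (hγ : ∀ t, HasDerivAt γ (γ' t) t) {s L l t1 : ℝ} (ht : 0 ≤ t1) {S : Set R3}
    (hL : ∀ x ∈ S, ∀ i, |∫ z, η z * pd P i (x - s • z)| ≤ L) (hS : ∀ t ∈ Set.Icc 0 t1, γ t ∈ S)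
    (hl : ∀ t ∈ Set.Icc 0 t1, ‖γ' t‖ ≤ l) :
    |Av η P s (γ t1) - Av η P s (γ 0)| ≤ 3 * L * l * t1 := by
  have := Convex.norm_image_sub_le_of_norm_hasDerivWithin_le (s := Set.Icc 0 t1) (C := 3 * L * l)
    (f := fun t => Av η P s (γ t)) (x := 0) (y := t1)
    (fun t _ => (Av_curve hP k cγ cγ' hγ s t).hasDerivWithinAt) (fun t htt => ?_)
    (convex_Icc 0 t1) ⟨le_rfl, ht⟩ ⟨ht, le_rfl⟩
  · simpa [abs_of_nonneg ht] using this
  · rw [Real.norm_eq_abs]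
    refine (Finset.abs_sum_le_sum_abs _ _).trans ?_
    have : ∀ i ∈ Finset.univ, |γ' t i * ∫ z, η z * pd P i (γ t - s • z)| ≤ l * L := fun i _ => by
      rw [abs_mul]
      exact mul_le_mul ((abs_coord_le _ i).trans (hl t htt)) (hL _ (hS t htt) i) (abs_nonneg _)
        ((norm_nonneg _).trans (hl t htt))
    refine (Finset.sum_le_sum this).trans ?_
    simp; linarith

lemma Av_arc (hP : Sm P) {H η : R3 → ℝ} (k : Ker H η) {x z : R3} {a : ℝ} (ha : 0 ≤ a) (hx : ‖x‖ = a)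
    (hz : ‖z‖ = a) (hi : inner ℝ x z = 0) {s L : ℝ} {S : Set R3} (hS : ∀ y, ‖y‖ = a → y ∈ S)
    (hL : ∀ x ∈ S, ∀ i, |∫ z, η z * pd P i (x - s • z)| ≤ L) :
    |Av η P s z - Av η P s x| ≤ 3 * L * a * 2 := by
  have L0 : 0 ≤ L := (abs_nonneg _).trans (hL x (hS x hx) 0)
  have := Av_path hP k (γ := fun t => Real.cos t • x + Real.sin t • z)
    (γ' := fun t => (-Real.sin t) • x + Real.cos t • z) (s := s) (L := L) (l := a) (t1 := Real.pi / 2) (S := S)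
    (by fun_prop) (by fun_prop)
    (fun t => ((Real.hasDerivAt_cos t).smul_const x).add ((Real.hasDerivAt_sin t).smul_const z))
    (by positivity) hL
    (fun t _ => hS _ (arc_norm ha hx hz hi (by rw [add_comm]; exact Real.sin_sq_add_cos_sq t)))
    (fun t _ => (arc_norm ha hx hz hi (by rw [neg_sq]; exact Real.sin_sq_add_cos_sq t)).le)
  simp at this
  refine this.trans ?_
  have := Real.pi_le_four
  apply mul_le_mul_of_nonneg_left _ (by positivity)
  linarith

lemma Av_osc (hP : Sm P) {H η : R3 → ℝ} (k : Ker H η) {a b : ℝ} (ha : 0 < a) {s L : ℝ}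
    (hL : ∀ x ∈ {x : R3 | a ≤ ‖x‖ ∧ ‖x‖ ≤ b}, ∀ i, |∫ z, η z * pd P i (x - s • z)| ≤ L)
    {x : R3} (hx : x ∈ {x : R3 | a ≤ ‖x‖ ∧ ‖x‖ ≤ b}) :
    |Av η P s x - Av η P s (EuclideanSpace.single 0 a)| ≤ 15 * b * L := by
  have nx : 0 < ‖x‖ := lt_of_lt_of_le ha hx.1
  have hab : a ≤ b := hx.1.trans hx.2
  have L0 : 0 ≤ L := (abs_nonneg _).trans (hL x hx 0)
  have hS : ∀ y : R3, ‖y‖ = a → y ∈ {x : R3 | a ≤ ‖x‖ ∧ ‖x‖ ≤ b} := fun y hy => by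
    simp [hy, hab]
  set x' : R3 := (a / ‖x‖) • x with hx'
  have nx' : ‖x'‖ = a := by
    rw [hx', norm_smul, Real.norm_eq_abs, abs_of_pos (by positivity)]; field_simp
  obtain ⟨z, nz, i1, i2⟩ := exists_orth x' ha
  have n0 : ‖(EuclideanSpace.single 0 a : R3)‖ = a := by simp [abs_of_pos ha]
  have h1 := Av_arc hP k ha.le nx' nz i1 hS hL
  have h2 := Av_arc hP k ha.le nz n0 i2 hS hL
  have h3 := Av_path hP k (γ := fun t => (1 + t * (a / ‖x‖ - 1)) • x)
    (γ' := fun _ => (a / ‖x‖ - 1) • x) (s := s) (L := L) (l := b) (t1 := 1)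
    (S := {x : R3 | a ≤ ‖x‖ ∧ ‖x‖ ≤ b})
    (by fun_prop) (by fun_prop)
    (fun t => by simpa using (((hasDerivAt_id t).mul_const (a / ‖x‖ - 1)).const_add 1).smul_const x)
    zero_le_one hL
    (fun t ht => by
      have e : ‖(1 + t * (a / ‖x‖ - 1)) • x‖ = (1 - t) * ‖x‖ + t * a := by
        have : 1 + t * (a / ‖x‖ - 1) = (1 - t) + t * (a / ‖x‖) := by ring
        rw [norm_smul, Real.norm_eq_abs, this, abs_of_nonneg (by
          have := ht.1; have := sub_nonneg.2 ht.2; positivity)]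
        field_simp
      simp only [Set.mem_setOf_eq, e]
      constructor <;> nlinarith [ht.1, ht.2, hx.1, hx.2])
    (fun t _ => by
      have e : a / ‖x‖ ≤ 1 := by rw [div_le_one nx]; exact hx.1
      rw [norm_smul, Real.norm_eq_abs, abs_of_nonpos (by linarith)]
      have : -(a / ‖x‖ - 1) * ‖x‖ = ‖x‖ - a := by field_simp; ring
      rw [this]; linarith [hx.2])
  have e1 : (1 + 1 * (a / ‖x‖ - 1)) • x = x' := by rw [hx']; congr 1; ring
  simp only [e1] at h3
  simp only [zero_mul, add_zero, one_smul] at h3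
  have hLab : L * a ≤ L * b := mul_le_mul_of_nonneg_left hab L0
  rw [abs_le] at *
  constructor <;> linarith [h1.1, h1.2, h2.1, h2.2, h3.1, h3.2]

end

/-- one-dimensional integration of the derivative bounds -/
lemma inc_le {F F' Φ Φ' : ℝ → ℝ} {a b : ℝ} (hab : a ≤ b) (hF : ∀ s, HasDerivAt F (F' s) s)
    (hΦc : ContinuousOn Φ (Set.Icc a b)) (hΦ : ∀ s ∈ Set.Ioo a b, HasDerivAt Φ (Φ' s) s)
    (hb : ∀ s ∈ Set.Ioo a b, |F' s| ≤ Φ' s) : |F b - F a| ≤ Φ b - Φ a := by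
  have cF : Continuous F := continuous_iff_continuousAt.2 fun s => (hF s).continuousAt
  have m1 : MonotoneOn (Φ - F) (Set.Icc a b) := by
    apply monotoneOn_of_deriv_nonneg (convex_Icc a b) (hΦc.sub cF.continuousOn)
    · intro s hs
      rw [interior_Icc] at hs
      exact ((hΦ s hs).sub (hF s)).differentiableAt.differentiableWithinAt
    · intro s hs
      rw [interior_Icc] at hs
      rw [((hΦ s hs).sub (hF s)).deriv]
      linarith [(abs_le.1 (hb s hs)).2]
  have m2 : MonotoneOn (Φ + F) (Set.Icc a b) := by
    apply monotoneOn_of_deriv_nonneg (convex_Icc a b) (hΦc.add cF.continuousOn)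
    · intro s hs
      rw [interior_Icc] at hs
      exact ((hΦ s hs).add (hF s)).differentiableAt.differentiableWithinAt
    · intro s hs
      rw [interior_Icc] at hs
      rw [((hΦ s hs).add (hF s)).deriv]
      linarith [(abs_le.1 (hb s hs)).1]
  have h1 := m1 ⟨le_rfl, hab⟩ ⟨hab, le_rfl⟩ hab
  have h2 := m2 ⟨le_rfl, hab⟩ ⟨hab, le_rfl⟩ hab
  simp at h1 h2
  rw [abs_le]; constructor <;> linarith

lemma time_int {F F' : ℝ → ℝ} {ε k E M d : ℝ} (e0 : 0 < ε) (e1 : ε < 1) (k0 : 0 ≤ k) (E0 : 0 ≤ E)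
    (M0 : 0 ≤ M) (d0 : 0 < d) (hF : ∀ s, HasDerivAt F (F' s) s)
    (b1 : ∀ s, 0 < s → s ≤ d → |F' s| ≤ k * M * s ^ (-ε))
    (b2 : ∀ s, 0 < s → s ≤ d → |F' s| ≤ k * E * s ^ (-ε - 1)) :
    |F d - F 0| ≤ (1 / (1 - ε) + 1 / ε) * k * (E ^ (1 - ε) * M ^ ε) := by
  have h1e : 0 < 1 - ε := by linarith
  have hR : 0 ≤ k * (E ^ (1 - ε) * M ^ ε) := by positivity
  have hR1 : 0 ≤ (1 / (1 - ε)) * (k * (E ^ (1 - ε) * M ^ ε)) := by positivity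
  have hR2 : 0 ≤ (1 / ε) * (k * (E ^ (1 - ε) * M ^ ε)) := by positivity
  have zero : (∀ s, 0 < s → s ≤ d → |F' s| ≤ 0) → |F d - F 0| ≤ (1 / (1 - ε) + 1 / ε) * k * (E ^ (1 - ε) * M ^ ε) := by
    intro hz
    have := inc_le (Φ := fun _ => 0) (Φ' := fun _ => 0) d0.le hF continuousOn_const
      (fun s _ => hasDerivAt_const s 0) (fun s hs => hz s hs.1 hs.2.le)
    refine this.trans ?_
    simp only [sub_zero]
    have := e0.le
    positivity
  rcases M0.eq_or_lt with hM | hM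
  · exact zero fun s hs hsd => by simpa [← hM] using b1 s hs hsd
  rcases E0.eq_or_lt with hE | hE
  · exact zero fun s hs hsd => by simpa [← hE] using b2 s hs hsd
  have first : ∀ δ, 0 < δ → δ ≤ d → δ ≤ E / M → |F δ - F 0| ≤ (1 / (1 - ε)) * (k * (E ^ (1 - ε) * M ^ ε)) := by
    intro δ hδ hδd hδE
    have := inc_le (a := 0) (b := δ) (Φ := fun s => k * M * (s ^ (1 - ε) / (1 - ε)))
      (Φ' := fun s => k * M * s ^ (-ε)) hδ.le hF
      (by
        apply ContinuousOn.mul continuousOn_const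
        apply ContinuousOn.div_const
        exact (Real.continuous_rpow_const h1e.le).continuousOn)
      (fun s hs => by
        have := ((Real.hasDerivAt_rpow_const (x := s) (p := 1 - ε) (Or.inl hs.1.ne')).div_const (1 - ε)).const_mul (k * M)
        refine this.congr_deriv ?_
        rw [show (1 - ε) - 1 = -ε by ring]; field_simp)
      (fun s hs => b1 s hs.1 (hs.2.le.trans hδd))
    refine this.trans ?_
    simp only [Real.zero_rpow h1e.ne', zero_div, mul_zero, sub_zero]
    have h3 : δ ^ (1 - ε) ≤ E ^ (1 - ε) / M ^ (1 - ε) := by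
      rw [← Real.div_rpow E0 M0]; exact Real.rpow_le_rpow hδ.le hδE h1e.le
    have h4 : M ^ ε * M ^ (1 - ε) = M := by rw [← Real.rpow_add hM]; simp
    have h5 : M * δ ^ (1 - ε) ≤ E ^ (1 - ε) * M ^ ε := by
      calc M * δ ^ (1 - ε) ≤ M * (E ^ (1 - ε) / M ^ (1 - ε)) := by gcongr
        _ = E ^ (1 - ε) * M ^ ε := by
          have : 0 < M ^ (1 - ε) := by positivity
          field_simp; linarith
    calc k * M * (δ ^ (1 - ε) / (1 - ε)) = (1 / (1 - ε)) * (k * (M * δ ^ (1 - ε))) := by ring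
      _ ≤ _ := by gcongr
  by_cases hc : d ≤ E / M
  · have := first d d0 le_rfl hc
    linarith [this]
  push Not at hc
  have δ0 : 0 < E / M := by positivity
  have f1 := first (E / M) δ0 hc.le le_rfl
  set δ := E / M with hδ
  have f2 : |F d - F δ| ≤ (1 / ε) * (k * (E ^ (1 - ε) * M ^ ε)) := by
    have := inc_le (a := δ) (b := d) (Φ := fun s => k * E * (-(s ^ (-ε)) / ε))
      (Φ' := fun s => k * E * s ^ (-ε - 1)) hc.le hF
      (by
        apply ContinuousOn.mul continuousOn_const
        apply ContinuousOn.div_const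
        apply ContinuousOn.neg
        intro s hs
        exact (Real.continuousAt_rpow_const s _ (Or.inl (lt_of_lt_of_le δ0 hs.1).ne')).continuousWithinAt)
      (fun s hs => by
        have := (((Real.hasDerivAt_rpow_const (x := s) (p := -ε) (Or.inl (δ0.trans hs.1).ne')).neg).div_const ε).const_mul (k * E)
        refine this.congr_deriv ?_
        field_simp)
      (fun s hs => b2 s (δ0.trans hs.1) hs.2.le)
    refine this.trans ?_
    have h3 : E * δ ^ (-ε) = E ^ (1 - ε) * M ^ ε := by
      rw [hδ, Real.div_rpow E0 M0, Real.rpow_neg M0, Real.rpow_sub hE, Real.rpow_neg E0, Real.rpow_one]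
      field_simp
    have h4 : 0 ≤ k * E * (d ^ (-ε) / ε) := by positivity
    have h5 : k * E * (-(δ ^ (-ε)) / ε) = -((1 / ε) * (k * (E * δ ^ (-ε)))) := by ring
    rw [h5, h3]
    have : k * E * (-d ^ (-ε) / ε) = -(k * E * (d ^ (-ε) / ε)) := by ring
    linarith
  have : |F d - F 0| ≤ |F d - F δ| + |F δ - F 0| := abs_sub_le _ _ _
  linarith


/-! ### Part I: the pressure estimate -/

def Shl (ρ τ : ℝ) : Set R3 := ball (0 : R3) τ \ ball 0 ρ

lemma Shl_meas (ρ τ : ℝ) : MeasurableSet (Shl ρ τ) := measurableSet_ball.diff measurableSet_ball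
lemma Shl_bdd (ρ τ : ℝ) : Bornology.IsBounded (Shl ρ τ) := isBounded_ball.subset Set.diff_subset

def NN (a : R3 → ℝ) (p ρ τ : ℝ) : ℝ := (∫ x in Shl ρ τ, a x ^ p) ^ (1 / p)

lemma NN_nonneg {a : R3 → ℝ} (a0 : ∀ x, 0 ≤ a x) (p ρ τ : ℝ) : 0 ≤ NN a p ρ τ :=
  Real.rpow_nonneg (integral_nonneg fun x => Real.rpow_nonneg (a0 x) _) _

def MM (U V : Fin 3 → R3 → ℝ) (T : R3 → ℝ) (ρ τ : ℝ) : ℝ :=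
  (∫ x in Shl ρ τ, D2 U V T x) + (∫ x in Shl ρ τ, e2 U V T x ^ 3) ^ (1 / 3 : ℝ)

def EE (U V : Fin 3 → R3 → ℝ) (T : R3 → ℝ) (ρ τ : ℝ) : ℝ :=
  (∫ x in Shl ρ τ, e2 U V T x ^ (3 / 2 : ℝ)) ^ (2 / 3 : ℝ)

section
variable {U V : Fin 3 → R3 → ℝ} {P T : R3 → ℝ}

lemma iD_nonneg (S : Set R3) : 0 ≤ ∫ x in S, D2 U V T x := integral_nonneg fun x => D2_nonneg _ _ _ x
lemma i3_nonneg (S : Set R3) : 0 ≤ ∫ x in S, e2 U V T x ^ 3 :=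
  integral_nonneg fun x => pow_nonneg (e2_nonneg _ _ _ x) 3
lemma i2_nonneg (S : Set R3) : 0 ≤ ∫ x in S, e2 U V T x := integral_nonneg fun x => e2_nonneg _ _ _ x

lemma MM_nonneg (ρ τ : ℝ) : 0 ≤ MM U V T ρ τ :=
  add_nonneg (iD_nonneg _) (Real.rpow_nonneg (i3_nonneg _) _)
lemma D_le_MM (ρ τ : ℝ) : (∫ x in Shl ρ τ, D2 U V T x) ≤ MM U V T ρ τ :=
  le_add_of_nonneg_right (Real.rpow_nonneg (i3_nonneg _) _)
lemma e3_le_MM (ρ τ : ℝ) : (∫ x in Shl ρ τ, e2 U V T x ^ 3) ^ (1 / 3 : ℝ) ≤ MM U V T ρ τ :=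
  le_add_of_nonneg_left (iD_nonneg _)
lemma EE_nonneg (ρ τ : ℝ) : 0 ≤ EE U V T ρ τ :=
  Real.rpow_nonneg (integral_nonneg fun x => Real.rpow_nonneg (e2_nonneg _ _ _ x) _) _

lemma shell_mem {ρ τ s : ℝ} (s0 : 0 < s) (hs : s ≤ (τ - ρ) / 6) {x z : R3}
    (hx : x ∈ {x : R3 | ρ + (τ - ρ) / 3 ≤ ‖x‖ ∧ ‖x‖ ≤ ρ + 2 * (τ - ρ) / 3}) (hz : z ∈ B1) :
    x - s • z ∈ Shl ρ τ := by
  have h1 : ‖s • z‖ ≤ s := by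
    rw [norm_smul, Real.norm_eq_abs, abs_of_pos s0]
    have : ‖z‖ ≤ 1 := by simpa [B1] using hz
    nlinarith
  have h2 := norm_sub_le x (s • z)
  have h3 := norm_sub_norm_le x (s • z)
  obtain ⟨hx1, hx2⟩ := hx
  refine ⟨?_, ?_⟩
  · simp only [mem_ball, dist_zero_right]; linarith
  · simp only [mem_ball, dist_zero_right, not_lt]; linarith

lemma he_norm (h : Sys U V P T) (ρ τ : ℝ) :
    (∫ y in Shl ρ τ, he U V T y ^ (3 / 2 : ℝ)) ^ (2 / 3 : ℝ) ≤ MM U V T ρ τ := by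
  have ce : Continuous (e2 U V T) := ContDiff.continuous h.sE
  have H := hold_th (Shl_meas ρ τ) (Shl_bdd ρ τ) (F := fun x => e2 U V T x ^ 3) (G := D2 U V T)
    (ce.pow 3) h.cD (fun x => pow_nonneg (e2_nonneg _ _ _ x) 3) (fun x => D2_nonneg _ _ _ x)
    (t := 1 / 4) (by norm_num) (by norm_num)
  have e : ∀ x, he U V T x ^ (3 / 2 : ℝ) = (e2 U V T x ^ 3) ^ (1 / 4 : ℝ) * D2 U V T x ^ (1 - 1 / 4 : ℝ) := by
    intro x
    have h1 := e2_nonneg U V T x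
    have h2 := D2_nonneg U V T x
    unfold he
    rw [Real.sqrt_eq_rpow, Real.sqrt_eq_rpow, Real.mul_rpow (by positivity) (by positivity),
      ← Real.rpow_mul h1, ← Real.rpow_mul h2, ← Real.rpow_natCast, ← Real.rpow_mul h1]
    norm_num
  simp_rw [e]
  set A := ∫ x in Shl ρ τ, e2 U V T x ^ 3 with hA
  set D := ∫ x in Shl ρ τ, D2 U V T x with hD
  have A0 : 0 ≤ A := i3_nonneg _
  have D0 : 0 ≤ D := iD_nonneg _
  have M0 := MM_nonneg (U := U) (V := V) (T := T) ρ τ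
  calc _ ≤ (A ^ (1 / 4 : ℝ) * D ^ (1 - 1 / 4 : ℝ)) ^ (2 / 3 : ℝ) := by
        refine Real.rpow_le_rpow (integral_nonneg fun x => ?_) H (by norm_num)
        have h1 := e2_nonneg U V T x
        have h2 := D2_nonneg U V T x
        positivity
    _ = (A ^ (1 / 3 : ℝ)) ^ (1 / 2 : ℝ) * D ^ (1 / 2 : ℝ) := by
        rw [Real.mul_rpow (by positivity) (by positivity), ← Real.rpow_mul A0, ← Real.rpow_mul D0,
          ← Real.rpow_mul A0]
        norm_num
    _ ≤ MM U V T ρ τ ^ (1 / 2 : ℝ) * MM U V T ρ τ ^ (1 / 2 : ℝ) := by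
        gcongr
        · exact e3_le_MM ρ τ
        · exact D_le_MM ρ τ
    _ = MM U V T ρ τ := by rw [← Real.sqrt_eq_rpow, Real.mul_self_sqrt M0]

lemma small_scale {p : ℝ} (hp1 : 3 / 2 < p) (hp2 : p < 3) {H η : R3 → ℝ} (k : Ker H η) :
    ∃ C : ℝ, 0 ≤ C ∧ ∀ {U V : Fin 3 → R3 → ℝ} {P T : R3 → ℝ} (_ : Sys U V P T) {ρ τ : ℝ}
    (_ : 0 < ρ) (_ : ρ < τ) {χ : R3 → ℝ} {c : ℝ} (_ : 0 ≤ c)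
    (_ : Cut χ {x : R3 | ρ + (τ - ρ) / 3 ≤ ‖x‖ ∧ ‖x‖ ≤ ρ + 2 * (τ - ρ) / 3} c ((τ - ρ) / 3)),
    |(∫ x, Gf χ U x * Av η P ((τ - ρ) / 6) x) - ∫ x, Gf χ U x * P x| ≤
      C * c * (τ - ρ)⁻¹ * (NN (na U) p ρ τ * (EE U V T ρ τ ^ (1 - (3 / p - 1)) * MM U V T ρ τ ^ (3 / p - 1))) := by
  obtain ⟨Cp, Cp0, hCp⟩ := pairing hp1 hp2
  obtain ⟨ck, ck0, -, -, -, kb1, kb2⟩ := exists_ker_bound k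
  have p0 : 0 < p := by linarith
  have e0 : 0 < 3 / p - 1 := by rw [sub_pos, lt_div_iff₀ p0]; linarith
  have e1 : 3 / p - 1 < 1 := by rw [sub_lt_iff_lt_add, div_lt_iff₀ p0]; linarith
  set ε := 3 / p - 1 with hε
  have e1' : 0 < 1 - ε := by linarith
  refine ⟨(1 / (1 - ε) + 1 / ε) * (3 * 3 * 36 * ck * Cp), by positivity, ?_⟩
  intro U V P T h ρ τ ρ0 hρτ χ c c0 hC
  set S : Set R3 := {x : R3 | ρ + (τ - ρ) / 3 ≤ ‖x‖ ∧ ‖x‖ ≤ ρ + 2 * (τ - ρ) / 3} with hSdef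
  have d0 : 0 < τ - ρ := by linarith
  have mS : MeasurableSet S :=
    (measurableSet_le measurable_const measurable_norm).inter (measurableSet_le measurable_norm measurable_const)
  have bS : Bornology.IsBounded S := by
    refine (isBounded_closedBall (x := (0:R3)) (r := ρ + 2 * (τ - ρ) / 3)).subset fun x hx => ?_
    simpa using hx.2
  have SSh : S ⊆ Shl ρ τ := fun x hx => by
    refine ⟨?_, ?_⟩
    · simp only [mem_ball, dist_zero_right]; linarith [hx.2]
    · simp only [mem_ball, dist_zero_right, not_lt]; linarith [hx.1]
  set d := (τ - ρ) / 6 with hd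
  have ca := na_cont h.sU
  have ce : Continuous (e2 U V T) := ContDiff.continuous h.sE
  have a0 := na_nonneg U
  set N := NN (na U) p ρ τ with hN
  have N0 : 0 ≤ N := NN_nonneg a0 _ _ _
  have Nle : (∫ x in S, na U x ^ p) ^ (1 / p) ≤ N := by
    refine Real.rpow_le_rpow (integral_nonneg fun x => Real.rpow_nonneg (a0 x) _) ?_ (by positivity)
    exact setIntegral_mono_set (intS (Shl_bdd _ _) (ca.rpow_const fun x => Or.inr p0.le))
      (Eventually.of_forall fun x => Real.rpow_nonneg (a0 x) _) (HasSubset.Subset.eventuallyLE SSh)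
  have hF := pressure_deriv h.sP k (ContDiff.continuous (Gf_sm hC.sm h.sU)) (Gf_cpt hC.cpt U)
  set kk := 3 * 3 * 36 * ck * Cp * (c * (τ - ρ)⁻¹ * N) with hkk
  have kk0 : 0 ≤ kk := by positivity
  have cd : c / ((τ - ρ) / 3) = 3 * (c * (τ - ρ)⁻¹) := by field_simp
  have cd0 : 0 ≤ c * (τ - ρ)⁻¹ := by positivity
  have main : ∀ s, 0 < s → s ≤ d → ∀ (G : R3 → ℝ) (_ : Continuous G) (_ : ∀ x, 0 ≤ G x) (l : ℝ) (_ : 0 ≤ l)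
      (_ : ∀ x, |Bk H P s x| ≤ l * bar G s x),
      |∫ x, Gf χ U x * Bk H P s x| ≤ 3 * 3 * (c * (τ - ρ)⁻¹) * l * (Cp * s ^ (-ε) * N *
        (∫ y in Shl ρ τ, G y ^ (3 / 2 : ℝ)) ^ (2 / 3 : ℝ)) := by
    intro s s0 hs G cG G0 l l0 hl
    have h1 := int_bound mS bS (f := fun x => Gf χ U x * Bk H P s x)
      (g := fun x => 3 * 3 * (c * (τ - ρ)⁻¹) * l * (na U x * bar G s x))
      (continuous_const.mul (ca.mul (bar_cont cG s)))
      (fun x hx => by rw [Gf_zero hC U hx, zero_mul])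
      (fun x => by
        rw [abs_mul]
        have := mul_le_mul (Gf_bound hC U x) (hl x) (abs_nonneg _) (by rw [cd]; have := a0 x; positivity)
        rw [cd] at this
        linarith)
    refine h1.trans ?_
    rw [integral_const_mul]
    refine mul_le_mul_of_nonneg_left ?_ (by positivity)
    refine (hCp ca a0 cG G0 mS bS (Shl_meas ρ τ) (Shl_bdd ρ τ) s0 (fun x hx z hz => shell_mem s0 hs hx hz)).trans ?_
    have : 0 ≤ (∫ y in Shl ρ τ, G y ^ (3 / 2 : ℝ)) ^ (2 / 3 : ℝ) :=
      Real.rpow_nonneg (integral_nonneg fun x => Real.rpow_nonneg (G0 x) _) _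
    gcongr
  have T1 := time_int (F := fun s => ∫ x, Gf χ U x * Av η P s x) (d := d) (E := EE U V T ρ τ)
    (M := MM U V T ρ τ) e0 e1 kk0
    (EE_nonneg ρ τ) (MM_nonneg ρ τ) (by positivity) hF
    (fun s s0 hs => by
      have := main s s0 hs _ h.che he_nonneg (36 * ck) (by positivity) (h.Bk_le1 k kb1 s)
      refine this.trans ?_
      have hn := he_norm h ρ τ
      calc _ ≤ 3 * 3 * (c * (τ - ρ)⁻¹) * (36 * ck) * (Cp * s ^ (-ε) * N * MM U V T ρ τ) := by gcongr
        _ = _ := by rw [hkk]; ring)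
    (fun s s0 hs => by
      have := main s s0 hs _ ce (e2_nonneg U V T) (18 * ck * s⁻¹) (by positivity) (h.Bk_le2 k kb2 s0)
      refine this.trans ?_
      have E0 := EE_nonneg (U := U) (V := V) (T := T) ρ τ
      have : s ^ (-ε - 1) = s ^ (-ε) * s⁻¹ := by rw [Real.rpow_sub s0, Real.rpow_one]; rfl
      rw [this]
      change _ * (_ * EE U V T ρ τ) ≤ _
      calc _ = 3 * 3 * 18 * ck * Cp * (c * (τ - ρ)⁻¹ * N) * EE U V T ρ τ * (s ^ (-ε) * s⁻¹) := by ring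
        _ ≤ kk * EE U V T ρ τ * (s ^ (-ε) * s⁻¹) := by rw [hkk]; gcongr; norm_num)
  have hz : ∀ x, Av η P 0 x = P x := Av_zero k
  simp only [hz] at T1
  refine T1.trans (le_of_eq ?_)
  rw [hkk]; ring
end


/-! ### Part J: oscillation part and the main inequality -/

lemma int_Gf_zero {U V : Fin 3 → R3 → ℝ} {P T : R3 → ℝ} (h : Sys U V P T) {χ : R3 → ℝ} (hχ : Sm χ)
    (hc : HasCompactSupport χ) : ∫ x, Gf χ U x = 0 := by
  have cχ : Continuous χ := ContDiff.continuous hχ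
  have i1 : ∀ j, Integrable (fun x => pd χ j x * U j x) := fun j =>
    ((ContDiff.continuous (hχ.pd j)).mul (ContDiff.continuous (h.sU j))).integrable_of_hasCompactSupport
      (pd_compact hc j).mul_right
  have i2 : ∀ j, Integrable (fun x => χ x * pd (U j) j x) := fun j =>
    (cχ.mul (ContDiff.continuous ((h.sU j).pd j))).integrable_of_hasCompactSupport hc.mul_right
  unfold Gf
  rw [integral_finset_sum _ fun j _ => i1 j]
  have e : ∀ j, ∫ x, pd χ j x * U j x = - ∫ x, χ x * pd (U j) j x := fun j => by
    rw [ibp hχ (h.sU j) hc j, neg_neg]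
  simp_rw [e]
  rw [Finset.sum_neg_distrib, ← integral_finset_sum _ fun j _ => i2 j]
  simp_rw [← Finset.mul_sum, h.dU]
  simp

lemma vol_le : ∃ Cv : ℝ, 0 < Cv ∧ ∀ {ρ τ R : ℝ}, 0 < R → τ ≤ 2 * R →
    volume.real (Shl ρ τ) ≤ Cv * R ^ 3 := by
  have hb : 0 < volume.real (ball (0 : R3) 1) :=
    ENNReal.toReal_pos (measure_ball_pos volume _ one_pos).ne' measure_ball_lt_top.ne
  refine ⟨8 * volume.real (ball (0 : R3) 1), by positivity, fun {ρ τ R} R0 h => ?_⟩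
  have h1 : volume.real (Shl ρ τ) ≤ volume.real (ball (0 : R3) (2 * R)) :=
    measureReal_mono (Set.diff_subset.trans (ball_subset_ball h)) measure_ball_lt_top.ne
  refine h1.trans (le_of_eq ?_)
  have := Measure.addHaar_ball (volume : Measure R3) 0 (r := 2 * R) (by positivity)
  rw [Measure.real, this, ENNReal.toReal_mul, ENNReal.toReal_ofReal (by positivity), Measure.real]
  simp
  ring

lemma hold_one {S : Set R3} (hS : MeasurableSet S) (hb : Bornology.IsBounded S) {F : R3 → ℝ} (hF : Continuous F)
    (F0 : ∀ x, 0 ≤ F x) {p q : ℝ} (h : p.HolderConjugate q) :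
    ∫ x in S, F x ≤ (∫ x in S, F x ^ p) ^ (1 / p) * volume.real S ^ (1 / q) := by
  have := hold hS hb hF (G := fun _ => 1) continuous_const F0 (fun _ => zero_le_one) h
  simpa using this

section
variable {U V : Fin 3 → R3 → ℝ} {P T : R3 → ℝ}

lemma conj_p {p : ℝ} (hp1 : 3 / 2 < p) : p.HolderConjugate (p / (p - 1)) := by
  rw [Real.holderConjugate_iff]
  have : 0 < p - 1 := by linarith
  have : 0 < p := by linarith
  refine ⟨by linarith, ?_⟩
  field_simp; ring

lemma e2_pp (h : Sys U V P T) {p : ℝ} (hp1 : 3 / 2 < p) (hp2 : p < 3) (ρ τ : ℝ) :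
    (∫ x in Shl ρ τ, e2 U V T x ^ (p / (p - 1))) ^ (1 / (p / (p - 1))) ≤
      EE U V T ρ τ ^ (1 - (3 / p - 1)) * MM U V T ρ τ ^ (3 / p - 1) := by
  have ce : Continuous (e2 U V T) := ContDiff.continuous h.sE
  have p0 : 0 < p := by linarith
  have p1 : 0 < p - 1 := by linarith
  have e0 : 0 < 3 / p - 1 := by rw [sub_pos, lt_div_iff₀ p0]; linarith
  have e1 : 0 < 1 - (3 / p - 1) := by rw [sub_pos, sub_lt_iff_lt_add, div_lt_iff₀ p0]; linarith
  set q := p / (p - 1) with hq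
  have q0 : 0 < q := by positivity
  set t := q * (1 - (3 / p - 1)) * (2 / 3) with ht
  have t1 : 1 - t = q * (3 / p - 1) / 3 := by
    rw [ht, hq]; field_simp; ring
  have t0 : 0 < t := by positivity
  have t1' : 0 < 1 - t := by rw [t1]; positivity
  have H := hold_th (Shl_meas ρ τ) (Shl_bdd ρ τ) (F := fun x => e2 U V T x ^ (3 / 2 : ℝ))
    (G := fun x => e2 U V T x ^ 3) (ce.rpow_const fun x => Or.inr (by norm_num)) (ce.pow 3)
    (fun x => Real.rpow_nonneg (e2_nonneg _ _ _ x) _)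
    (fun x => pow_nonneg (e2_nonneg _ _ _ x) 3) t0 (by linarith)
  have e : ∀ x, e2 U V T x ^ q = (e2 U V T x ^ (3 / 2 : ℝ)) ^ t * (e2 U V T x ^ 3) ^ (1 - t) := by
    intro x
    have h1 := e2_nonneg U V T x
    rw [← Real.rpow_natCast, ← Real.rpow_mul h1, ← Real.rpow_mul h1,
      ← Real.rpow_add_of_nonneg h1 (by positivity) (by positivity)]
    congr 1
    rw [t1, ht]; push_cast; ring
  simp_rw [e]
  set A := ∫ x in Shl ρ τ, e2 U V T x ^ 3 with hA
  have A0 : 0 ≤ A := i3_nonneg _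
  have M0 := MM_nonneg (U := U) (V := V) (T := T) ρ τ
  set B := ∫ x in Shl ρ τ, e2 U V T x ^ (3 / 2 : ℝ) with hB
  have B0 : 0 ≤ B := integral_nonneg fun x => Real.rpow_nonneg (e2_nonneg _ _ _ x) _
  have hE : EE U V T ρ τ = B ^ (2 / 3 : ℝ) := rfl
  calc _ ≤ (B ^ t * A ^ (1 - t)) ^ (1 / q) := by
        refine Real.rpow_le_rpow (integral_nonneg fun x => ?_) H (by positivity)
        have h1 := e2_nonneg U V T x
        positivity
    _ = EE U V T ρ τ ^ (1 - (3 / p - 1)) * (A ^ (1 / 3 : ℝ)) ^ (3 / p - 1) := by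
        rw [Real.mul_rpow (by positivity) (by positivity), hE, ← Real.rpow_mul A0, ← Real.rpow_mul B0,
          ← Real.rpow_mul A0, ← Real.rpow_mul B0, t1, ht]
        congr 2
        · field_simp
        · field_simp
    _ ≤ _ := by
        gcongr
        · exact Real.rpow_nonneg (EE_nonneg _ _) _
        · exact e3_le_MM ρ τ

lemma na_sq_le (x : R3) : na U x ^ 2 ≤ e2 U V T x := by
  rw [e2_eq]; nlinarith [sq_nonneg (na V x), sq_nonneg (|T x|)]

lemma osc_est {p : ℝ} (hp1 : 3 / 2 < p) (hp2 : p < 3) {H η : R3 → ℝ} (k : Ker H η) :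
    ∃ C : ℝ, 0 ≤ C ∧ ∀ {U V : Fin 3 → R3 → ℝ} {P T : R3 → ℝ} (_ : Sys U V P T) {ρ τ R : ℝ}
    (_ : 0 < R) (_ : R ≤ ρ) (_ : ρ < τ) (_ : τ ≤ 2 * R) {χ : R3 → ℝ} {c : ℝ} (_ : 0 ≤ c)
    (_ : Cut χ {x : R3 | ρ + (τ - ρ) / 3 ≤ ‖x‖ ∧ ‖x‖ ≤ ρ + 2 * (τ - ρ) / 3} c ((τ - ρ) / 3)),
    |∫ x, Gf χ U x * Av η P ((τ - ρ) / 6) x| ≤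
      C * c * (R / (τ - ρ)) ^ 4 * ((τ - ρ)⁻¹ ^ 2 * (∫ x in Shl ρ τ, e2 U V T x) +
        (τ - ρ)⁻¹ * (NN (na U) p ρ τ * (EE U V T ρ τ ^ (1 - (3 / p - 1)) * MM U V T ρ τ ^ (3 / p - 1)))) := by
  obtain ⟨ck, ck0, -, kb1, kb2, -, -⟩ := exists_ker_bound k
  obtain ⟨Cv, Cv0, hCv⟩ := vol_le
  have p0 : 0 < p := by linarith
  refine ⟨9 * 30 * (3 * 6 ^ 5 * ck + 6 * 6 ^ 4 * ck) * Cv, by positivity, ?_⟩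
  intro U V P T h ρ τ R R0 hRρ hρτ hτR χ c c0 hC
  set S : Set R3 := {x : R3 | ρ + (τ - ρ) / 3 ≤ ‖x‖ ∧ ‖x‖ ≤ ρ + 2 * (τ - ρ) / 3} with hSdef
  have d0 : 0 < τ - ρ := by linarith
  have mS : MeasurableSet S :=
    (measurableSet_le measurable_const measurable_norm).inter (measurableSet_le measurable_norm measurable_const)
  have bS : Bornology.IsBounded S := by
    refine (isBounded_closedBall (x := (0:R3)) (r := ρ + 2 * (τ - ρ) / 3)).subset fun x hx => ?_
    simpa using hx.2
  have SSh : S ⊆ Shl ρ τ := fun x hx => by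
    refine ⟨?_, ?_⟩
    · simp only [mem_ball, dist_zero_right]; linarith [hx.2]
    · simp only [mem_ball, dist_zero_right, not_lt]; linarith [hx.1]
  have ca := na_cont h.sU
  have ce : Continuous (e2 U V T) := ContDiff.continuous h.sE
  have a0 := na_nonneg U
  have mSh := Shl_meas ρ τ
  have bSh := Shl_bdd ρ τ
  set Ia := ∫ x in Shl ρ τ, na U x with hIa
  set Ie := ∫ x in Shl ρ τ, e2 U V T x with hIe
  have Ia0 : 0 ≤ Ia := integral_nonneg a0
  have Ie0 : 0 ≤ Ie := i2_nonneg _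
  set v := volume.real (Shl ρ τ) with hv
  have v0 : 0 ≤ v := measureReal_nonneg
  have vle : v ≤ Cv * R ^ 3 := hCv R0 hτR
  -- Cauchy-Schwarz
  have cs : Ia ^ 2 ≤ v * Ie := by
    have h1 := hold_one mSh bSh ca a0 (p := 2) (q := 2) (by rw [Real.holderConjugate_iff]; norm_num)
    have h2 : ∫ x in Shl ρ τ, na U x ^ (2 : ℝ) ≤ Ie := by
      apply integral_mono (intS bSh (ca.rpow_const fun x => Or.inr (by norm_num))) (intS bSh ce)
      intro x
      simpa using na_sq_le (U := U) (V := V) (T := T) x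
    have h3 : 0 ≤ ∫ x in Shl ρ τ, na U x ^ (2 : ℝ) := integral_nonneg fun x => Real.rpow_nonneg (a0 x) _
    rw [← Real.sqrt_eq_rpow, ← Real.sqrt_eq_rpow, ← Real.sqrt_mul h3] at h1
    have h4 := pow_le_pow_left₀ Ia0 h1 2
    rw [Real.sq_sqrt (by positivity)] at h4
    refine h4.trans ?_
    rw [mul_comm]
    gcongr
  set N := NN (na U) p ρ τ with hN
  have N0 : 0 ≤ N := NN_nonneg a0 _ _ _
  set X := EE U V T ρ τ ^ (1 - (3 / p - 1)) * MM U V T ρ τ ^ (3 / p - 1) with hX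
  have X0 : 0 ≤ X := mul_nonneg (Real.rpow_nonneg (EE_nonneg _ _) _) (Real.rpow_nonneg (MM_nonneg _ _) _)
  have cross : Ia * Ie ≤ v * (N * X) := by
    have hc := conj_p hp1
    have h1 := hold_one mSh bSh ca a0 hc
    have h2 := hold_one mSh bSh ce (e2_nonneg U V T) hc.symm
    have h3 := e2_pp h hp1 hp2 ρ τ
    have h4 : v ^ (1 / (p / (p - 1))) * v ^ (1 / p) = v := by
      rw [← Real.rpow_add_of_nonneg v0]
      · have := hc.inv_add_inv_eq_one
        rw [one_div, one_div, add_comm, this, Real.rpow_one]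
      · have := hc.symm.pos; positivity
      · positivity
    calc Ia * Ie ≤ (N * v ^ (1 / (p / (p - 1)))) * (X * v ^ (1 / p)) := by
          refine mul_le_mul h1 (h2.trans ?_) Ie0 (by positivity)
          gcongr
      _ = (v ^ (1 / (p / (p - 1))) * v ^ (1 / p)) * (N * X) := by ring
      _ = _ := by rw [h4]
  -- pointwise gradient bound
  set s := (τ - ρ) / 6 with hs
  have s0 : 0 < s := by positivity
  set L := 3 * ck * (s ^ 2)⁻¹ * ((s ^ 3)⁻¹ * Ia) + 6 * ck * s⁻¹ * ((s ^ 3)⁻¹ * Ie) with hL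
  have L0 : 0 ≤ L := by positivity
  have hLb : ∀ x ∈ S, ∀ i, |∫ z, η z * pd P i (x - s • z)| ≤ L := by
    intro x hx i
    refine (h.Av_grad k kb1 kb2 s0 i x).trans ?_
    have m1 := bar_le ca a0 mSh bSh s0 (x := x) (fun z hz => shell_mem s0 le_rfl hx hz)
    have m2 := bar_le ce (e2_nonneg U V T) mSh bSh s0 (x := x) (fun z hz => shell_mem s0 le_rfl hx hz)
    rw [hL]; gcongr
  have osc : ∀ x ∈ S, |Av η P s x - Av η P s (EuclideanSpace.single 0 (ρ + (τ - ρ) / 3))| ≤ 30 * R * L := by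
    intro x hx
    have := Av_osc h.sP k (a := ρ + (τ - ρ) / 3) (b := ρ + 2 * (τ - ρ) / 3) (by linarith) hLb hx
    refine this.trans ?_
    have : 15 * (ρ + 2 * (τ - ρ) / 3) ≤ 30 * R := by linarith
    gcongr
  set A0 := Av η P s (EuclideanSpace.single 0 (ρ + (τ - ρ) / 3)) with hA0
  have cGf : Continuous (Gf χ U) := ContDiff.continuous (Gf_sm hC.sm h.sU)
  have cAv : Continuous (Av η P s) := by
    unfold Av
    have cη := ContDiff.continuous k.sη
    have cP := ContDiff.continuous h.sP
    have : (fun x => ∫ z, η z * P (x - s • z)) = fun x => ∫ z in B1, η z * P (x - s • z) := by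
      ext x
      exact (setIntegral_eq_integral_of_forall_compl_eq_zero fun z hz => by rw [k.zη z hz, zero_mul]).symm
    rw [this]
    exact continuous_parametric_integral_of_continuous (f := fun x z => η z * P (x - s • z))
      (by unfold Function.uncurry; fun_prop) B1_cpt
  have eq : ∫ x, Gf χ U x * Av η P s x = ∫ x, Gf χ U x * (Av η P s x - A0) := by
    have i1 : Integrable (fun x => Gf χ U x * Av η P s x) :=
      (cGf.mul cAv).integrable_of_hasCompactSupport (Gf_cpt hC.cpt U).mul_right
    have i2 : Integrable (fun x => Gf χ U x * A0) :=
      (cGf.mul continuous_const).integrable_of_hasCompactSupport (Gf_cpt hC.cpt U).mul_right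
    simp_rw [mul_sub]
    rw [integral_sub i1 i2, integral_mul_const, int_Gf_zero h hC.sm hC.cpt]
    simp
  have cd : c / ((τ - ρ) / 3) = 3 * (c * (τ - ρ)⁻¹) := by field_simp
  have b1 : |∫ x, Gf χ U x * (Av η P s x - A0)| ≤ ∫ x in S, 9 * (c * (τ - ρ)⁻¹) * (30 * R * L) * na U x := by
    refine int_bound mS bS (by fun_prop) (fun x hx => by rw [Gf_zero hC U hx, zero_mul]) fun x => ?_
    have := a0 x
    by_cases hx : x ∈ S
    · rw [abs_mul]
      have := mul_le_mul (Gf_bound hC U x) (osc x hx) (abs_nonneg _) (by rw [cd]; positivity)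
      rw [cd] at this
      linarith
    · rw [Gf_zero hC U hx, zero_mul, abs_zero]; positivity
  rw [eq]
  refine b1.trans ?_
  rw [integral_const_mul]
  have Ile : ∫ x in S, na U x ≤ Ia := setIntegral_mono_set (intS bSh ca)
      (Eventually.of_forall a0) (HasSubset.Subset.eventuallyLE SSh)
  have sinv : s⁻¹ = 6 * (τ - ρ)⁻¹ := by rw [hs]; field_simp
  set D := (τ - ρ)⁻¹ with hD
  have D0 : 0 < D := by positivity
  calc _ ≤ 9 * (c * D) * (30 * R * L) * Ia := by gcongr
    _ = 9 * 30 * c * R * D * (3 * 6 ^ 5 * ck * D ^ 5 * (Ia ^ 2) + 6 * 6 ^ 4 * ck * D ^ 4 * (Ia * Ie)) := by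
        rw [hL, ← inv_pow, ← inv_pow, sinv]; ring
    _ ≤ 9 * 30 * c * R * D * (3 * 6 ^ 5 * ck * D ^ 5 * ((Cv * R ^ 3) * Ie)
          + 6 * 6 ^ 4 * ck * D ^ 4 * ((Cv * R ^ 3) * (N * X))) := by
        have h1 : Ia ^ 2 ≤ Cv * R ^ 3 * Ie := cs.trans (by gcongr)
        have h2 : Ia * Ie ≤ Cv * R ^ 3 * (N * X) := cross.trans (by gcongr)
        gcongr
    _ = 9 * 30 * Cv * c * (R * D) ^ 4 * (3 * 6 ^ 5 * ck * (D ^ 2 * Ie) + 6 * 6 ^ 4 * ck * (D * (N * X))) := by ring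
    _ ≤ 9 * 30 * Cv * c * (R * D) ^ 4 * ((3 * 6 ^ 5 * ck + 6 * 6 ^ 4 * ck) * (D ^ 2 * Ie) +
          (3 * 6 ^ 5 * ck + 6 * 6 ^ 4 * ck) * (D * (N * X))) := by
        gcongr <;> linarith [mul_pos (by norm_num : (0:ℝ) < 3 * 6 ^ 5) ck0, mul_pos (by norm_num : (0:ℝ) < 6 * 6 ^ 4) ck0]
    _ = _ := by rw [div_eq_mul_inv]; ring
end


/-! ### Part K: the main inequality -/

def Wf (U V : Fin 3 → R3 → ℝ) (T : R3 → ℝ) (ρ : ℝ) : ℝ :=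
  (∫ x in ball (0 : R3) ρ, D2 U V T x) + (∫ x in ball (0 : R3) ρ, e2 U V T x ^ 3) ^ (1 / 3 : ℝ)

lemma main_ineq {p : ℝ} (hp1 : 3 / 2 < p) (hp2 : p < 3) :
    ∃ C : ℝ, 0 ≤ C ∧ ∀ {U V : Fin 3 → R3 → ℝ} {P T : R3 → ℝ} (_ : Sys U V P T) {ρ τ R : ℝ}
    (_ : 0 < R) (_ : R ≤ ρ) (_ : ρ < τ) (_ : τ ≤ 2 * R),
    Wf U V T ρ ≤ C * (R / (τ - ρ)) ^ 4 * ((τ - ρ)⁻¹ ^ 2 * (∫ x in Shl ρ τ, e2 U V T x) +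
        (τ - ρ)⁻¹ * (NN (na U) p ρ τ * (EE U V T ρ τ ^ (1 - (3 / p - 1)) * MM U V T ρ τ ^ (3 / p - 1)))
        + (τ - ρ)⁻¹ * ∫ x in Shl ρ τ, na V x * |T x|) := by
  obtain ⟨c, c0, hcut⟩ := exists_cut
  obtain ⟨H, η, k⟩ := exists_ker
  obtain ⟨K, K0, hK⟩ := sobolev_sys
  obtain ⟨C1, C10, h1⟩ := small_scale hp1 hp2 k
  obtain ⟨C2, C20, h2⟩ := osc_est hp1 hp2 k
  have p0 : 0 < p := by linarith
  set c' := 2 * c + 6 * c ^ 2 with hc'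
  have c'0 : 0 < c' := by positivity
  set K' := K ^ (1 / 3 : ℝ) with hK'
  have K'0 : 0 ≤ K' := by positivity
  set CJ := 9 * c' + 33 * c' + 9 * c' + C1 * c' + C2 * c' with hCJ
  refine ⟨CJ * (1 + 2 * K') + K' * (54 * c ^ 2), by positivity, ?_⟩
  intro U V P T h ρ τ R R0 hRρ hρτ hτR
  have d0 : 0 < τ - ρ := by linarith
  obtain ⟨ψ, hψ, hψ1, -⟩ := hcut (ρ + (τ - ρ) / 3) (ρ + 2 * (τ - ρ) / 3) (by linarith) (by linarith)
  rw [show ρ + 2 * (τ - ρ) / 3 - (ρ + (τ - ρ) / 3) = (τ - ρ) / 3 by ring] at hψ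
  have hχ := hψ.sq
  rw [← hc'] at hχ
  set S : Set R3 := {x : R3 | ρ + (τ - ρ) / 3 ≤ ‖x‖ ∧ ‖x‖ ≤ ρ + 2 * (τ - ρ) / 3} with hSdef
  have mS : MeasurableSet S :=
    (measurableSet_le measurable_const measurable_norm).inter (measurableSet_le measurable_norm measurable_const)
  have bS : Bornology.IsBounded S := by
    refine (isBounded_closedBall (x := (0:R3)) (r := ρ + 2 * (τ - ρ) / 3)).subset fun x hx => ?_
    simpa using hx.2
  have SSh : S ⊆ Shl ρ τ := fun x hx => by
    refine ⟨?_, ?_⟩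
    · simp only [mem_ball, dist_zero_right]; linarith [hx.2]
    · simp only [mem_ball, dist_zero_right, not_lt]; linarith [hx.1]
  have ca := na_cont h.sU
  have cb := na_cont h.sV
  have ct : Continuous (fun x => |T x|) := (ContDiff.continuous h.sT).abs
  have ce : Continuous (e2 U V T) := ContDiff.continuous h.sE
  have a0 := na_nonneg U
  have b0 := na_nonneg V
  have e0 := e2_nonneg U V T
  have mSh := Shl_meas ρ τ
  have bSh := Shl_bdd ρ τ
  have mono : ∀ {g : R3 → ℝ}, Continuous g → (∀ x, 0 ≤ g x) → ∫ x in S, g x ≤ ∫ x in Shl ρ τ, g x :=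
    fun cg g0 => setIntegral_mono_set (intS bSh cg) (Eventually.of_forall g0) (HasSubset.Subset.eventuallyLE SSh)
  have en := energy_le h hχ mS bS
  have s1 := h1 h (by linarith) hρτ c'0.le hχ
  have s2 := h2 h R0 hRρ hρτ hτR c'0.le hχ
  have so := hK h hψ mS bS (ρ := ρ) (fun x hx => hψ1 x (by linarith))
  have m1 := mono ce e0
  have m2 := mono (ca.mul ce) (fun x => mul_nonneg (a0 x) (e0 x))
  have m3 := mono (cb.mul ct) (fun x => mul_nonneg (b0 x) (abs_nonneg _))
  have ae : ∫ x in Shl ρ τ, na U x * e2 U V T x ≤ NN (na U) p ρ τ *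
      (EE U V T ρ τ ^ (1 - (3 / p - 1)) * MM U V T ρ τ ^ (3 / p - 1)) := by
    refine (hold mSh bSh ca ce a0 e0 (conj_p hp1)).trans ?_
    exact mul_le_mul_of_nonneg_left (e2_pp h hp1 hp2 ρ τ) (NN_nonneg a0 _ _ _)
  set N := NN (na U) p ρ τ with hN
  have N0 : 0 ≤ N := NN_nonneg a0 _ _ _
  set X := EE U V T ρ τ ^ (1 - (3 / p - 1)) * MM U V T ρ τ ^ (3 / p - 1) with hX
  have X0 : 0 ≤ X := mul_nonneg (Real.rpow_nonneg (EE_nonneg _ _) _) (Real.rpow_nonneg (MM_nonneg _ _) _)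
  set J := ∫ x, ψ x * ψ x * D2 U V T x with hJ
  have J0 : 0 ≤ J := integral_nonneg fun x => mul_nonneg (mul_self_nonneg _) (D2_nonneg _ _ _ x)
  set Ie := ∫ x in Shl ρ τ, e2 U V T x with hIe
  have Ie0 : 0 ≤ Ie := i2_nonneg _
  set Ibt := ∫ x in Shl ρ τ, na V x * |T x| with hIbt
  have Ibt0 : 0 ≤ Ibt := integral_nonneg fun x => mul_nonneg (b0 x) (abs_nonneg _)
  have DJ : ∫ x in ball (0 : R3) ρ, D2 U V T x ≤ J := by
    have e : ∫ x in ball (0 : R3) ρ, D2 U V T x = ∫ x in ball (0 : R3) ρ, ψ x * ψ x * D2 U V T x := by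
      refine setIntegral_congr_fun measurableSet_ball fun x hx => ?_
      have : ‖x‖ < ρ := by simpa using hx
      simp only [hψ1 x (by linarith), one_mul]
    rw [e]
    refine setIntegral_le_integral ?_ (Eventually.of_forall fun x => mul_nonneg (mul_self_nonneg _) (D2_nonneg _ _ _ x))
    exact ((ContDiff.continuous hχ.sm).mul h.cD).integrable_of_hasCompactSupport hχ.cpt.mul_right
  set D := (τ - ρ)⁻¹ with hD
  have D0 : 0 < D := by positivity
  have cd : ∀ y, y / ((τ - ρ) / 3) = 3 * (y * D) := fun y => by rw [hD]; field_simp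
  have cd2 : ∀ y, y / ((τ - ρ) / 3) ^ 2 = 9 * (y * D ^ 2) := fun y => by rw [hD]; field_simp; norm_num
  have ei0 : 0 ≤ ∫ x in S, e2 U V T x := i2_nonneg _
  have third : (∫ x in ball (0 : R3) ρ, e2 U V T x ^ 3) ^ (1 / 3 : ℝ) ≤ K' * (2 * J + 54 * c ^ 2 * (D ^ 2 * Ie)) := by
    have b : 0 ≤ 2 * J + 6 * (c / ((τ - ρ) / 3)) ^ 2 * ∫ x in S, e2 U V T x := by positivity
    have := Real.rpow_le_rpow (i3_nonneg _) so (by norm_num : (0:ℝ) ≤ 1 / 3)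
    refine this.trans ?_
    rw [Real.mul_rpow K0 (by positivity), ← Real.rpow_natCast, ← Real.rpow_mul b]
    norm_num
    rw [cd]
    have : K ^ (1 / 3 : ℝ) = K' := rfl
    rw [this]
    refine mul_le_mul_of_nonneg_left ?_ K'0
    have : (3 * (c * D)) ^ 2 * (∫ x in S, e2 U V T x) ≤ (3 * (c * D)) ^ 2 * Ie := by gcongr
    linarith
  set r := (R / (τ - ρ)) ^ 4 with hr
  have r1 : 1 ≤ r := one_le_pow₀ (by rw [le_div_iff₀ d0]; linarith)
  set Q := D ^ 2 * Ie + D * (N * X) + D * Ibt with hQ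
  have q1 : 0 ≤ D ^ 2 * Ie := by positivity
  have q2 : 0 ≤ D * (N * X) := by positivity
  have q3 : 0 ≤ D * Ibt := by positivity
  have Q0 : 0 ≤ Q := by positivity
  have Qr : Q ≤ r * Q := le_mul_of_one_le_left Q0 r1
  have hJle : J ≤ CJ * (r * Q) := by
    rw [cd, cd2] at en
    have tri : |∫ x, Gf (fun x => ψ x * ψ x) U x * P x| ≤ C1 * c' * D * (N * X) + C2 * c' * r * (D ^ 2 * Ie + D * (N * X)) := by
      rw [abs_le] at s1 s2 ⊢
      constructor <;> linarith
    have t1 : 9 * (c' * D ^ 2) * (∫ x in S, e2 U V T x) ≤ 9 * c' * Q :=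
      calc _ ≤ 9 * (c' * D ^ 2) * Ie := by gcongr
        _ = 9 * c' * (D ^ 2 * Ie) := by ring
        _ ≤ _ := by gcongr; linarith
    have t2 : 11 * (3 * (c' * D)) * (∫ x in S, na U x * e2 U V T x) ≤ 33 * c' * Q :=
      calc _ ≤ 11 * (3 * (c' * D)) * (N * X) := by gcongr; exact m2.trans ae
        _ = 33 * c' * (D * (N * X)) := by ring
        _ ≤ _ := mul_le_mul_of_nonneg_left (by linarith) (by positivity)
    have t3 : 3 * (3 * (c' * D)) * (∫ x in S, na V x * |T x|) ≤ 9 * c' * Q :=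
      calc _ ≤ 3 * (3 * (c' * D)) * Ibt := mul_le_mul_of_nonneg_left m3 (by positivity)
        _ = 9 * c' * (D * Ibt) := by ring
        _ ≤ _ := by gcongr; linarith
    have t4 : C1 * c' * D * (N * X) ≤ C1 * c' * Q := by
      rw [mul_assoc (C1 * c')]; gcongr; linarith
    have t5 : C2 * c' * r * (D ^ 2 * Ie + D * (N * X)) ≤ C2 * c' * (r * Q) := by
      rw [mul_assoc (C2 * c')]
      exact mul_le_mul_of_nonneg_left (mul_le_mul_of_nonneg_left (by linarith) (by positivity)) (by positivity)
    have t6 : 9 * c' * Q + 33 * c' * Q + 9 * c' * Q + C1 * c' * Q ≤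
        (9 * c' + 33 * c' + 9 * c' + C1 * c') * (r * Q) := by
      rw [← add_mul, ← add_mul, ← add_mul]; exact mul_le_mul_of_nonneg_left Qr (by positivity)
    rw [hCJ, add_mul]
    linarith
  have CJ0 : 0 ≤ CJ := by positivity
  calc Wf U V T ρ ≤ J + K' * (2 * J + 54 * c ^ 2 * (D ^ 2 * Ie)) := add_le_add DJ third
    _ ≤ CJ * (r * Q) + K' * (2 * (CJ * (r * Q)) + 54 * c ^ 2 * (r * Q)) := by
        have q4 : D ^ 2 * Ie ≤ r * Q := le_trans (by linarith) Qr
        have q5 := mul_le_mul_of_nonneg_left q4 (by positivity : 0 ≤ 54 * c ^ 2)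
        have q6 := mul_le_mul_of_nonneg_left (add_le_add (mul_le_mul_of_nonneg_left hJle zero_le_two) q5) K'0
        linarith
    _ = _ := by ring


/-! ### Part L: interpolation -/

section
variable {U V : Fin 3 → R3 → ℝ} {P T : R3 → ℝ}

lemma interp (h : Sys U V P T) {f : R3 → ℝ} (cf : Continuous f) (f0 : ∀ x, 0 ≤ f x)
    (hf : ∀ x, f x ^ 2 ≤ e2 U V T x) {q s σ B x y : ℝ} (q0 : 0 < q) (hqs : q < s) (hs : s < 6) (σ0 : 0 ≤ σ)
    (ρ τ : ℝ) (hB : NN f q ρ τ ≤ B) (hx : x = σ * (q * (6 - s) / (6 - q)))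
    (hy : y = σ * (3 * (s - q) / (6 - q))) :
    (∫ z in Shl ρ τ, f z ^ s) ^ σ ≤ B ^ x * MM U V T ρ τ ^ y := by
  have ce : Continuous (e2 U V T) := ContDiff.continuous h.sE
  have h6q : 0 < 6 - q := by linarith
  have h6s : 0 < 6 - s := by linarith
  have hsq : 0 < s - q := by linarith
  set t := (6 - s) / (6 - q) with ht
  have t0 : 0 < t := by positivity
  have t1 : 1 - t = (s - q) / (6 - q) := by rw [ht]; field_simp; ring
  have t1' : 0 < 1 - t := by rw [t1]; positivity
  have H := hold_th (Shl_meas ρ τ) (Shl_bdd ρ τ) (F := fun z => f z ^ q) (G := fun z => f z ^ (6 : ℝ))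
    (cf.rpow_const fun _ => Or.inr q0.le) (cf.rpow_const fun _ => Or.inr (by norm_num))
    (fun z => Real.rpow_nonneg (f0 z) _) (fun z => Real.rpow_nonneg (f0 z) _) t0 (by linarith)
  have e : ∀ z, f z ^ s = (f z ^ q) ^ t * (f z ^ (6 : ℝ)) ^ (1 - t) := by
    intro z
    rw [← Real.rpow_mul (f0 z), ← Real.rpow_mul (f0 z),
      ← Real.rpow_add_of_nonneg (f0 z) (by positivity) (by positivity)]
    congr 1
    rw [t1, ht]; field_simp; ring
  set I := ∫ z in Shl ρ τ, f z ^ q with hI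
  have I0 : 0 ≤ I := integral_nonneg fun z => Real.rpow_nonneg (f0 z) _
  set G := ∫ z in Shl ρ τ, f z ^ (6 : ℝ) with hG
  have G0 : 0 ≤ G := integral_nonneg fun z => Real.rpow_nonneg (f0 z) _
  have M0 := MM_nonneg (U := U) (V := V) (T := T) ρ τ
  have GM : G ≤ MM U V T ρ τ ^ (3 : ℝ) := by
    have A0 : 0 ≤ ∫ z in Shl ρ τ, e2 U V T z ^ 3 := i3_nonneg _
    have h1 : G ≤ ∫ z in Shl ρ τ, e2 U V T z ^ 3 := by
      refine integral_mono (intS (Shl_bdd ρ τ) (cf.rpow_const fun _ => Or.inr (by norm_num)))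
        (intS (Shl_bdd ρ τ) (ce.pow 3)) fun z => ?_
      have := pow_le_pow_left₀ (sq_nonneg _) (hf z) 3
      simp only
      rw [← pow_mul] at this
      exact_mod_cast this
    have h2 := Real.rpow_le_rpow (Real.rpow_nonneg A0 _) (e3_le_MM (U := U) (V := V) (T := T) ρ τ) (by norm_num : (0:ℝ) ≤ 3)
    rw [← Real.rpow_mul A0] at h2
    norm_num at h2
    exact h1.trans (by exact_mod_cast h2)
  have IB : I ≤ B ^ q := by
    have h2 := Real.rpow_le_rpow (NN_nonneg f0 _ _ _) hB q0.le
    unfold NN at h2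
    rw [← Real.rpow_mul I0] at h2
    rwa [one_div, inv_mul_cancel₀ q0.ne', Real.rpow_one] at h2
  have B0 : 0 ≤ B := (NN_nonneg f0 _ _ _).trans hB
  simp_rw [e]
  calc _ ≤ (I ^ t * G ^ (1 - t)) ^ σ := by
        refine Real.rpow_le_rpow (integral_nonneg fun z => ?_) H σ0
        have := f0 z
        positivity
    _ ≤ ((B ^ q) ^ t * (MM U V T ρ τ ^ (3 : ℝ)) ^ (1 - t)) ^ σ := by gcongr
    _ = _ := by
        rw [Real.mul_rpow (by positivity) (by positivity), ← Real.rpow_mul B0, ← Real.rpow_mul B0,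
          ← Real.rpow_mul M0, ← Real.rpow_mul M0, hx, hy, t1, ht]
        congr 2 <;> field_simp

lemma EE_le (h : Sys U V P T) {κ : ℝ} (k0 : 0 < κ) (k1 : κ < 1) (ρ τ : ℝ) :
    EE U V T ρ τ ^ κ ≤ 3 * ((∫ z in Shl ρ τ, na U z ^ (3 : ℝ)) ^ (2 / 3 * κ)
      + (∫ z in Shl ρ τ, na V z ^ (3 : ℝ)) ^ (2 / 3 * κ) + (∫ z in Shl ρ τ, |T z| ^ (3 : ℝ)) ^ (2 / 3 * κ)) := by
  have ce : Continuous (e2 U V T) := ContDiff.continuous h.sE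
  have ca := na_cont h.sU
  have cb := na_cont h.sV
  have ct : Continuous (fun x => |T x|) := (ContDiff.continuous h.sT).abs
  have pw : ∀ z, e2 U V T z ^ (3 / 2 : ℝ) ≤ 3 ^ (3 / 2 : ℝ) * (na U z ^ (3 : ℝ) + na V z ^ (3 : ℝ) + |T z| ^ (3 : ℝ)) := by
    intro z
    have a0 := na_nonneg U z
    have b0 := na_nonneg V z
    have t0 := abs_nonneg (T z)
    set m := max (max (na U z) (na V z)) |T z| with hm
    have m1 : na U z ≤ m := (le_max_left _ _).trans (le_max_left _ _)
    have m2 : na V z ≤ m := (le_max_right _ _).trans (le_max_left _ _)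
    have m3 : |T z| ≤ m := le_max_right _ _
    have m0 : 0 ≤ m := t0.trans m3
    have h1 : e2 U V T z ≤ 3 * m ^ 2 := by rw [e2_eq]; nlinarith
    have h2 : m ^ (3 : ℝ) ≤ na U z ^ (3 : ℝ) + na V z ^ (3 : ℝ) + |T z| ^ (3 : ℝ) := by
      have x1 : 0 ≤ na U z ^ (3 : ℝ) := by positivity
      have x2 : 0 ≤ na V z ^ (3 : ℝ) := by positivity
      have x3 : 0 ≤ |T z| ^ (3 : ℝ) := by positivity
      rcases max_choice (max (na U z) (na V z)) |T z| with hh | hh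
      · rcases max_choice (na U z) (na V z) with h3 | h3
        · rw [hm, hh, h3]; linarith
        · rw [hm, hh, h3]; linarith
      · rw [hm, hh]; linarith
    calc e2 U V T z ^ (3 / 2 : ℝ) ≤ (3 * m ^ 2) ^ (3 / 2 : ℝ) := Real.rpow_le_rpow (e2_nonneg _ _ _ z) h1 (by norm_num)
      _ = 3 ^ (3 / 2 : ℝ) * m ^ (3 : ℝ) := by
          rw [Real.mul_rpow (by norm_num) (by positivity), ← Real.rpow_natCast, ← Real.rpow_mul m0]; norm_num
      _ ≤ _ := by gcongr
  set A := ∫ z in Shl ρ τ, na U z ^ (3 : ℝ) with hA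
  set B := ∫ z in Shl ρ τ, na V z ^ (3 : ℝ) with hB
  set C := ∫ z in Shl ρ τ, |T z| ^ (3 : ℝ) with hC
  have A0 : 0 ≤ A := integral_nonneg fun z => Real.rpow_nonneg (na_nonneg U z) _
  have B0 : 0 ≤ B := integral_nonneg fun z => Real.rpow_nonneg (na_nonneg V z) _
  have C0 : 0 ≤ C := integral_nonneg fun z => Real.rpow_nonneg (abs_nonneg _) _
  have bSh := Shl_bdd ρ τ
  have iA := intS bSh (ca.rpow_const (p := 3) fun _ => Or.inr (by norm_num))
  have iB := intS bSh (cb.rpow_const (p := 3) fun _ => Or.inr (by norm_num))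
  have iC := intS bSh (ct.rpow_const (p := 3) fun _ => Or.inr (by norm_num))
  have Ile : ∫ z in Shl ρ τ, e2 U V T z ^ (3 / 2 : ℝ) ≤ 3 ^ (3 / 2 : ℝ) * (A + B + C) := by
    have h1 := integral_mono (intS bSh (ce.rpow_const fun _ => Or.inr (by norm_num)))
      (((iA.add iB).add iC).const_mul (3 ^ (3 / 2 : ℝ))) pw
    refine h1.trans (le_of_eq ?_)
    have x1 := integral_add (iA.add iB) iC
    have x2 := integral_add iA iB
    rw [integral_const_mul]
    congr 1
    simp only [Pi.add_apply] at x1 x2 ⊢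
    rw [x1, x2]
  have k0' : 0 ≤ 2 / 3 * κ := by positivity
  have k1' : 2 / 3 * κ ≤ 1 := by linarith
  unfold EE
  rw [← Real.rpow_mul (integral_nonneg fun x => Real.rpow_nonneg (e2_nonneg _ _ _ x) _)]
  calc _ ≤ (3 ^ (3 / 2 : ℝ) * (A + B + C)) ^ (2 / 3 * κ) :=
        Real.rpow_le_rpow (integral_nonneg fun x => Real.rpow_nonneg (e2_nonneg _ _ _ x) _) Ile k0'
    _ = 3 ^ κ * (A + B + C) ^ (2 / 3 * κ) := by
        rw [Real.mul_rpow (by positivity) (by positivity), ← Real.rpow_mul (by norm_num)]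
        congr 2; ring
    _ ≤ 3 * (A ^ (2 / 3 * κ) + B ^ (2 / 3 * κ) + C ^ (2 / 3 * κ)) := by
        have h1 := Real.rpow_add_le_add_rpow (add_nonneg A0 B0) C0 k0' k1'
        have h2 := Real.rpow_add_le_add_rpow A0 B0 k0' k1'
        have h3 : (3:ℝ) ^ κ ≤ 3 := by
          calc (3:ℝ) ^ κ ≤ 3 ^ (1:ℝ) := Real.rpow_le_rpow_of_exponent_le (by norm_num) k1.le
            _ = 3 := by simp
        gcongr
        linarith
end

lemma pow_RK {R K e β : ℝ} (R1 : 1 ≤ R) (K1 : 1 ≤ K) (x : ℝ) (he : β * x ≤ e) :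
    (K * R ^ β) ^ x ≤ K ^ x * R ^ e := by
  have R0 : 0 < R := by linarith
  rw [Real.mul_rpow (by linarith) (by positivity), ← Real.rpow_mul R0.le]
  have : R ^ (β * x) ≤ R ^ e := Real.rpow_le_rpow_of_exponent_le R1 he
  gcongr

lemma NN_mono {f : R3 → ℝ} (cf : Continuous f) (f0 : ∀ x, 0 ≤ f x) {q : ℝ} (q0 : 0 < q) {ρ τ R : ℝ}
    (h1 : R ≤ ρ) (h2 : τ ≤ 2 * R) : NN f q ρ τ ≤ NN f q R (2 * R) := by
  have hsub : Shl ρ τ ⊆ Shl R (2 * R) :=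
    Set.diff_subset_diff (ball_subset_ball h2) (ball_subset_ball h1)
  refine Real.rpow_le_rpow (integral_nonneg fun x => Real.rpow_nonneg (f0 x) _) ?_ (by positivity)
  exact setIntegral_mono_set (intS (Shl_bdd _ _) (cf.rpow_const fun x => Or.inr q0.le))
    (Eventually.of_forall fun x => Real.rpow_nonneg (f0 x) _) (HasSubset.Subset.eventuallyLE hsub)


/-! ### Part M: the closed inequality -/

lemma Eterm {N A M K R α β x y ε : ℝ} (M0 : 0 ≤ M) (A0 : 0 ≤ A) (R1 : 1 ≤ R) (K1 : 1 ≤ K) (hN : N ≤ K * R ^ α)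
    (hA : A ≤ (K * R ^ β) ^ x * M ^ y) (hx : α + β * x ≤ 1) (y0 : 0 ≤ y) (e0 : 0 ≤ ε) :
    N * (A * M ^ ε) ≤ (K * K ^ x) * R * M ^ (y + ε) := by
  have R0 : 0 < R := by linarith
  have K0 : 0 < K := by linarith
  have h1 := pow_RK R1 K1 x (le_refl (β * x))
  calc N * (A * M ^ ε) ≤ (K * R ^ α) * (((K ^ x * R ^ (β * x)) * M ^ y) * M ^ ε) := by
        gcongr
        exact hA.trans (by gcongr)
    _ = (K * K ^ x) * (R ^ α * R ^ (β * x)) * (M ^ y * M ^ ε) := by ring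
    _ = (K * K ^ x) * R ^ (α + β * x) * M ^ (y + ε) := by
        rw [← Real.rpow_add R0, ← Real.rpow_add_of_nonneg M0 y0 e0]
    _ ≤ (K * K ^ x) * R ^ (1 : ℝ) * M ^ (y + ε) := by
        have := Real.rpow_le_rpow_of_exponent_le R1 hx
        gcongr
    _ = _ := by rw [Real.rpow_one]

lemma a2_le {f : R3 → ℝ} (cf : Continuous f) (f0 : ∀ x, 0 ≤ f x) {Cv R ρ τ : ℝ} (Cv0 : 0 < Cv) (R0 : 0 < R)
    (hv : volume.real (Shl ρ τ) ≤ Cv * R ^ 3) :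
    ∫ x in Shl ρ τ, f x ^ (2 : ℝ) ≤ (∫ x in Shl ρ τ, f x ^ (3 : ℝ)) ^ (2 / 3 : ℝ) * (Cv ^ (1 / 3 : ℝ) * R) := by
  have h1 := hold_one (Shl_meas ρ τ) (Shl_bdd ρ τ) (F := fun x => f x ^ (2 : ℝ))
    (cf.rpow_const fun _ => Or.inr (by norm_num)) (fun x => Real.rpow_nonneg (f0 x) _) (p := 3 / 2) (q := 3)
    (by rw [Real.holderConjugate_iff]; norm_num)
  have e : ∀ x, (f x ^ (2 : ℝ)) ^ (3 / 2 : ℝ) = f x ^ (3 : ℝ) := fun x => by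
    rw [← Real.rpow_mul (f0 x)]; norm_num
  simp_rw [e] at h1
  refine h1.trans ?_
  rw [show (1 / (3 / 2) : ℝ) = 2 / 3 by norm_num]
  refine mul_le_mul_of_nonneg_left ?_ (Real.rpow_nonneg (integral_nonneg fun x => Real.rpow_nonneg (f0 x) _) _)
  calc volume.real (Shl ρ τ) ^ (1 / 3 : ℝ) ≤ (Cv * R ^ 3) ^ (1 / 3 : ℝ) :=
        Real.rpow_le_rpow measureReal_nonneg hv (by norm_num)
    _ = _ := by
        rw [Real.mul_rpow Cv0.le (by positivity), ← Real.rpow_natCast, ← Real.rpow_mul R0.le]; norm_num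

set_option maxHeartbeats 4000000 in
lemma decay {p q r α β γ : ℝ} (hp1 : 3 / 2 < p) (hp2 : p < 3) (hq1 : 1 ≤ q) (hq2 : q < 2)
    (hr1 : 1 ≤ r) (hr2 : r < 2) (hα1 : 0 ≤ α) (hα2 : α ≤ 2 / p - 1 / 3)
    (hβ2 : β ≤ 3 / q - 1 / 2) (hγ2 : γ ≤ 3 / r - 1 / 2)
    (hc1 : α + ((4 * p - 6) * q / ((6 - q) * p)) * β ≤ 1)
    (hc2 : α + ((4 * p - 6) * r / ((6 - r) * p)) * γ ≤ 1)
    (hc3 : (2 * q / (6 - q)) * β + (2 * r / (6 - r)) * γ ≤ 1) {K : ℝ} (K1 : 1 ≤ K) :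
    ∃ C : ℝ, 0 ≤ C ∧ ∃ m : Fin 7 → ℝ, (∀ i, 0 < m i ∧ m i < 1) ∧
    ∀ {U V : Fin 3 → R3 → ℝ} {P T : R3 → ℝ} (_ : Sys U V P T) {ρ τ R : ℝ}
    (_ : 1 ≤ R) (_ : R ≤ ρ) (_ : ρ < τ) (_ : τ ≤ 2 * R) (_ : NN (na U) p R (2 * R) ≤ K * R ^ α)
    (_ : NN (na V) q R (2 * R) ≤ K * R ^ β) (_ : NN (fun x => |T x|) r R (2 * R) ≤ K * R ^ γ),
    Wf U V T ρ ≤ C * (R / (τ - ρ)) ^ 6 * ∑ i, MM U V T ρ τ ^ m i := by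
  obtain ⟨C0, C00, hmain⟩ := main_ineq hp1 hp2
  obtain ⟨Cv, Cv0, hCv⟩ := vol_le
  have p0 : 0 < p := by linarith
  have q0 : 0 < q := by linarith
  have r0 : 0 < r := by linarith
  have p6 : 0 < 6 - p := by linarith
  have q6 : 0 < 6 - q := by linarith
  have r6 : 0 < 6 - r := by linarith
  have p3 : 0 < 3 - p := by linarith
  have q3 : 0 < 3 - q := by linarith
  have r3 : 0 < 3 - r := by linarith
  have q2 : 0 < 2 - q := by linarith
  have r2 : 0 < 2 - r := by linarith
  have K0 : 0 < K := by linarith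
  set ε := 3 / p - 1 with hε
  have e0 : 0 < ε := by rw [hε, sub_pos, lt_div_iff₀ p0]; linarith
  have e1 : ε < 1 := by rw [hε, sub_lt_iff_lt_add, div_lt_iff₀ p0]; linarith
  set κ := 1 - ε with hκ
  have k0 : 0 < κ := by linarith
  have k1 : κ < 1 := by linarith
  have kp : κ = (2 * p - 3) / p := by rw [hκ, hε]; field_simp; ring
  -- exponents
  set X : ℝ → ℝ := fun q => 2 / 3 * κ * (q * (6 - 3) / (6 - q)) with hX
  set Y : ℝ → ℝ := fun q => 2 / 3 * κ * (3 * (3 - q) / (6 - q)) with hY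
  have Yb : ∀ q : ℝ, 0 < q → q < 3 → 0 < Y q ∧ Y q + ε < 1 := by
    intro q h1 h2
    have : 0 < 6 - q := by linarith
    have : 0 < 3 - q := by linarith
    refine ⟨by simp only [hY]; positivity, ?_⟩
    have : 2 / 3 * (3 * (3 - q) / (6 - q)) < 1 := by
      rw [show 2 / 3 * (3 * (3 - q) / (6 - q)) = (2 * (3 - q)) / (6 - q) by ring, div_lt_one (by linarith)]
      linarith
    have : κ * (2 / 3 * (3 * (3 - q) / (6 - q))) < κ * 1 := mul_lt_mul_of_pos_left this k0
    simp only [hY]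
    linarith
  have Xb : ∀ q : ℝ, 0 < q → q < 3 → X q = (4 * p - 6) * q / ((6 - q) * p) := by
    intro q h1 h2
    have : 6 - q ≠ 0 := by linarith
    simp only [hX, kp]; field_simp; ring
  have Xp : α + α * X p ≤ 1 := by
    rw [Xb p p0 hp2]
    have h1 : α + α * ((4 * p - 6) * p / ((6 - p) * p)) = α * (3 * p / (6 - p)) := by field_simp; ring
    have h2 : (2 / p - 1 / 3) * (3 * p / (6 - p)) = 1 := by field_simp; ring
    rw [h1, ← h2]
    gcongr
  have Xq : α + β * X q ≤ 1 := by rw [Xb q q0 (by linarith), mul_comm β]; exact hc1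
  have Xr : α + γ * X r ≤ 1 := by rw [Xb r r0 (by linarith), mul_comm γ]; exact hc2
  set m : Fin 7 → ℝ := ![Y p + ε, Y q + ε, Y r + ε, 2 / 3 * (3 * (3 - p) / (6 - p)),
    1 * (3 * (2 - q) / (6 - q)), 1 * (3 * (2 - r) / (6 - r)),
    1 / 2 * (3 * (2 - q) / (6 - q)) + 1 / 2 * (3 * (2 - r) / (6 - r))] with hm
  have s2 : ∀ q : ℝ, 0 < q → q < 2 → 0 < 3 * (2 - q) / (6 - q) ∧ 3 * (2 - q) / (6 - q) < 1 := by
    intro q h1 h2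
    have : 0 < 6 - q := by linarith
    have : 0 < 2 - q := by linarith
    refine ⟨by positivity, ?_⟩
    rw [div_lt_one (by linarith)]; linarith
  have hmb : ∀ i, 0 < m i ∧ m i < 1 := by
    have y1 := Yb p p0 hp2
    have y2 := Yb q q0 (by linarith)
    have y3 := Yb r r0 (by linarith)
    have z1 := s2 q q0 hq2
    have z2 := s2 r r0 hr2
    have z3 : 0 < 2 / 3 * (3 * (3 - p) / (6 - p)) ∧ 2 / 3 * (3 * (3 - p) / (6 - p)) < 1 := by
      refine ⟨by positivity, ?_⟩
      rw [show 2 / 3 * (3 * (3 - p) / (6 - p)) = (2 * (3 - p)) / (6 - p) by ring, div_lt_one (by linarith)]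
      linarith
    intro i
    fin_cases i
    · exact ⟨by change 0 < Y p + ε; linarith, y1.2⟩
    · exact ⟨by change 0 < Y q + ε; linarith, y2.2⟩
    · exact ⟨by change 0 < Y r + ε; linarith, y3.2⟩
    · exact z3
    · constructor
      · change 0 < 1 * (3 * (2 - q) / (6 - q)); linarith
      · change 1 * (3 * (2 - q) / (6 - q)) < 1; linarith
    · constructor
      · change 0 < 1 * (3 * (2 - r) / (6 - r)); linarith
      · change 1 * (3 * (2 - r) / (6 - r)) < 1; linarith
    · constructor
      · change 0 < 1 / 2 * (3 * (2 - q) / (6 - q)) + 1 / 2 * (3 * (2 - r) / (6 - r)); linarith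
      · change 1 / 2 * (3 * (2 - q) / (6 - q)) + 1 / 2 * (3 * (2 - r) / (6 - r)) < 1; linarith
  -- constants
  set x3 := 2 / 3 * (p * (6 - 3) / (6 - p)) with hx3
  set x4 := 1 * (q * (6 - 2) / (6 - q)) with hx4
  set x5 := 1 * (r * (6 - 2) / (6 - r)) with hx5
  set x6 := 1 / 2 * (q * (6 - 2) / (6 - q)) with hx6
  set x7 := 1 / 2 * (r * (6 - 2) / (6 - r)) with hx7
  have R3e : α * x3 ≤ 1 := by
    have h2 : (2 / p - 1 / 3) * (2 / 3 * (p * (6 - 3) / (6 - p))) = 2 / 3 := by field_simp; ring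
    have : α * x3 ≤ (2 / p - 1 / 3) * x3 := by rw [hx3]; gcongr
    rw [hx3, h2] at this
    rw [hx3]; linarith
  have R4e : β * x4 ≤ 2 := by
    have h2 : (3 / q - 1 / 2) * (1 * (q * (6 - 2) / (6 - q))) = 2 := by field_simp; ring
    rw [← h2, hx4]; gcongr
  have R5e : γ * x5 ≤ 2 := by
    have h2 : (3 / r - 1 / 2) * (1 * (r * (6 - 2) / (6 - r))) = 2 := by field_simp; ring
    rw [← h2, hx5]; gcongr
  have R6e : β * x6 + γ * x7 ≤ 1 := by
    refine le_trans (le_of_eq ?_) hc3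
    rw [hx6, hx7]; ring
  set c0 := 3 * (K * K ^ X p) with hc0
  set c1 := 3 * (K * K ^ X q) with hc1
  set c2 := 3 * (K * K ^ X r) with hc2
  set c3 := K ^ x3 * Cv ^ (1 / 3 : ℝ) with hc3
  set c4 := K ^ x4 with hc4
  set c5 := K ^ x5 with hc5
  set c6 := K ^ x6 * K ^ x7 with hc6
  have c00 : 0 ≤ c0 := by positivity
  have c10 : 0 ≤ c1 := by positivity
  have c20 : 0 ≤ c2 := by positivity
  have c30 : 0 ≤ c3 := by positivity
  have c40 : 0 ≤ c4 := by positivity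
  have c50 : 0 ≤ c5 := by positivity
  have c60 : 0 ≤ c6 := by positivity
  refine ⟨C0 * (c0 + c1 + c2 + c3 + c4 + c5 + c6), by positivity, m, hmb, ?_⟩
  intro U V P T h ρ τ R R1 hRρ hρτ hτR nU nV nT
  have R0 : 0 < R := by linarith
  have d0 : 0 < τ - ρ := by linarith
  have ca := na_cont h.sU
  have cb := na_cont h.sV
  have ct : Continuous (fun x => |T x|) := (ContDiff.continuous h.sT).abs
  have ce : Continuous (e2 U V T) := ContDiff.continuous h.sE
  have a0 := na_nonneg U
  have b0 := na_nonneg V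
  have t0 : ∀ x, 0 ≤ |T x| := fun x => abs_nonneg _
  have ea : ∀ x, na U x ^ 2 ≤ e2 U V T x := na_sq_le
  have eb : ∀ x, na V x ^ 2 ≤ e2 U V T x := fun x => by
    rw [e2_eq]; nlinarith [sq_nonneg (na U x), sq_nonneg (|T x|)]
  have et : ∀ x, |T x| ^ 2 ≤ e2 U V T x := fun x => by
    rw [e2_eq]; nlinarith [sq_nonneg (na U x), sq_nonneg (na V x)]
  have mSh := Shl_meas ρ τ
  have bSh := Shl_bdd ρ τ
  have nU' := (NN_mono ca a0 p0 hRρ hτR).trans nU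
  have nV' := (NN_mono cb b0 q0 hRρ hτR).trans nV
  have nT' := (NN_mono ct t0 r0 hRρ hτR).trans nT
  have hW := hmain h R0 hRρ hρτ hτR
  set M := MM U V T ρ τ with hM
  have M0 : 0 ≤ M := MM_nonneg ρ τ
  set N := NN (na U) p ρ τ with hN
  have N0 : 0 ≤ N := NN_nonneg a0 _ _ _
  set D := (τ - ρ)⁻¹ with hD
  have D0 : 0 < D := by positivity
  set w := R / (τ - ρ) with hw
  have hwD : w = R * D := div_eq_mul_inv _ _
  have w1 : 1 ≤ w := by rw [hw, le_div_iff₀ d0]; linarith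
  have w0 : 0 ≤ w := by linarith
  have w12 : w ≤ w ^ 2 := by nlinarith
  have σ0 : 0 ≤ 2 / 3 * κ := by positivity
  -- E terms
  have E1 := EE_le h k0 k1 ρ τ
  set A := (∫ z in Shl ρ τ, na U z ^ (3 : ℝ)) with hA
  set B := (∫ z in Shl ρ τ, na V z ^ (3 : ℝ)) with hB
  set G := (∫ z in Shl ρ τ, |T z| ^ (3 : ℝ)) with hG
  have A0 : 0 ≤ A := integral_nonneg fun z => Real.rpow_nonneg (a0 z) _
  have B0 : 0 ≤ B := integral_nonneg fun z => Real.rpow_nonneg (b0 z) _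
  have G0 : 0 ≤ G := integral_nonneg fun z => Real.rpow_nonneg (t0 z) _
  have i1 := interp h ca a0 ea (s := 3) (σ := 2 / 3 * κ) p0 hp2 (by norm_num) σ0 ρ τ nU' (x := X p) (y := Y p) rfl rfl
  have i2 := interp h cb b0 eb (s := 3) (σ := 2 / 3 * κ) q0 (by linarith) (by norm_num) σ0 ρ τ nV' (x := X q) (y := Y q) rfl rfl
  have i3 := interp h ct t0 et (s := 3) (σ := 2 / 3 * κ) r0 (by linarith) (by norm_num) σ0 ρ τ nT' (x := X r) (y := Y r) rfl rfl
  have j1 := Eterm M0 (Real.rpow_nonneg A0 _) R1 K1 nU' i1 Xp (Yb p p0 hp2).1.le e0.le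
  have j2 := Eterm M0 (Real.rpow_nonneg B0 _) R1 K1 nU' i2 Xq (Yb q q0 (by linarith)).1.le e0.le
  have j3 := Eterm M0 (Real.rpow_nonneg G0 _) R1 K1 nU' i3 Xr (Yb r r0 (by linarith)).1.le e0.le
  have pE : D * (N * (EE U V T ρ τ ^ κ * M ^ ε)) ≤
      w ^ 2 * (c0 * M ^ (Y p + ε) + c1 * M ^ (Y q + ε) + c2 * M ^ (Y r + ε)) := by
    calc D * (N * (EE U V T ρ τ ^ κ * M ^ ε)) ≤ D * (N * ((3 * (A ^ (2 / 3 * κ) + B ^ (2 / 3 * κ) + G ^ (2 / 3 * κ))) * M ^ ε)) := by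
          gcongr
      _ = D * 3 * (N * (A ^ (2 / 3 * κ) * M ^ ε) + N * (B ^ (2 / 3 * κ) * M ^ ε) + N * (G ^ (2 / 3 * κ) * M ^ ε)) := by ring
      _ ≤ D * 3 * ((K * K ^ X p) * R * M ^ (Y p + ε) + (K * K ^ X q) * R * M ^ (Y q + ε) + (K * K ^ X r) * R * M ^ (Y r + ε)) := by
          refine mul_le_mul_of_nonneg_left ?_ (by positivity)
          exact add_le_add (add_le_add j1 j2) j3
      _ = w * (c0 * M ^ (Y p + ε) + c1 * M ^ (Y q + ε) + c2 * M ^ (Y r + ε)) := by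
          rw [hwD, hc0, hc1, hc2]; ring
      _ ≤ _ := by
          refine mul_le_mul_of_nonneg_right w12 (by positivity)
  -- quadratic terms
  have ie : ∫ x in Shl ρ τ, e2 U V T x = (∫ x in Shl ρ τ, na U x ^ (2 : ℝ)) + (∫ x in Shl ρ τ, na V x ^ (2 : ℝ))
      + ∫ x in Shl ρ τ, |T x| ^ (2 : ℝ) := by
    have u1 := intS bSh (ca.rpow_const (p := 2) fun _ => Or.inr (by norm_num))
    have u2 := intS bSh (cb.rpow_const (p := 2) fun _ => Or.inr (by norm_num))
    have u3 := intS bSh (ct.rpow_const (p := 2) fun _ => Or.inr (by norm_num))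
    have v1 := integral_add (u1.add u2) u3
    have v2 := integral_add u1 u2
    simp only [Pi.add_apply] at v1 v2
    rw [← v2, ← v1]
    congr 1
    ext x
    rw [e2_eq]
    norm_cast
  have l1 := a2_le ca a0 Cv0 R0 (hCv (ρ := ρ) R0 hτR)
  have l1' := interp h ca a0 ea (s := 3) (σ := 2 / 3) p0 hp2 (by norm_num) (by norm_num) ρ τ nU'
    (x := x3) (y := 2 / 3 * (3 * (3 - p) / (6 - p))) rfl rfl
  have l2 := interp h cb b0 eb (s := 2) (σ := 1) q0 hq2 (by norm_num) (by norm_num) ρ τ nV'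
    (x := x4) (y := 1 * (3 * (2 - q) / (6 - q))) rfl rfl
  have l3 := interp h ct t0 et (s := 2) (σ := 1) r0 hr2 (by norm_num) (by norm_num) ρ τ nT'
    (x := x5) (y := 1 * (3 * (2 - r) / (6 - r))) rfl rfl
  have l4 := interp h cb b0 eb (s := 2) (σ := 1 / 2) q0 hq2 (by norm_num) (by norm_num) ρ τ nV'
    (x := x6) (y := 1 / 2 * (3 * (2 - q) / (6 - q))) rfl rfl
  have l5 := interp h ct t0 et (s := 2) (σ := 1 / 2) r0 hr2 (by norm_num) (by norm_num) ρ τ nT'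
    (x := x7) (y := 1 / 2 * (3 * (2 - r) / (6 - r))) rfl rfl
  rw [Real.rpow_one] at l2 l3
  have q1 : D ^ 2 * (∫ x in Shl ρ τ, na U x ^ (2 : ℝ)) ≤ w ^ 2 * (c3 * M ^ (2 / 3 * (3 * (3 - p) / (6 - p)))) := by
    have h1 := pow_RK R1 K1 x3 R3e
    rw [Real.rpow_one] at h1
    calc _ ≤ D ^ 2 * (((K ^ x3 * R) * M ^ (2 / 3 * (3 * (3 - p) / (6 - p)))) * (Cv ^ (1 / 3 : ℝ) * R)) := by
          refine mul_le_mul_of_nonneg_left (l1.trans ?_) (by positivity)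
          refine mul_le_mul_of_nonneg_right (l1'.trans ?_) (by positivity)
          exact mul_le_mul_of_nonneg_right h1 (by positivity)
      _ = _ := by rw [hwD, hc3]; ring
  have q2' : D ^ 2 * (∫ x in Shl ρ τ, na V x ^ (2 : ℝ)) ≤ w ^ 2 * (c4 * M ^ (1 * (3 * (2 - q) / (6 - q)))) := by
    have h1 := pow_RK R1 K1 x4 R4e
    rw [Real.rpow_two] at h1
    calc _ ≤ D ^ 2 * ((K ^ x4 * R ^ 2) * M ^ (1 * (3 * (2 - q) / (6 - q)))) := by
          refine mul_le_mul_of_nonneg_left (l2.trans ?_) (by positivity)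
          exact mul_le_mul_of_nonneg_right h1 (by positivity)
      _ = _ := by rw [hwD, hc4]; ring
  have q3' : D ^ 2 * (∫ x in Shl ρ τ, |T x| ^ (2 : ℝ)) ≤ w ^ 2 * (c5 * M ^ (1 * (3 * (2 - r) / (6 - r)))) := by
    have h1 := pow_RK R1 K1 x5 R5e
    rw [Real.rpow_two] at h1
    calc _ ≤ D ^ 2 * ((K ^ x5 * R ^ 2) * M ^ (1 * (3 * (2 - r) / (6 - r)))) := by
          refine mul_le_mul_of_nonneg_left (l3.trans ?_) (by positivity)
          exact mul_le_mul_of_nonneg_right h1 (by positivity)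
      _ = _ := by rw [hwD, hc5]; ring
  have q4 : D * (∫ x in Shl ρ τ, na V x * |T x|) ≤ w ^ 2 * (c6 * M ^ (1 / 2 * (3 * (2 - q) / (6 - q)) + 1 / 2 * (3 * (2 - r) / (6 - r)))) := by
    have h0 := hold mSh bSh cb ct b0 t0 (p := 2) (q := 2) (by rw [Real.holderConjugate_iff]; norm_num)
    have h1 := pow_RK R1 K1 x6 (le_refl (β * x6))
    have h2 := pow_RK R1 K1 x7 (le_refl (γ * x7))
    have hR : R ^ (β * x6) * R ^ (γ * x7) ≤ R := by
      rw [← Real.rpow_add R0]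
      calc _ ≤ R ^ (1 : ℝ) := Real.rpow_le_rpow_of_exponent_le R1 R6e
        _ = R := Real.rpow_one R
    have k1 : (∫ x in Shl ρ τ, na V x ^ (2 : ℝ)) ^ (1 / 2 : ℝ) ≤ (K ^ x6 * R ^ (β * x6)) * M ^ (1 / 2 * (3 * (2 - q) / (6 - q))) :=
      l4.trans (mul_le_mul_of_nonneg_right h1 (by positivity))
    have k2 : (∫ x in Shl ρ τ, |T x| ^ (2 : ℝ)) ^ (1 / 2 : ℝ) ≤ (K ^ x7 * R ^ (γ * x7)) * M ^ (1 / 2 * (3 * (2 - r) / (6 - r))) :=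
      l5.trans (mul_le_mul_of_nonneg_right h2 (by positivity))
    have k3 := mul_le_mul k1 k2 (Real.rpow_nonneg (integral_nonneg fun x => Real.rpow_nonneg (t0 x) _) _) (by positivity)
    have y1 := (s2 q q0 hq2).1
    have y2 := (s2 r r0 hr2).1
    rw [Real.rpow_add_of_nonneg M0 (by linarith) (by linarith)]
    calc _ ≤ D * ((K ^ x6 * R ^ (β * x6)) * M ^ (1 / 2 * (3 * (2 - q) / (6 - q))) * ((K ^ x7 * R ^ (γ * x7)) * M ^ (1 / 2 * (3 * (2 - r) / (6 - r))))) :=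
          mul_le_mul_of_nonneg_left (h0.trans k3) D0.le
      _ = (R ^ (β * x6) * R ^ (γ * x7)) * (D * (c6 * (M ^ (1 / 2 * (3 * (2 - q) / (6 - q))) * M ^ (1 / 2 * (3 * (2 - r) / (6 - r)))))) := by
          rw [hc6]; ring
      _ ≤ R * (D * (c6 * (M ^ (1 / 2 * (3 * (2 - q) / (6 - q))) * M ^ (1 / 2 * (3 * (2 - r) / (6 - r)))))) :=
          mul_le_mul_of_nonneg_right hR (by positivity)
      _ = w * (c6 * (M ^ (1 / 2 * (3 * (2 - q) / (6 - q))) * M ^ (1 / 2 * (3 * (2 - r) / (6 - r))))) := by rw [hwD]; ring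
      _ ≤ _ := mul_le_mul_of_nonneg_right w12 (by positivity)
  have sm : ∑ i, M ^ m i = M ^ (Y p + ε) + M ^ (Y q + ε) + M ^ (Y r + ε) + M ^ (2 / 3 * (3 * (3 - p) / (6 - p)))
      + M ^ (1 * (3 * (2 - q) / (6 - q))) + M ^ (1 * (3 * (2 - r) / (6 - r)))
      + M ^ (1 / 2 * (3 * (2 - q) / (6 - q)) + 1 / 2 * (3 * (2 - r) / (6 - r))) := by
    rw [Fin.sum_univ_seven]; rfl
  have mn := Real.rpow_nonneg M0
  rw [sm]
  set M1 := M ^ (Y p + ε)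
  set M2 := M ^ (Y q + ε)
  set M3 := M ^ (Y r + ε)
  set M4 := M ^ (2 / 3 * (3 * (3 - p) / (6 - p)))
  set M5 := M ^ (1 * (3 * (2 - q) / (6 - q)))
  set M6 := M ^ (1 * (3 * (2 - r) / (6 - r)))
  set M7 := M ^ (1 / 2 * (3 * (2 - q) / (6 - q)) + 1 / 2 * (3 * (2 - r) / (6 - r)))
  have n1 : 0 ≤ M1 := mn _
  have n2 : 0 ≤ M2 := mn _
  have n3 : 0 ≤ M3 := mn _
  have n4 : 0 ≤ M4 := mn _
  have n5 : 0 ≤ M5 := mn _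
  have n6 : 0 ≤ M6 := mn _
  have n7 : 0 ≤ M7 := mn _
  have ie' := congrArg (fun y => D ^ 2 * y) ie
  simp only [mul_add] at ie'
  set Sg := M1 + M2 + M3 + M4 + M5 + M6 + M7 with hSg
  have Sg0 : 0 ≤ Sg := by positivity
  calc _ ≤ C0 * w ^ 4 * (w ^ 2 * (c0 * M1 + c1 * M2 + c2 * M3 + c3 * M4 + c4 * M5 + c5 * M6 + c6 * M7)) := by
        refine hW.trans (mul_le_mul_of_nonneg_left ?_ (by positivity))
        linarith
    _ ≤ C0 * w ^ 4 * (w ^ 2 * (c0 * Sg + c1 * Sg + c2 * Sg + c3 * Sg + c4 * Sg + c5 * Sg + c6 * Sg)) := by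
        have g1 : M1 ≤ Sg := by linarith
        have g2 : M2 ≤ Sg := by linarith
        have g3 : M3 ≤ Sg := by linarith
        have g4 : M4 ≤ Sg := by linarith
        have g5 : M5 ≤ Sg := by linarith
        have g6 : M6 ≤ Sg := by linarith
        have g7 : M7 ≤ Sg := by linarith
        gcongr
    _ = _ := by ring


/-! ### Part N: iteration and conclusion -/

lemma iter {w : ℕ → ℝ} {c l b B : ℝ} (c0 : 0 ≤ c) (l0 : 0 ≤ l) (b0 : 0 ≤ b) (b1 : b < 1)
    (hw : ∀ i, w i ≤ c + i * l + b * w (i + 1)) (hB : ∀ i, w i ≤ B) :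
    w 0 ≤ (c + b * (l / (1 - b))) / (1 - b) := by
  have d0 : 0 < 1 - b := by linarith
  set S := l / (1 - b) with hS
  set A := (c + b * S) / (1 - b) with hA
  have S0 : 0 ≤ S := by positivity
  have A0 : 0 ≤ A := by positivity
  have eS : S * (1 - b) = l := div_mul_cancel₀ _ d0.ne'
  have eA : A * (1 - b) = c + b * S := div_mul_cancel₀ _ d0.ne'
  have hz : ∀ i : ℕ, w i - (A + S * i) ≤ b * (w (i + 1) - (A + S * ((i + 1 : ℕ) : ℝ))) := by
    intro i
    have h1 := hw i
    have h2 : (i : ℝ) * l = S * i - b * (S * i) := by rw [← eS]; ring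
    push_cast
    linarith
  have hn : ∀ n : ℕ, w 0 - A ≤ b ^ n * (w n - (A + S * n)) := by
    intro n
    induction n with
    | zero => simp
    | succ k ih =>
      refine ih.trans ?_
      rw [pow_succ, mul_assoc]
      exact mul_le_mul_of_nonneg_left (hz k) (by positivity)
  have hn2 : ∀ n : ℕ, w 0 - A ≤ b ^ n * |B| := by
    intro n
    refine (hn n).trans (mul_le_mul_of_nonneg_left ?_ (by positivity))
    have h1 := hB n
    have h2 := le_abs_self B
    have h3 : 0 ≤ S * n := by positivity
    linarith
  have ht : Tendsto (fun n : ℕ => b ^ n * |B|) atTop (nhds (0 * |B|)) :=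
    (tendsto_pow_atTop_nhds_zero_of_lt_one b0 b1).mul_const _
  have := ge_of_tendsto' ht hn2
  linarith

section
variable {U V : Fin 3 → R3 → ℝ} {P T : R3 → ℝ}

lemma ball_mono_int {g : R3 → ℝ} (cg : Continuous g) (g0 : ∀ x, 0 ≤ g x) {S : Set R3} {τ : ℝ} (hS : S ⊆ ball 0 τ) :
    ∫ x in S, g x ≤ ∫ x in ball (0 : R3) τ, g x :=
  setIntegral_mono_set (intS isBounded_ball cg) (Eventually.of_forall g0) (HasSubset.Subset.eventuallyLE hS)

lemma Wf_nonneg (ρ : ℝ) : 0 ≤ Wf U V T ρ :=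
  add_nonneg (iD_nonneg _) (Real.rpow_nonneg (i3_nonneg _) _)

lemma Wf_mono (h : Sys U V P T) : Monotone (Wf U V T) := by
  intro ρ τ hρ
  have ce : Continuous (e2 U V T) := ContDiff.continuous h.sE
  refine add_le_add (ball_mono_int h.cD (D2_nonneg U V T) (ball_subset_ball hρ)) ?_
  exact Real.rpow_le_rpow (i3_nonneg _) (ball_mono_int (ce.pow 3) (fun x => pow_nonneg (e2_nonneg _ _ _ x) 3)
    (ball_subset_ball hρ)) (by norm_num)

lemma MM_le_Wf (h : Sys U V P T) (ρ τ : ℝ) : MM U V T ρ τ ≤ Wf U V T τ := by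
  have ce : Continuous (e2 U V T) := ContDiff.continuous h.sE
  refine add_le_add (ball_mono_int h.cD (D2_nonneg U V T) Set.diff_subset) ?_
  exact Real.rpow_le_rpow (i3_nonneg _) (ball_mono_int (ce.pow 3) (fun x => pow_nonneg (e2_nonneg _ _ _ x) 3)
    Set.diff_subset) (by norm_num)

lemma shell_tendsto {g : R3 → ℝ} (cg : Continuous g) (g0 : ∀ x, 0 ≤ g x) {A : ℝ}
    (hA : ∀ ρ, ∫ x in ball (0 : R3) ρ, g x ≤ A) :
    Tendsto (fun R : ℝ => ∫ x in Shl R (2 * R), g x) atTop (nhds 0) := by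
  set F : ℝ → ℝ := fun ρ => ∫ x in ball (0 : R3) ρ, g x with hF
  have mF : Monotone F := fun ρ τ hρ => ball_mono_int cg g0 (ball_subset_ball hρ)
  have bF : BddAbove (Set.range F) := ⟨A, by rintro _ ⟨ρ, rfl⟩; exact hA ρ⟩
  have t1 := tendsto_atTop_ciSup mF bF
  have t2 : Tendsto (fun R : ℝ => F (2 * R)) atTop (nhds (⨆ i, F i)) :=
    t1.comp (tendsto_id.const_mul_atTop (by norm_num))
  have t3 := t2.sub t1
  rw [sub_self] at t3
  refine t3.congr' ?_
  filter_upwards [eventually_ge_atTop (0 : ℝ)] with R hR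
  have := setIntegral_union (μ := volume) (f := g) (s := Shl R (2 * R)) (t := ball (0 : R3) R) Set.disjoint_sdiff_left measurableSet_ball
    (intS (Shl_bdd _ _) cg) (intS isBounded_ball cg)
  rw [Shl, Set.diff_union_of_subset (ball_subset_ball (by linarith))] at this
  simp only [hF, Shl]
  linarith

lemma concl (h : Sys U V P T) {p q r α β γ : ℝ} (hp1 : 3 / 2 < p) (hp2 : p < 3) (hq1 : 1 ≤ q) (hq2 : q < 2)
    (hr1 : 1 ≤ r) (hr2 : r < 2) (hα1 : 0 ≤ α) (hα2 : α ≤ 2 / p - 1 / 3)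
    (hβ2 : β ≤ 3 / q - 1 / 2) (hγ2 : γ ≤ 3 / r - 1 / 2)
    (hc1 : α + ((4 * p - 6) * q / ((6 - q) * p)) * β ≤ 1)
    (hc2 : α + ((4 * p - 6) * r / ((6 - r) * p)) * γ ≤ 1)
    (hc3 : (2 * q / (6 - q)) * β + (2 * r / (6 - r)) * γ ≤ 1) {K : ℝ} (K1 : 1 ≤ K)
    (hf : ∃ᶠ R in (atTop : Filter ℝ), NN (na U) p R (2 * R) ≤ K * R ^ α ∧
      NN (na V) q R (2 * R) ≤ K * R ^ β ∧ NN (fun x => |T x|) r R (2 * R) ≤ K * R ^ γ) :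
    ∀ x, e2 U V T x = 0 := by
  obtain ⟨C, C0, m, hm, hdec⟩ := decay hp1 hp2 hq1 hq2 hr1 hr2 hα1 hα2 hβ2 hγ2 hc1 hc2 hc3 K1
  have ce : Continuous (e2 U V T) := ContDiff.continuous h.sE
  have ce3 := ce.pow 3
  have e30 : ∀ x, 0 ≤ e2 U V T x ^ 3 := fun x => pow_nonneg (e2_nonneg _ _ _ x) 3
  have mW := Wf_mono h
  replace hf := hf.and_eventually (eventually_ge_atTop (1 : ℝ))
  obtain ⟨i0, hi0⟩ := Finite.exists_max m
  set b := m i0 with hb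
  have b0 : 0 < b := (hm i0).1
  have b1 : b < 1 := (hm i0).2
  set C' := max 1 (7 * C * 64) with hC'
  have C'1 : 1 ≤ C' := le_max_left _ _
  have lC : 0 ≤ Real.log C' := Real.log_nonneg C'1
  have l64 : 0 ≤ Real.log 64 := Real.log_nonneg (by norm_num)
  set A := Real.exp ((Real.log C' + b * (Real.log 64 / (1 - b))) / (1 - b)) with hA
  -- uniform bound
  have hbd : ∀ R : ℝ, (NN (na U) p R (2 * R) ≤ K * R ^ α ∧
      NN (na V) q R (2 * R) ≤ K * R ^ β ∧ NN (fun x => |T x|) r R (2 * R) ≤ K * R ^ γ) ∧ 1 ≤ R → Wf U V T R ≤ A := by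
    rintro R ⟨⟨n1, n2, n3⟩, R1⟩
    have R0 : 0 < R := by linarith
    set ρ : ℕ → ℝ := fun i => R * (2 - (1 / 2) ^ i) with hρ
    set W : ℕ → ℝ := fun i => max 1 (Wf U V T (ρ i)) with hW
    have W1 : ∀ i, 1 ≤ W i := fun i => le_max_left _ _
    have hstep : ∀ i, W i ≤ C' * 64 ^ i * W (i + 1) ^ b := by
      intro i
      have hp0 : (0 : ℝ) < (1 / 2) ^ i := by positivity
      have hpl : ((1 : ℝ) / 2) ^ i ≤ 1 := pow_le_one₀ (by norm_num) (by norm_num)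
      have hd : ρ (i + 1) - ρ i = R * ((1 / 2) ^ i / 2) := by simp only [hρ, pow_succ]; ring
      have g1 : R ≤ ρ i := by simp only [hρ]; nlinarith
      have g2 : ρ i < ρ (i + 1) := by
        have : 0 < R * ((1 / 2) ^ i / 2) := by positivity
        linarith
      have g3 : ρ (i + 1) ≤ 2 * R := by
        have : (0 : ℝ) < (1 / 2) ^ (i + 1) := by positivity
        simp only [hρ]; nlinarith
      have h1 := hdec h R1 g1 g2 g3 n1 n2 n3
      have hr : (R / (ρ (i + 1) - ρ i)) ^ 6 = 64 * 64 ^ i := by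
        rw [hd, div_mul_eq_div_div, div_self R0.ne', one_div_div, div_pow, ← pow_mul, mul_comm i 6, pow_mul, div_eq_mul_inv,
          ← inv_pow]
        norm_num
      rw [hr] at h1
      have wb : 1 ≤ W (i + 1) ^ b := Real.one_le_rpow (W1 _) b0.le
      have hs : ∑ j, MM U V T (ρ i) (ρ (i + 1)) ^ m j ≤ 7 * W (i + 1) ^ b := by
        calc _ ≤ ∑ j : Fin 7, W (i + 1) ^ b := by
              refine Finset.sum_le_sum fun j _ => ?_
              calc _ ≤ W (i + 1) ^ m j := Real.rpow_le_rpow (MM_nonneg _ _)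
                    ((MM_le_Wf h _ _).trans (le_max_right _ _)) (hm j).1.le
                _ ≤ _ := Real.rpow_le_rpow_of_exponent_le (W1 _) (hi0 j)
          _ = _ := by simp
      have h64 : (1 : ℝ) ≤ 64 ^ i := one_le_pow₀ (by norm_num)
      refine max_le ?_ ?_
      · have := one_le_mul_of_one_le_of_one_le (one_le_mul_of_one_le_of_one_le C'1 h64) wb
        exact this
      · calc _ ≤ C * (64 * 64 ^ i) * (7 * W (i + 1) ^ b) := h1.trans (mul_le_mul_of_nonneg_left hs (by positivity))
          _ = (7 * C * 64) * (64 ^ i * W (i + 1) ^ b) := by ring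
          _ ≤ C' * (64 ^ i * W (i + 1) ^ b) := mul_le_mul_of_nonneg_right (le_max_right _ _) (by positivity)
          _ = _ := by ring
    have hlog : ∀ i, Real.log (W i) ≤ Real.log C' + i * Real.log 64 + b * Real.log (W (i + 1)) := by
      intro i
      have p1 : 0 < W i := lt_of_lt_of_le one_pos (W1 i)
      have p2 : 0 < W (i + 1) := lt_of_lt_of_le one_pos (W1 _)
      have p3 : 0 < C' := by linarith
      have p4 : 0 < W (i + 1) ^ b := Real.rpow_pos_of_pos p2 _
      have := Real.log_le_log p1 (hstep i)
      rw [Real.log_mul (by positivity) p4.ne', Real.log_mul p3.ne' (by positivity), Real.log_pow, Real.log_rpow p2] at this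
      exact this
    have hB : ∀ i, Real.log (W i) ≤ Real.log (max 1 (Wf U V T (2 * R))) := by
      intro i
      refine Real.log_le_log (lt_of_lt_of_le one_pos (W1 i)) (max_le_max le_rfl (mW ?_))
      have : (0 : ℝ) < (1 / 2) ^ i := by positivity
      simp only [hρ]; nlinarith
    have h0 := iter (w := fun i => Real.log (W i)) lC l64 b0.le b1 hlog hB
    have e0 : ρ 0 = R := by simp only [hρ]; norm_num
    have h1 : W 0 ≤ A := (Real.log_le_iff_le_exp (lt_of_lt_of_le one_pos (W1 0))).1 h0
    rw [← e0]
    exact (le_max_right _ _).trans h1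
  have hbd' : ∀ ρ, Wf U V T ρ ≤ A := by
    intro ρ
    obtain ⟨R, hR, hR2⟩ := (hf.and_eventually (eventually_ge_atTop ρ)).exists
    exact (mW hR2).trans (hbd R hR)
  have A0 : 0 ≤ A := (Real.exp_pos _).le
  have t1 := shell_tendsto h.cD (D2_nonneg U V T) (A := A) fun ρ =>
    (le_add_of_nonneg_right (Real.rpow_nonneg (i3_nonneg _) _)).trans (hbd' ρ)
  have t2 := shell_tendsto ce3 e30 (A := A ^ 3) fun ρ => by
    have h1 : (∫ x in ball (0 : R3) ρ, e2 U V T x ^ 3) ^ (1 / 3 : ℝ) ≤ A :=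
      (le_add_of_nonneg_left (iD_nonneg _)).trans (hbd' ρ)
    have h2 := pow_le_pow_left₀ (Real.rpow_nonneg (i3_nonneg _) _) h1 3
    rw [← Real.rpow_natCast, ← Real.rpow_mul (i3_nonneg _)] at h2
    norm_num at h2
    exact h2
  have tM : Tendsto (fun R : ℝ => MM U V T R (2 * R)) atTop (nhds 0) := by
    have := t1.add (t2.rpow_const (p := 1 / 3) (Or.inr (by norm_num)))
    rw [Real.zero_rpow (by norm_num), add_zero] at this
    exact this
  have tS : Tendsto (fun R : ℝ => C * ∑ i, MM U V T R (2 * R) ^ m i) atTop (nhds 0) := by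
    have : Tendsto (fun R : ℝ => C * ∑ i, MM U V T R (2 * R) ^ m i) atTop (nhds (C * ∑ i : Fin 7, (0 : ℝ))) := by
      refine (tendsto_finset_sum _ fun i _ => ?_).const_mul C
      have := tM.rpow_const (p := m i) (Or.inr (hm i).1.le)
      rwa [Real.zero_rpow (hm i).1.ne'] at this
    simpa using this
  have hW0 : ∀ ρ, Wf U V T ρ ≤ 0 := by
    intro ρ
    refine le_of_forall_pos_le_add fun ε ε0 => ?_
    obtain ⟨R, ⟨⟨⟨n1, n2, n3⟩, R1⟩, hR2⟩, hR3⟩ := ((hf.and_eventually (eventually_ge_atTop ρ)).and_eventually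
      (tS.eventually_lt_const ε0)).exists
    have h1 := hdec h R1 le_rfl (by linarith) le_rfl n1 n2 n3
    rw [show 2 * R - R = R by ring, div_self (by linarith), one_pow, mul_one] at h1
    have := mW hR2
    linarith
  intro x
  have hz : (∫ y in ball (0 : R3) (‖x‖ + 1), e2 U V T y ^ 3) = 0 := by
    have h1 : (∫ y in ball (0 : R3) (‖x‖ + 1), e2 U V T y ^ 3) ^ (1 / 3 : ℝ) ≤ 0 :=
      (le_add_of_nonneg_left (iD_nonneg _)).trans (hW0 (‖x‖ + 1))
    have h2 := le_antisymm h1 (Real.rpow_nonneg (i3_nonneg _) _)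
    exact (Real.rpow_eq_zero (i3_nonneg _) (by norm_num)).1 h2
  rw [setIntegral_eq_zero_iff_of_nonneg_ae (Eventually.of_forall e30) (intS isBounded_ball ce3)] at hz
  have := Measure.eqOn_open_of_ae_eq hz isOpen_ball ce3.continuousOn continuousOn_const (x := x) (by simp)
  exact pow_eq_zero_iff (by norm_num) |>.1 this

end


lemma na_eq (u : R3 → R3) (x : R3) : na (fun i y => u y i) x = ‖u x‖ := by
  rw [EuclideanSpace.norm_eq, na]
  congr 1
  refine Finset.sum_congr rfl fun i _ => ?_
  rw [Real.norm_eq_abs, sq_abs, pow_two]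

theorem liouville_tcm_A10 (u v : R3 → R3) (pr θ : R3 → ℝ)
    (hu : ContDiff ℝ (⊤ : ℕ∞) u) (hv : ContDiff ℝ (⊤ : ℕ∞) v)
    (hpr : ContDiff ℝ (⊤ : ℕ∞) pr) (hθ : ContDiff ℝ (⊤ : ℕ∞) θ)
    (hsol : TCM u v pr θ)
    (p q r α β γ : ℝ)
    (hp1 : 3 / 2 < p) (hp2 : p < 3)
    (hq1 : 1 ≤ q) (hq2 : q < 2)
    (hr1 : 1 ≤ r) (hr2 : r < 2)
    (hα1 : 0 ≤ α) (hα2 : α ≤ 2 / p - 1 / 3)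
    (hβ1 : 0 ≤ β) (hβ2 : β ≤ 3 / q - 1 / 2)
    (hγ1 : 0 ≤ γ) (hγ2 : γ ≤ 3 / r - 1 / 2)
    (hc1 : α + ((4 * p - 6) * q / ((6 - q) * p)) * β ≤ 1)
    (hc2 : α + ((4 * p - 6) * r / ((6 - r) * p)) * γ ≤ 1)
    (hc3 : (2 * q / (6 - q)) * β + (2 * r / (6 - r)) * γ ≤ 1)
    (hliminf : ∃ C : ℝ, ∃ᶠ R in (atTop : Filter ℝ),
      XnV u α p R + XnV v β q R + XnS θ γ r R ≤ C) :
    (∀ x, u x = 0) ∧ (∀ x, v x = 0) ∧ (∀ x, θ x = 0) := by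
  obtain ⟨C, hC⟩ := hliminf
  obtain ⟨h1, h2, h3, h4⟩ := hsol
  have h : Sys (fun i y => u y i) (fun i y => v y i) pr θ :=
    { sU := fun i => contDiff_euclidean.1 hu i
      sV := fun i => contDiff_euclidean.1 hv i
      sP := hpr
      sT := hθ
      eU := h1
      eV := h2
      eT := h3
      dU := h4 }
  have key : ∀ {X a R : ℝ}, 0 < R → R ^ (-a) * X ≤ C → X ≤ max 1 C * R ^ a := by
    intro X a R R0 hX
    have hp : 0 < R ^ a := Real.rpow_pos_of_pos R0 a
    rw [Real.rpow_neg R0.le, inv_mul_le_iff₀ hp, mul_comm] at hX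
    exact hX.trans (mul_le_mul_of_nonneg_right (le_max_right _ _) hp.le)
  have nn : ∀ (g : R3 → ℝ) (s : ℝ) (R : ℝ), 0 ≤ lpS g s (annulus R) := fun g s R =>
    Real.rpow_nonneg (integral_nonneg fun x => Real.rpow_nonneg (abs_nonneg _) _) _
  have eqV : ∀ (f : R3 → R3) (s R : ℝ), NN (na (fun i y => f y i)) s R (2 * R) = lpS (fun x => ‖f x‖) s (annulus R) := by
    intro f s R
    unfold NN lpS Shl annulus
    simp only [na_eq, abs_norm]
  have hf : ∃ᶠ R in (atTop : Filter ℝ), NN (na (fun i y => u y i)) p R (2 * R) ≤ max 1 C * R ^ α ∧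
      NN (na (fun i y => v y i)) q R (2 * R) ≤ max 1 C * R ^ β ∧
      NN (fun x => |θ x|) r R (2 * R) ≤ max 1 C * R ^ γ := by
    refine (hC.and_eventually (eventually_gt_atTop (0 : ℝ))).mono ?_
    rintro R ⟨hR, R0⟩
    have g : ∀ a : ℝ, 0 ≤ R ^ a := fun a => Real.rpow_nonneg R0.le a
    have a1 := mul_nonneg (g (-α)) (nn (fun x => ‖u x‖) p R)
    have a2 := mul_nonneg (g (-β)) (nn (fun x => ‖v x‖) q R)
    have a3 := mul_nonneg (g (-γ)) (nn θ r R)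
    unfold XnV XnS at hR
    rw [eqV, eqV]
    refine ⟨key R0 (by linarith), key R0 (by linarith), ?_⟩
    exact key (X := lpS θ r (annulus R)) R0 (by linarith)
  have he := concl h hp1 hp2 hq1 hq2 hr1 hr2 hα1 hα2 hβ2 hγ2 hc1 hc2 hc3 (le_max_left 1 C) hf
  have he2 : ∀ x, ‖u x‖ ^ 2 + ‖v x‖ ^ 2 + |θ x| ^ 2 = 0 := fun x => by
    have := he x
    rwa [e2_eq, na_eq, na_eq] at this
  refine ⟨fun x => ?_, fun x => ?_, fun x => ?_⟩
  · have : ‖u x‖ ^ 2 = 0 := by nlinarith [he2 x, sq_nonneg ‖u x‖, sq_nonneg ‖v x‖, sq_nonneg |θ x|]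
    exact norm_eq_zero.1 (pow_eq_zero_iff (by norm_num) |>.1 this)
  · have : ‖v x‖ ^ 2 = 0 := by nlinarith [he2 x, sq_nonneg ‖u x‖, sq_nonneg ‖v x‖, sq_nonneg |θ x|]
    exact norm_eq_zero.1 (pow_eq_zero_iff (by norm_num) |>.1 this)
  · have : |θ x| ^ 2 = 0 := by nlinarith [he2 x, sq_nonneg ‖u x‖, sq_nonneg ‖v x‖, sq_nonneg |θ x|]
    exact abs_eq_zero.1 (pow_eq_zero_iff (by norm_num) |>.1 this)
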